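/- For every positive integer k, the level set L_k = {n ∈ ℕ : ω*(n) = k} has a natural density δ_k, i.e., #(L_k ∩ [1,x])/x converges as x → ∞, and this density δ_k is strictly positive. -/

import Mathlib

open Filter Real

/-- `ω*(n)`: the number of divisors `d` of `n` such that `d + 1` is prime. -/
def omegaStar (n : ℕ) : ℕ := (n.divisors.filter (fun d => Nat.Prime (d + 1))).card

namespace ES

/-- primes up to n -/
def pr (n : ℕ) : Finset ℕ := (Finset.Icc 1 n).filter Nat.Prime

lemma mem_pr {n q : ℕ} : q ∈ pr n ↔ q.Prime ∧ q ≤ n := by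
  simp only [pr, Finset.mem_filter, Finset.mem_Icc]
  constructor
  · rintro ⟨⟨_, h⟩, h2⟩; exact ⟨h2, h⟩
  · rintro ⟨h, h2⟩; exact ⟨⟨h.one_le, h2⟩, h⟩

lemma theta_pr (n : ℕ) : ∑ q ∈ pr n, log q ≤ log 4 * n := by
  have h := Chebyshev.theta_le_log4_mul_x (x := (n:ℝ)) (by positivity)
  refine le_trans (le_of_eq ?_) h
  rw [Chebyshev.theta_eq_sum_Icc]
  simp only [Nat.floor_natCast]
  apply Finset.sum_subset_zero_on_sdiff
  · intro q hq
    rw [mem_pr] at hq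
    simp [hq]
  · intro q hq
    simp only [Finset.mem_sdiff, Finset.mem_filter, Finset.mem_Icc, mem_pr] at hq
    tauto
  · intros; rfl

lemma mertens1 (n : ℕ) (hn : 1 ≤ n) : ∑ q ∈ pr n, log q / q ≤ log n + log 4 := by
  have hn0 : (0:ℝ) < n := by exact_mod_cast hn
  -- log n! ≥ ∑ (n/q) log q
  have h1 : ∑ q ∈ pr n, ((n / q : ℕ):ℝ) * log q ≤ log (n.factorial) := by
    have hd : ∏ q ∈ pr n, q ^ (n / q) ∣ n.factorial := by
      apply Finset.prod_dvd_of_isRelPrime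
      · intro a ha b hb hab
        simp only [Finset.mem_coe, mem_pr] at ha hb
        exact Nat.coprime_iff_isRelPrime.1 (Nat.Coprime.pow _ _ ((Nat.coprime_primes ha.1 hb.1).2 hab))
      · intro q hq
        rw [mem_pr] at hq
        have h2 : (q * (n/q)).factorial ∣ n.factorial := Nat.factorial_dvd_factorial (Nat.mul_div_le n q)
        refine dvd_trans ?_ h2
        generalize n / q = m
        induction m with
        | zero => simp
        | succ m ih =>
          rw [pow_succ]
          have : (q * m).factorial * (q * (m+1)) ∣ (q * (m+1)).factorial := by
            have h3 : q * (m+1) = (q * m + (q - 1)) + 1 := by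
              have := hq.1.one_le
              rw [mul_add]; omega
            conv_rhs => rw [h3, Nat.factorial_succ]
            rw [mul_comm, ← h3]
            exact Nat.mul_dvd_mul_left _ (Nat.factorial_dvd_factorial (by omega))
          exact dvd_trans (Nat.mul_dvd_mul ih (dvd_mul_right q (m+1))) this
    have hle := Nat.le_of_dvd (Nat.factorial_pos n) hd
    have hpos : 0 < ∏ q ∈ pr n, q ^ (n / q) := Finset.prod_pos (fun q hq => pow_pos (mem_pr.1 hq).1.pos _)
    have h3 : log ((∏ q ∈ pr n, q ^ (n / q) : ℕ) : ℝ) ≤ log (n.factorial : ℝ) :=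
      Real.log_le_log (by exact_mod_cast hpos) (by exact_mod_cast hle)
    rw [Nat.cast_prod, Real.log_prod] at h3
    · simpa [Real.log_pow] using h3
    · intro q hq
      have := (mem_pr.1 hq).1.pos
      positivity
  have h2 : log (n.factorial : ℝ) ≤ n * log n := by
    have : (n.factorial : ℝ) ≤ (n:ℝ)^n := by exact_mod_cast Nat.factorial_le_pow n
    have := Real.log_le_log (by exact_mod_cast Nat.factorial_pos n) this
    rwa [Real.log_pow] at this
  have h3 : ∑ q ∈ pr n, ((n:ℝ) / q - 1) * log q ≤ ∑ q ∈ pr n, ((n / q : ℕ):ℝ) * log q := by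
    apply Finset.sum_le_sum
    intro q hq
    have hq' := (mem_pr.1 hq).1
    have : (0:ℝ) ≤ log q := Real.log_natCast_nonneg q
    apply mul_le_mul_of_nonneg_right _ this
    have h4 := Nat.div_add_mod n q
    have h5 := Nat.mod_lt n hq'.pos
    have hq0 : (0:ℝ) < q := by exact_mod_cast hq'.pos
    rw [sub_le_iff_le_add, div_le_iff₀ hq0]
    have : n ≤ (n/q + 1) * q := by nlinarith
    exact_mod_cast this
  have h4 := theta_pr n
  have h5 : ∑ q ∈ pr n, ((n:ℝ) / q - 1) * log q = n * ∑ q ∈ pr n, log q / q - ∑ q ∈ pr n, log q := by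
    rw [Finset.mul_sum, ← Finset.sum_sub_distrib]
    apply Finset.sum_congr rfl
    intros; ring
  have h6 : n * ∑ q ∈ pr n, log q / q ≤ n * (log n + log 4) := by linarith
  exact le_of_mul_le_mul_left h6 hn0


lemma pr_succ (n : ℕ) : pr (n+1) = if (n+1).Prime then insert (n+1) (pr n) else pr n := by
  split_ifs with h
  · ext q; simp only [Finset.mem_insert, mem_pr]
    constructor
    · rintro ⟨h1, h2⟩
      rcases Nat.lt_or_ge n q with h3 | h3
      · left; omega
      · right; exact ⟨h1, h3⟩
    · rintro (rfl | ⟨h1, h2⟩)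
      · exact ⟨h, le_rfl⟩
      · exact ⟨h1, by omega⟩
  · ext q; simp only [mem_pr]
    constructor
    · rintro ⟨h1, h2⟩
      refine ⟨h1, ?_⟩
      rcases Nat.lt_or_ge n q with h3 | h3
      · exfalso; apply h; convert h1; omega
      · exact h3
    · rintro ⟨h1, h2⟩; exact ⟨h1, by omega⟩

lemma sum_pr_succ (f : ℕ → ℝ) (n : ℕ) :
    ∑ q ∈ pr (n+1), f q = ∑ q ∈ pr n, f q + if (n+1).Prime then f (n+1) else 0 := by
  rw [pr_succ]
  split_ifs with h
  · rw [Finset.sum_insert]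
    · ring
    · rw [mem_pr]; omega
  · simp

lemma pr_two : pr 2 = {2} := by decide

lemma mertens_upper_aux (n : ℕ) :
    ∑ q ∈ pr (n+2), (1:ℝ)/q - (∑ q ∈ pr (n+2), log q / q) / log ((n:ℝ)+2) ≤
      log (log ((n:ℝ)+2)) - log (log 2) + log 4 * (1 / log 2 - 1 / log ((n:ℝ)+2)) := by
  induction n with
  | zero =>
    have : log 2 > 0 := Real.log_pos (by norm_num)
    simp only [zero_add, pr_two, Finset.sum_singleton, Nat.cast_zero, Nat.cast_ofNat, sub_self, mul_zero, add_zero]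
    field_simp
    norm_num
  | succ n ih =>
    have e : n + 1 + 2 = (n + 2) + 1 := by ring
    rw [e, sum_pr_succ (fun q => (1:ℝ)/q) (n+2), sum_pr_succ (fun q => log q / q) (n+2)]
    push_cast
    have e2 : (n:ℝ) + 1 + 2 = n + 2 + 1 := by ring
    rw [e2]
    set A := ∑ q ∈ pr (n+2), log q / q with hA
    set B := ∑ q ∈ pr (n+2), (1:ℝ)/q
    set a := log ((n:ℝ)+2) with ha
    set b := log ((n:ℝ)+2+1) with hb
    have hn : (0:ℝ) ≤ n := by positivity
    have hapos : 0 < a := Real.log_pos (by linarith)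
    have hab : a ≤ b := Real.log_le_log (by linarith) (by linarith)
    have hbpos : 0 < b := by linarith
    have h1 : A ≤ a + log 4 := by
      have := mertens1 (n+2) (by omega)
      push_cast at this
      exact this
    have h2 : (A + if (n+2+1).Prime then b / ((n:ℝ)+2+1) else 0) / b
        = A / b + if (n+2+1).Prime then 1 / ((n:ℝ)+2+1) else 0 := by
      split_ifs
      · field_simp
      · simp
    rw [h2]
    have h3 : 1 - a / b ≤ log b - log a := by
      rw [← Real.log_div hbpos.ne' hapos.ne']
      have := Real.one_sub_inv_le_log_of_pos (x := b / a) (by positivity)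
      simpa using this
    have h4 : 0 ≤ 1 / a - 1 / b := by
      rw [sub_nonneg]; exact one_div_le_one_div_of_le hapos hab
    have h5 : A * (1/a - 1/b) ≤ (a + log 4) * (1/a - 1/b) := mul_le_mul_of_nonneg_right h1 h4
    have h6 : a * (1/a - 1/b) = 1 - a / b := by field_simp
    have h7 : A / a - A / b = A * (1/a - 1/b) := by ring
    linarith

lemma mertens_upper : ∃ C : ℝ, ∀ n : ℕ, 2 ≤ n → ∑ q ∈ pr n, (1:ℝ)/q ≤ log (log n) + C := by
  refine ⟨1 + log 4 / log 2 - log (log 2) + log 4 / log 2, fun n hn => ?_⟩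
  obtain ⟨m, rfl⟩ : ∃ m, n = m + 2 := ⟨n - 2, by omega⟩
  have h1 := mertens_upper_aux m
  have h2 := mertens1 (m+2) (by omega)
  push_cast at h2 ⊢
  have hl2 : 0 < log 2 := Real.log_pos (by norm_num)
  have hl4 : 0 < log 4 := Real.log_pos (by norm_num)
  have hmn : (0:ℝ) ≤ m := by positivity
  have hmm : log 2 ≤ log ((m:ℝ)+2) := Real.log_le_log (by norm_num) (by linarith)
  have hm0 : 0 < log ((m:ℝ)+2) := by linarith
  have h3 : (∑ q ∈ pr (m+2), log q / q) / log ((m:ℝ)+2) ≤ 1 + log 4 / log 2 := by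
    rw [div_le_iff₀ hm0, add_mul, one_mul]
    have : log 4 ≤ log 4 / log 2 * log ((m:ℝ)+2) := by
      rw [div_mul_eq_mul_div, le_div_iff₀ hl2]
      nlinarith
    linarith
  have h4 : log 4 * (1 / log 2 - 1 / log ((m:ℝ)+2)) ≤ log 4 / log 2 := by
    have : 0 ≤ log 4 * (1 / log ((m:ℝ)+2)) := by positivity
    have e : log 4 * (1 / log 2) = log 4 / log 2 := by ring
    nlinarith
  linarith

lemma mertens_lower (n : ℕ) (hn : 2 ≤ n) : log (log n) - 1 ≤ ∑ q ∈ pr n, (1:ℝ)/q := by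
  -- euler product
  let f : ℕ →* ℝ := { toFun := fun m => (m:ℝ)⁻¹, map_one' := by simp, map_mul' := by intro a b; push_cast; rw [mul_inv] }
  have hf : ∀ {p : ℕ}, p.Prime → ‖f p‖ < 1 := by
    intro p hp
    have : (1:ℝ) < p := by exact_mod_cast hp.one_lt
    show ‖(p:ℝ)⁻¹‖ < 1
    rw [norm_inv, Real.norm_of_nonneg (by positivity)]
    exact inv_lt_one_of_one_lt₀ this
  obtain ⟨hs, hsum⟩ := EulerProduct.summable_and_hasSum_smoothNumbers_prod_primesBelow_geometric hf (n+1)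
  have hpb : (n+1).primesBelow = pr n := by
    ext q; simp [Nat.mem_primesBelow, mem_pr, and_comm]; 
    try omega
  have h1 : ((harmonic n : ℚ) : ℝ) ≤ ∏ p ∈ (n+1).primesBelow, (1 - f p)⁻¹ := by
    have hinj : Function.Injective (fun i : Fin n => (⟨i.1+1, Nat.mem_smoothNumbers_of_lt (Nat.succ_pos _) (by omega)⟩ : (n+1).smoothNumbers)) := by
      intro a b hab
      simp only [Subtype.mk.injEq, add_left_inj] at hab
      exact Fin.ext hab
    have := hsum.summable.sum_le_tsum (Finset.univ.image (fun i : Fin n => (⟨i.1+1, Nat.mem_smoothNumbers_of_lt (Nat.succ_pos _) (by omega)⟩ : (n+1).smoothNumbers)))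
      (fun i _ => by show 0 ≤ ((i:ℕ):ℝ)⁻¹; positivity)
    rw [hsum.tsum_eq, Finset.sum_image (fun a _ b _ h => hinj h)] at this
    refine le_trans (le_of_eq ?_) this
    rw [harmonic]
    push_cast
    rw [← Fin.sum_univ_eq_sum_range (fun i => ((i:ℝ)+1)⁻¹)]
    apply Finset.sum_congr rfl
    intro i _
    show _ = (((i.1+1 : ℕ)):ℝ)⁻¹
    push_cast; rfl
  rw [hpb] at h1
  have h2 : ∏ p ∈ pr n, (1 - f p)⁻¹ ≤ exp (∑ q ∈ pr n, (1:ℝ)/q + 1) := by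
    calc ∏ p ∈ pr n, (1 - f p)⁻¹ ≤ ∏ p ∈ pr n, exp (1 / ((p:ℝ) - 1)) := by
          apply Finset.prod_le_prod
          · intro p hp
            have : (1:ℝ) < p := by exact_mod_cast (mem_pr.1 hp).1.one_lt
            show 0 ≤ (1 - (p:ℝ)⁻¹)⁻¹
            have := inv_lt_one_of_one_lt₀ this
            exact inv_nonneg.2 (by linarith)
          · intro p hp
            have hp1 : (1:ℝ) < p := by exact_mod_cast (mem_pr.1 hp).1.one_lt
            show (1 - (p:ℝ)⁻¹)⁻¹ ≤ _
            have := Real.add_one_le_exp (1 / ((p:ℝ) - 1))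
            refine le_trans (le_of_eq ?_) this
            have h3 : (p:ℝ) - 1 ≠ 0 := by linarith
            have h4 : (p:ℝ) ≠ 0 := by linarith
            have h5 : 1 - (p:ℝ)⁻¹ = (p - 1) / p := by field_simp
            rw [h5, inv_div]
            field_simp
            ring
      _ = exp (∑ p ∈ pr n, 1 / ((p:ℝ) - 1)) := by rw [Real.exp_sum]
      _ ≤ _ := by
        apply Real.exp_le_exp.2
        have h3 : ∑ p ∈ pr n, 1 / ((p:ℝ) - 1) = ∑ q ∈ pr n, (1:ℝ)/q + ∑ p ∈ pr n, (1 / ((p:ℝ) - 1) - 1 / p) := by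
          rw [← Finset.sum_add_distrib]; apply Finset.sum_congr rfl; intros; ring
        rw [h3]
        have h4 : ∑ p ∈ pr n, (1 / ((p:ℝ) - 1) - 1 / p) ≤ ∑ p ∈ Finset.Ioc 1 n, (1 / ((p:ℝ) - 1) - 1 / p) := by
          apply Finset.sum_le_sum_of_subset_of_nonneg
          · intro q hq; rw [mem_pr] at hq; simp [hq.1.one_lt, hq.2]
          · intro q hq _
            rw [Finset.mem_Ioc] at hq
            have : (1:ℝ) < q := by exact_mod_cast hq.1
            rw [sub_nonneg]
            exact one_div_le_one_div_of_le (by linarith) (by linarith)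
        have h5 : ∀ m : ℕ, 1 ≤ m → ∑ p ∈ Finset.Ioc 1 m, (1 / ((p:ℝ) - 1) - 1 / p) = 1 - 1 / m := by
          intro m hm
          induction m, hm using Nat.le_induction with
          | base => simp
          | succ m hm ih =>
            rw [Finset.sum_Ioc_succ_top (by omega), ih]
            push_cast
            ring
        rw [h5 n (by omega)] at h4
        have : 0 ≤ 1 / (n:ℝ) := by positivity
        linarith
  have h3 := log_add_one_le_harmonic n
  have hn' : (2:ℝ) ≤ n := by exact_mod_cast hn
  have h4 : log n ≤ log ((n+1 : ℕ):ℝ) := Real.log_le_log (by linarith) (by push_cast; linarith)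
  have h5 : log n ≤ exp (∑ q ∈ pr n, (1:ℝ)/q + 1) := by linarith
  have h6 : 0 < log n := Real.log_pos (by linarith)
  have h7 := Real.log_le_log h6 h5
  rw [Real.log_exp] at h7
  linarith

/-- reciprocal sum over primes in a squaring block -/
lemma block_sum (P : Finset ℕ) (w : ℕ) (hw : 2 ≤ w) (hP : ∀ q ∈ P, q.Prime ∧ w < q ∧ q ≤ w^2) :
    ∑ q ∈ P, (1:ℝ)/q ≤ 4 := by
  have hw' : (2:ℝ) ≤ w := by exact_mod_cast hw
  have hlw : 0 < log w := Real.log_pos (by linarith)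
  have h1 : ∑ q ∈ P, (1:ℝ)/q ≤ ∑ q ∈ P, (log q / q) / log w := by
    apply Finset.sum_le_sum
    intro q hq
    obtain ⟨hq1, hq2, hq3⟩ := hP q hq
    have hq0 : (0:ℝ) < q := by exact_mod_cast hq1.pos
    rw [div_div, div_le_div_iff₀ hq0 (by positivity), one_mul, mul_comm]
    apply mul_le_mul_of_nonneg_right _ hq0.le
    exact Real.log_le_log (by linarith) (by exact_mod_cast hq2.le)
  have h2 : ∑ q ∈ P, (log q / q) ≤ ∑ q ∈ pr (w^2), (log q / q) := by
    apply Finset.sum_le_sum_of_subset_of_nonneg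
    · intro q hq; rw [mem_pr]; exact ⟨(hP q hq).1, (hP q hq).2.2⟩
    · intro q _ _; exact div_nonneg (Real.log_natCast_nonneg q) (by positivity)
  have h3 := mertens1 (w^2) (by nlinarith)
  rw [← Finset.sum_div] at h1
  refine h1.trans ?_
  rw [div_le_iff₀ hlw]
  push_cast at h3
  rw [Real.log_pow] at h3
  have h4 : log 4 ≤ 2 * log w := by
    have : (4:ℝ) = 2^2 := by norm_num
    rw [this, Real.log_pow]
    have := Real.log_le_log (by norm_num) hw'
    push_cast; linarith
  push_cast at h3
  linarith

end ES

namespace ES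

noncomputable def es (v : ℕ → ℝ) (P : Finset ℕ) (i : ℕ) : ℝ :=
  ∑ S ∈ P.powersetCard i, ∏ q ∈ S, v q

lemma es_zero (v : ℕ → ℝ) (P : Finset ℕ) : es v P 0 = 1 := by simp [es]

lemma es_insert (v : ℕ → ℝ) (P : Finset ℕ) (q : ℕ) (hq : q ∉ P) (i : ℕ) :
    es v (insert q P) (i+1) = es v P (i+1) + v q * es v P i := by
  unfold es
  rw [Finset.powersetCard_succ_insert hq, Finset.sum_union]
  · congr 1
    rw [Finset.sum_image, Finset.mul_sum]
    · apply Finset.sum_congr rfl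
      intro S hS
      rw [Finset.prod_insert]
      intro h
      exact hq ((Finset.mem_powersetCard.1 hS).1 h)
    · intro a ha b hb hab
      have h1 : q ∉ a := fun h => hq ((Finset.mem_powersetCard.1 ha).1 h)
      have h2 : q ∉ b := fun h => hq ((Finset.mem_powersetCard.1 hb).1 h)
      rw [← Finset.erase_insert h1, ← Finset.erase_insert h2, hab]
  · rw [Finset.disjoint_left]
    intro S hS hS2
    rw [Finset.mem_image] at hS2
    obtain ⟨a, _, rfl⟩ := hS2
    exact hq ((Finset.mem_powersetCard.1 hS).1 (Finset.mem_insert_self _ _))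

lemma es_empty_succ (v : ℕ → ℝ) (i : ℕ) : es v ∅ (i+1) = 0 := by
  unfold es
  rw [Finset.powersetCard_eq_empty.2 (by simp)]; simp

lemma es_nonneg (v : ℕ → ℝ) (P : Finset ℕ) (hv : ∀ q ∈ P, 0 ≤ v q) (i : ℕ) : 0 ≤ es v P i := by
  apply Finset.sum_nonneg
  intro S hS
  apply Finset.prod_nonneg
  intro q hq
  exact hv q ((Finset.mem_powersetCard.1 hS).1 hq)

lemma es_le (v : ℕ → ℝ) (P : Finset ℕ) (hv : ∀ q ∈ P, 0 ≤ v q) (i : ℕ) :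
    es v P i ≤ (∑ q ∈ P, v q)^i / i.factorial := by
  induction P using Finset.induction_on generalizing i with
  | empty =>
    cases i with
    | zero => simp [es_zero]
    | succ i => simp [es_empty_succ]
  | insert q P hq ih =>
    cases i with
    | zero => simp [es_zero]
    | succ i =>
      rw [es_insert v P q hq, Finset.sum_insert hq]
      have hP : ∀ q ∈ P, 0 ≤ v q := fun q hq => hv q (Finset.mem_insert_of_mem hq)
      have hvq : 0 ≤ v q := hv q (Finset.mem_insert_self _ _)
      set s := ∑ q ∈ P, v q
      have hs : 0 ≤ s := Finset.sum_nonneg hP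
      have h1 := ih hP (i+1)
      have h2 := mul_le_mul_of_nonneg_left (ih hP i) hvq
      have h3 : s^(i+1) + (i+1) * v q * s^i ≤ (v q + s)^(i+1) := by
        rcases eq_or_lt_of_le hs with h0 | h0
        · rw [← h0]
          cases i with
          | zero => simp
          | succ i => simp; positivity
        · have := one_add_mul_le_pow (a := v q / s) (by have : 0 ≤ v q / s := by positivity
                                                        linarith) (i+1)
          have h4 : (v q + s) = s * (1 + v q / s) := by field_simp; ring
          rw [h4, mul_pow]
          have h5 := mul_le_mul_of_nonneg_left this (pow_nonneg hs (i+1))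
          refine le_trans (le_of_eq ?_) h5
          push_cast
          field_simp
          ring
      have hf : (0:ℝ) < (i+1).factorial := by exact_mod_cast Nat.factorial_pos _
      have hf' : (0:ℝ) < (i).factorial := by exact_mod_cast Nat.factorial_pos _
      calc es v P (i+1) + v q * es v P i ≤ s^(i+1)/(i+1).factorial + v q * (s^i / i.factorial) := add_le_add h1 h2
        _ = (s^(i+1) + (i+1) * v q * s^i) / (i+1).factorial := by
          rw [Nat.factorial_succ]; push_cast; field_simp
        _ ≤ _ := by gcongr

noncomputable def TT (v : ℕ → ℝ) (P : Finset ℕ) (m : ℕ) : ℝ := ∑ i ∈ Finset.range (m+1), (-1)^i * es v P i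

lemma TT_insert (v : ℕ → ℝ) (P : Finset ℕ) (q : ℕ) (hq : q ∉ P) (m : ℕ) :
    TT v (insert q P) (m+1) = TT v P (m+1) - v q * TT v P m := by
  unfold TT
  rw [Finset.sum_range_succ', Finset.sum_range_succ' _ (m+1), Finset.mul_sum, es_zero, es_zero]
  have : ∀ i, (-1:ℝ)^(i+1) * es v (insert q P) (i+1) = (-1)^(i+1) * es v P (i+1) - v q * ((-1)^i * es v P i) := by
    intro i; rw [es_insert v P q hq]; ring
  simp_rw [this]
  rw [Finset.sum_sub_distrib]; ring

lemma TT_zero (v : ℕ → ℝ) (P : Finset ℕ) : TT v P 0 = 1 := by simp [TT, es_zero]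

lemma TT_empty (v : ℕ → ℝ) (m : ℕ) : TT v ∅ m = 1 := by
  unfold TT
  rw [Finset.sum_range_succ']
  simp [es_empty_succ, es_zero]

lemma prod_one_sub_le_one (v : ℕ → ℝ) (P : Finset ℕ) (hv : ∀ q ∈ P, 0 ≤ v q ∧ v q ≤ 1) :
    ∏ q ∈ P, (1 - v q) ≤ 1 :=
  Finset.prod_le_one (fun q hq => by linarith [(hv q hq).2]) (fun q hq => by linarith [(hv q hq).1])

lemma bonferroni (v : ℕ → ℝ) (P : Finset ℕ) (hv : ∀ q ∈ P, 0 ≤ v q ∧ v q ≤ 1) (m : ℕ) :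
    0 ≤ (-1)^m * (TT v P m - ∏ q ∈ P, (1 - v q)) := by
  induction P using Finset.induction_on generalizing m with
  | empty => simp [TT_empty]
  | insert q P hq ih =>
    have hP : ∀ q ∈ P, 0 ≤ v q ∧ v q ≤ 1 := fun q hq => hv q (Finset.mem_insert_of_mem hq)
    have hvq := hv q (Finset.mem_insert_self _ _)
    cases m with
    | zero =>
      rw [TT_zero]
      have := prod_one_sub_le_one v _ hv
      simp only [pow_zero, one_mul]; linarith
    | succ m =>
      rw [TT_insert v P q hq, Finset.prod_insert hq]
      have h1 := ih hP (m+1)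
      have h2 := mul_nonneg hvq.1 (ih hP m)
      have : (-1:ℝ)^(m+1) * (TT v P (m+1) - v q * TT v P m - (1 - v q) * ∏ q ∈ P, (1 - v q)) =
        (-1)^(m+1) * (TT v P (m+1) - ∏ q ∈ P, (1 - v q)) + v q * ((-1)^m * (TT v P m - ∏ q ∈ P, (1 - v q))) := by ring
      rw [this]; linarith

/-- weights for one block -/
def fam (P : Finset ℕ) (m : ℕ) : Finset (Finset ℕ) := P.powerset.filter (fun S => S.card ≤ m)

lemma sum_fam (v : ℕ → ℝ) (P : Finset ℕ) (m : ℕ) :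
    ∑ S ∈ fam P m, ∏ q ∈ S, (- v q) = TT v P m := by
  unfold TT es
  rw [← Finset.sum_fiberwise_of_maps_to (t := Finset.range (m+1)) (g := Finset.card)]
  · apply Finset.sum_congr rfl
    intro i hi
    rw [Finset.mul_sum]
    apply Finset.sum_congr
    · ext S
      simp only [fam, Finset.mem_filter, Finset.mem_powerset, Finset.mem_powersetCard]
      rw [Finset.mem_range] at hi
      constructor
      · rintro ⟨⟨h, _⟩, h2⟩; exact ⟨h, h2⟩
      · rintro ⟨h, h2⟩; exact ⟨⟨h, by omega⟩, h2⟩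
    · intro S hS
      rw [Finset.mem_powersetCard] at hS
      rw [Finset.prod_neg, hS.2]
  · intro S hS
    simp only [fam, Finset.mem_filter] at hS
    rw [Finset.mem_range]; omega

structure UB (κ : ℝ) (P : Finset ℕ) (F : Finset (Finset ℕ)) (D : ℕ) (K : ℝ) : Prop where
  sub : ∀ S ∈ F, S ⊆ P
  lvl : ∀ S ∈ F, ∏ q ∈ S, q ≤ D
  ub : ∀ v : ℕ → ℝ, (∀ q ∈ P, 0 ≤ v q ∧ v q ≤ 1) → ∏ q ∈ P, (1 - v q) ≤ ∑ S ∈ F, ∏ q ∈ S, (- v q)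
  mn : ∀ v : ℕ → ℝ, (∀ q ∈ P, 0 ≤ v q ∧ v q ≤ 1 ∧ v q ≤ κ / q) →
    ∑ S ∈ F, ∏ q ∈ S, (- v q) ≤ K * exp (- ∑ q ∈ P, v q)

lemma UB.union {κ : ℝ} {P₁ P₂ : Finset ℕ} {F₁ F₂ : Finset (Finset ℕ)} {D₁ D₂ : ℕ} {K₁ K₂ : ℝ}
    (h₁ : UB κ P₁ F₁ D₁ K₁) (h₂ : UB κ P₂ F₂ D₂ K₂) (hd : Disjoint P₁ P₂) :
    ∃ F, UB κ (P₁ ∪ P₂) F (D₁ * D₂) (K₁ * K₂) := by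
  classical
  refine ⟨(F₁ ×ˢ F₂).image (fun x => x.1 ∪ x.2), ?_⟩
  have hsum : ∀ v : ℕ → ℝ, ∑ S ∈ (F₁ ×ˢ F₂).image (fun x => x.1 ∪ x.2), ∏ q ∈ S, (- v q) =
      (∑ S ∈ F₁, ∏ q ∈ S, (- v q)) * ∑ S ∈ F₂, ∏ q ∈ S, (- v q) := by
    intro v
    rw [Finset.sum_image, Finset.sum_mul_sum, Finset.sum_product]
    · apply Finset.sum_congr rfl; intro a ha
      apply Finset.sum_congr rfl; intro b hb
      rw [Finset.prod_union]
      exact Finset.disjoint_of_subset_left (h₁.sub a ha) (Finset.disjoint_of_subset_right (h₂.sub b hb) hd)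
    · rintro ⟨a, b⟩ hab ⟨a', b'⟩ hab' h
      simp only [Finset.coe_product, Set.mem_prod, Finset.mem_coe] at hab hab'
      simp only at h
      have ha := h₁.sub a hab.1
      have ha' := h₁.sub a' hab'.1
      have hb := h₂.sub b hab.2
      have hb' := h₂.sub b' hab'.2
      rw [Finset.disjoint_left] at hd
      have e1 : a = a' := by
        ext q
        have := Finset.ext_iff.1 h q
        simp only [Finset.mem_union] at this
        constructor
        · intro hq; rcases this.1 (Or.inl hq) with h3 | h3
          · exact h3
          · exact absurd (hb' h3) (hd (ha hq))
        · intro hq; rcases this.2 (Or.inl hq) with h3 | h3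
          · exact h3
          · exact absurd (hb h3) (hd (ha' hq))
      have e2 : b = b' := by
        ext q
        have := Finset.ext_iff.1 h q
        simp only [Finset.mem_union] at this
        constructor
        · intro hq; rcases this.1 (Or.inr hq) with h3 | h3
          · exact absurd (hb hq) (hd (ha' h3))
          · exact h3
        · intro hq; rcases this.2 (Or.inr hq) with h3 | h3
          · exact absurd (hb' hq) (hd (ha h3))
          · exact h3
      rw [e1, e2]
  refine ⟨?_, ?_, ?_, ?_⟩
  · intro S hS
    rw [Finset.mem_image] at hS
    obtain ⟨⟨a, b⟩, hab, rfl⟩ := hS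
    rw [Finset.mem_product] at hab
    exact Finset.union_subset_union (h₁.sub a hab.1) (h₂.sub b hab.2)
  · intro S hS
    rw [Finset.mem_image] at hS
    obtain ⟨⟨a, b⟩, hab, rfl⟩ := hS
    rw [Finset.mem_product] at hab
    rw [Finset.prod_union]
    · exact Nat.mul_le_mul (h₁.lvl a hab.1) (h₂.lvl b hab.2)
    · exact Finset.disjoint_of_subset_left (h₁.sub a hab.1) (Finset.disjoint_of_subset_right (h₂.sub b hab.2) hd)
  · intro v hv
    rw [hsum, Finset.prod_union hd]
    have hv1 : ∀ q ∈ P₁, 0 ≤ v q ∧ v q ≤ 1 := fun q hq => hv q (Finset.mem_union_left _ hq)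
    have hv2 : ∀ q ∈ P₂, 0 ≤ v q ∧ v q ≤ 1 := fun q hq => hv q (Finset.mem_union_right _ hq)
    have n1 : 0 ≤ ∏ q ∈ P₁, (1 - v q) := Finset.prod_nonneg (fun q hq => by linarith [(hv1 q hq).2])
    have n2 : 0 ≤ ∏ q ∈ P₂, (1 - v q) := Finset.prod_nonneg (fun q hq => by linarith [(hv2 q hq).2])
    exact mul_le_mul (h₁.ub v hv1) (h₂.ub v hv2) n2 (n1.trans (h₁.ub v hv1))
  · intro v hv
    rw [hsum, Finset.sum_union hd, neg_add, Real.exp_add]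
    have hv1 : ∀ q ∈ P₁, 0 ≤ v q ∧ v q ≤ 1 ∧ v q ≤ κ / q := fun q hq => hv q (Finset.mem_union_left _ hq)
    have hv2 : ∀ q ∈ P₂, 0 ≤ v q ∧ v q ≤ 1 ∧ v q ≤ κ / q := fun q hq => hv q (Finset.mem_union_right _ hq)
    have n1 : 0 ≤ ∏ q ∈ P₁, (1 - v q) := Finset.prod_nonneg (fun q hq => by linarith [(hv1 q hq).2.1])
    have n2 : 0 ≤ ∏ q ∈ P₂, (1 - v q) := Finset.prod_nonneg (fun q hq => by linarith [(hv2 q hq).2.1])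
    have u1 := h₁.ub v (fun q hq => ⟨(hv1 q hq).1, (hv1 q hq).2.1⟩)
    have u2 := h₂.ub v (fun q hq => ⟨(hv2 q hq).1, (hv2 q hq).2.1⟩)
    have m1 := h₁.mn v hv1
    have m2 := h₂.mn v hv2
    calc _ ≤ (K₁ * exp (- ∑ q ∈ P₁, v q)) * (K₂ * exp (- ∑ q ∈ P₂, v q)) :=
          mul_le_mul m1 m2 (n2.trans u2) (n1.trans (u1.trans m1))
      _ = _ := by ring

/-- single block -/
lemma UB.block (κ : ℝ) (P : Finset ℕ) (B : ℝ) (y r : ℕ) (hB : ∑ q ∈ P, κ / (q:ℝ) ≤ B)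
    (hy : ∀ q ∈ P, q ≤ y) (hy1 : 1 ≤ y) :
    UB κ P (fam P (2*r)) (y^(2*r)) (1 + exp (3*B) * (1/2)^(2*r+1)) := by
  refine ⟨?_, ?_, ?_, ?_⟩
  · intro S hS
    simp only [fam, Finset.mem_filter, Finset.mem_powerset] at hS
    exact hS.1
  · intro S hS
    simp only [fam, Finset.mem_filter, Finset.mem_powerset] at hS
    calc ∏ q ∈ S, q ≤ ∏ q ∈ S, y := Finset.prod_le_prod' (fun q hq => hy q (hS.1 hq))
      _ = y ^ S.card := by simp
      _ ≤ _ := Nat.pow_le_pow_right hy1 hS.2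
  · intro v hv
    rw [sum_fam]
    have := bonferroni v P hv (2*r)
    rw [pow_mul] at this
    norm_num at this
    exact this
  · intro v hv
    rw [sum_fam]
    have hv' : ∀ q ∈ P, 0 ≤ v q ∧ v q ≤ 1 := fun q hq => ⟨(hv q hq).1, (hv q hq).2.1⟩
    have h1 := bonferroni v P hv' (2*r+1)
    have h2 : TT v P (2*r+1) = TT v P (2*r) - es v P (2*r+1) := by
      unfold TT
      rw [Finset.sum_range_succ _ (2*r+1), pow_succ, pow_mul]
      norm_num; ring
    have h3 : (-1:ℝ)^(2*r+1) = -1 := by rw [pow_succ, pow_mul]; norm_num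
    rw [h3, h2] at h1
    have h4 := es_le v P (fun q hq => (hv q hq).1) (2*r+1)
    set s := ∑ q ∈ P, v q with hs
    have hs0 : 0 ≤ s := Finset.sum_nonneg (fun q hq => (hv q hq).1)
    have hsB : s ≤ B := le_trans (Finset.sum_le_sum (fun q hq => (hv q hq).2.2)) hB
    have h5 : ∏ q ∈ P, (1 - v q) ≤ exp (-s) := by
      rw [hs, ← Finset.sum_neg_distrib, Real.exp_sum]
      apply Finset.prod_le_prod
      · intro q hq; linarith [(hv q hq).2.1]
      · intro q _
        have := Real.add_one_le_exp (- v q); linarith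
    have h6 : s^(2*r+1) / (2*r+1).factorial ≤ exp (2*s) * (1/2)^(2*r+1) := by
      have := Real.pow_div_factorial_le_exp (2*s) (by positivity) (2*r+1)
      rw [mul_pow] at this
      calc s^(2*r+1) / (2*r+1).factorial = (2^(2*r+1) * s^(2*r+1) / (2*r+1).factorial) * (1/2)^(2*r+1) := by
            rw [one_div, inv_pow]; field_simp
        _ ≤ _ := by gcongr
    have h7 : exp (2*s) ≤ exp (3*B) * exp (-s) := by
      rw [← Real.exp_add]; apply Real.exp_le_exp.2; linarith
    have h8 : exp (2*s) * (1/2)^(2*r+1) ≤ (exp (3*B) * exp (-s)) * (1/2)^(2*r+1) := by gcongr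
    nlinarith

end ES

namespace ES

lemma UB.mono {κ : ℝ} {P : Finset ℕ} {F : Finset (Finset ℕ)} {D D' : ℕ} {K K' : ℝ}
    (h : UB κ P F D K) (hD : D ≤ D') (hK : K ≤ K') : UB κ P F D' K' :=
  ⟨h.sub, fun S hS => (h.lvl S hS).trans hD, h.ub, fun v hv => (h.mn v hv).trans (by gcongr)⟩

lemma UB.exists (κ : ℕ) (J s : ℕ) (P : Finset ℕ) (hP : ∀ q ∈ P, q.Prime ∧ q ≤ 2^(2^J)) :
    ∃ F, UB κ P F (2^(2^J*(4*s+4))) (exp (exp (3*(4*κ)) * (1/2)^(2*s))) := by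
  induction J generalizing s P with
  | zero =>
    refine ⟨_, (UB.block κ P (4*κ) 2 s ?_ (fun q hq => by simpa using (hP q hq).2) (by norm_num)).mono ?_ ?_⟩
    · have hsub : P ⊆ {2} := by
        intro q hq
        have := hP q hq
        simp only [pow_zero, pow_one] at this
        rw [Finset.mem_singleton]
        exact le_antisymm this.2 this.1.two_le
      calc ∑ q ∈ P, (κ:ℝ) / (q:ℝ) ≤ ∑ q ∈ ({2} : Finset ℕ), (κ:ℝ) / (q:ℝ) :=
            Finset.sum_le_sum_of_subset_of_nonneg hsub (fun _ _ _ => by positivity)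
        _ ≤ _ := by
          simp only [Finset.sum_singleton, Nat.cast_ofNat]
          have : (0:ℝ) ≤ κ := by positivity
          linarith
    · apply Nat.pow_le_pow_right (by norm_num); simp; omega
    · rw [pow_succ]
      have h := Real.add_one_le_exp (exp (3*(4*(κ:ℝ))) * (1/2)^(2*s))
      have : 0 ≤ exp (3*(4*(κ:ℝ))) * (1/2)^(2*s) := by positivity
      linarith
  | succ J ih =>
    set w := 2^(2^J) with hw
    have hw2 : 2 ≤ w := by
      have : 2^1 ≤ 2^(2^J) := Nat.pow_le_pow_right (by norm_num) Nat.one_le_two_pow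
      simpa using this
    have hww : 2^(2^(J+1)) = w^2 := by rw [hw, ← pow_mul, pow_succ]
    obtain ⟨F₁, h₁⟩ := ih (s+1) (P.filter (· ≤ w)) (by
      intro q hq; rw [Finset.mem_filter] at hq; exact ⟨(hP q hq.1).1, hq.2⟩)
    have h₂ := UB.block κ (P.filter (fun q => ¬ q ≤ w)) (4*κ) (2^(2^(J+1))) s (by
        have h := block_sum (P.filter (fun q => ¬ q ≤ w)) w hw2 (by
          intro q hq; rw [Finset.mem_filter] at hq
          have := hP q hq.1
          exact ⟨this.1, by omega, by rw [← hww]; exact this.2⟩)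
        have : ∑ q ∈ P.filter (fun q => ¬ q ≤ w), (κ:ℝ) / (q:ℝ) = κ * ∑ q ∈ P.filter (fun q => ¬ q ≤ w), (1:ℝ) / (q:ℝ) := by
          rw [Finset.mul_sum]; apply Finset.sum_congr rfl; intros; ring
        rw [this]
        have : (0:ℝ) ≤ κ := by positivity
        nlinarith) (by
        intro q hq; rw [Finset.mem_filter] at hq; exact (hP q hq.1).2) Nat.one_le_two_pow
    obtain ⟨F, hF⟩ := h₁.union h₂ (Finset.disjoint_filter_filter_not _ _ _)
    rw [Finset.filter_union_filter_not_eq] at hF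
    refine ⟨F, hF.mono ?_ ?_⟩
    · rw [← pow_mul, ← pow_add]
      apply Nat.pow_le_pow_right (by norm_num)
      apply le_of_eq; ring
    · set E := exp (3*(4*(κ:ℝ)))
      have hE : 0 < E := Real.exp_pos _
      have h := Real.add_one_le_exp (E * (1/2)^(2*s+1))
      calc exp (E * (1/2)^(2*(s+1))) * (1 + E * (1/2)^(2*s+1))
          ≤ exp (E * (1/2)^(2*(s+1))) * exp (E * (1/2)^(2*s+1)) := by
            apply mul_le_mul_of_nonneg_left _ (Real.exp_pos _).le; linarith
        _ = exp (E * (1/2)^(2*(s+1)) + E * (1/2)^(2*s+1)) := by rw [Real.exp_add]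
        _ ≤ _ := by
          apply Real.exp_le_exp.2
          have e1 : (1/2:ℝ)^(2*(s+1)) = (1/2)^(2*s) * (1/4) := by rw [mul_add, pow_add]; norm_num
          have e2 : (1/2:ℝ)^(2*s+1) = (1/2)^(2*s) * (1/2) := by rw [pow_add]; norm_num
          rw [e1, e2]
          have : 0 ≤ E * (1/2)^(2*s) := by positivity
          linarith

lemma per_mod {f : ℕ → ℝ} {a : ℕ} (hf : ∀ n, f (n + a) = f n) (n : ℕ) : f (n % a) = f n :=
  (Function.Periodic.map_mod_nat hf n)

lemma crt_sum (a b : ℕ) (hab : Nat.Coprime a b) (ha : 0 < a) (hb : 0 < b) (f h : ℕ → ℝ)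
    (hf : ∀ n, f (n + a) = f n) (hh : ∀ n, h (n + b) = h n) :
    ∑ n ∈ Finset.range (a*b), f n * h n = (∑ n ∈ Finset.range a, f n) * ∑ n ∈ Finset.range b, h n := by
  rw [Finset.sum_mul_sum, ← Finset.sum_product']
  apply Finset.sum_nbij (fun n => (n % a, n % b))
  · intro n _
    simp [Nat.mod_lt _ ha, Nat.mod_lt _ hb]
  · intro m hm n hn hmn
    simp only [Finset.coe_range, Set.mem_Iio, Prod.mk.injEq] at hm hn hmn
    have : m ≡ n [MOD a*b] := (Nat.modEq_and_modEq_iff_modEq_mul hab).1 ⟨hmn.1, hmn.2⟩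
    exact Nat.ModEq.eq_of_lt_of_lt this hm hn
  · rintro ⟨x, y⟩ hxy
    simp only [Finset.coe_product, Finset.coe_range, Set.mem_prod, Set.mem_Iio] at hxy
    refine ⟨Nat.chineseRemainder hab x y, ?_, ?_⟩
    · simp [Nat.chineseRemainder_lt_mul hab x y ha.ne' hb.ne']
    · have h1 := (Nat.chineseRemainder hab x y).2.1
      have h2 := (Nat.chineseRemainder hab x y).2.2
      simp only [Prod.mk.injEq]
      constructor
      · rw [h1, Nat.mod_eq_of_lt hxy.1]
      · rw [h2, Nat.mod_eq_of_lt hxy.2]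
  · intro n _
    simp [per_mod hf, per_mod hh]

lemma prod_per (u : ℕ → ℕ → ℝ) (hu : ∀ q n, u q (n + q) = u q n) (S : Finset ℕ) (n : ℕ) :
    ∏ q ∈ S, u q (n + ∏ q ∈ S, q) = ∏ q ∈ S, u q n := by
  apply Finset.prod_congr rfl
  intro q hq
  obtain ⟨k, hk⟩ := Finset.dvd_prod_of_mem (fun q => q) hq
  rw [hk]
  have : Function.Periodic (u q) q := hu q
  have := this.nat_mul k
  rw [mul_comm]
  exact this n

lemma full_sum (u : ℕ → ℕ → ℝ) (hu : ∀ q n, u q (n + q) = u q n) (S : Finset ℕ) (hS : ∀ q ∈ S, q.Prime) :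
    ∑ n ∈ Finset.range (∏ q ∈ S, q), ∏ q ∈ S, u q n = ∏ q ∈ S, ∑ a ∈ Finset.range q, u q a := by
  induction S using Finset.induction_on with
  | empty => simp
  | insert q S hq ih =>
    have hS' : ∀ q ∈ S, q.Prime := fun q hq => hS q (Finset.mem_insert_of_mem hq)
    rw [Finset.prod_insert hq, Finset.prod_insert hq, ← ih hS', ← crt_sum]
    · apply Finset.sum_congr rfl
      intro n _
      rw [Finset.prod_insert hq]
    · apply Nat.Coprime.prod_right
      intro i hi
      exact (Nat.coprime_primes (hS q (Finset.mem_insert_self _ _)) (hS' i hi)).2 (fun h => hq (h ▸ hi))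
    · exact (hS q (Finset.mem_insert_self _ _)).pos
    · exact Finset.prod_pos (fun q hq => (hS' q hq).pos)
    · exact hu q
    · exact prod_per u hu S

lemma range_sum_approx (F : ℕ → ℝ) (d : ℕ) (hd : 0 < d) (hF : ∀ n, F (n + d) = F n) (h0 : ∀ n, 0 ≤ F n) (N : ℕ) :
    |∑ n ∈ Finset.range N, F n - N * ((∑ n ∈ Finset.range d, F n) / d)| ≤ ∑ n ∈ Finset.range d, F n := by
  set M := ∑ n ∈ Finset.range d, F n with hM
  have hM0 : 0 ≤ M := Finset.sum_nonneg (fun n _ => h0 n)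
  have hk : ∀ k : ℕ, ∑ n ∈ Finset.range (d*k), F n = k * M := by
    intro k
    induction k with
    | zero => simp
    | succ k ih =>
      rw [mul_add, mul_one, Finset.sum_range_add, ih]
      have : ∑ x ∈ Finset.range d, F (d*k + x) = M := by
        apply Finset.sum_congr rfl
        intro x _
        have h1 : Function.Periodic F d := hF
        have := (h1.nat_mul k) x
        rw [add_comm, mul_comm]; exact this
      rw [this]; push_cast; ring
  have e := Nat.div_add_mod N d
  have hr := Nat.mod_lt N hd
  set k := N / d
  set r := N % d
  have hsum : ∑ n ∈ Finset.range N, F n = k * M + ∑ n ∈ Finset.range r, F n := by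
    rw [← e, Finset.sum_range_add, hk]
    congr 1
    apply Finset.sum_congr rfl
    intro x _
    have h1 : Function.Periodic F d := hF
    have := (h1.nat_mul k) x
    rw [add_comm, mul_comm]; exact this
  have h1 : 0 ≤ ∑ n ∈ Finset.range r, F n := Finset.sum_nonneg (fun n _ => h0 n)
  have h2 : ∑ n ∈ Finset.range r, F n ≤ M :=
    Finset.sum_le_sum_of_subset_of_nonneg (Finset.range_mono hr.le) (fun n _ _ => h0 n)
  have hN : (N:ℝ) = d * k + r := by exact_mod_cast e.symm
  have hd0 : (0:ℝ) < d := by exact_mod_cast hd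
  have h3 : (N:ℝ) * (M / d) = k * M + (r/d) * M := by rw [hN]; field_simp
  have h4 : (r:ℝ)/d ≤ 1 := by rw [div_le_one hd0]; exact_mod_cast hr.le
  have h5 : 0 ≤ (r:ℝ)/d := by positivity
  rw [hsum, h3, abs_le]
  constructor <;> nlinarith

lemma sieve_aux (κ J N : ℕ) (P : Finset ℕ) (hP : ∀ q ∈ P, q.Prime ∧ q ≤ 2^(2^J))
    (u : ℕ → ℕ → ℝ) (hu : ∀ q n, u q (n + q) = u q n) (hu0 : ∀ q n, 0 ≤ u q n) (hu1 : ∀ q n, u q n ≤ 1)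
    (hg : ∀ q ∈ P, ∑ a ∈ Finset.range q, u q a ≤ κ) :
    ∑ n ∈ Finset.range N, ∏ q ∈ P, (1 - u q n) ≤
      N * (exp (exp (3*(4*κ))) * exp (- ∑ q ∈ P, (∑ a ∈ Finset.range q, u q a) / q)) + (2^(2^J*8) : ℕ) := by
  obtain ⟨F, hF⟩ := UB.exists κ J 0 P hP
  simp only [mul_zero, zero_add, pow_zero, mul_one] at hF
  set D := 2^(2^J*4) with hD
  set g : ℕ → ℝ := fun q => ∑ a ∈ Finset.range q, u q a with hgdef
  have hg0 : ∀ q, 0 ≤ g q := fun q => Finset.sum_nonneg (fun a _ => hu0 q a)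
  have hgq : ∀ q, g q ≤ q := fun q => by
    calc g q ≤ ∑ a ∈ Finset.range q, (1:ℝ) := Finset.sum_le_sum (fun a _ => hu1 q a)
      _ = q := by simp
  have hS : ∀ S ∈ F, ∀ q ∈ S, q.Prime := fun S hS q hq => (hP q (hF.sub S hS hq)).1
  have hcard : F.card ≤ D := by
    have : F.card ≤ (Finset.Icc 1 D).card := by
      apply Finset.card_le_card_of_injOn (fun S => ∏ q ∈ S, q)
      · intro S hS'
        simp only [Finset.coe_Icc, Set.mem_Icc]
        exact ⟨Finset.prod_pos (fun q hq => (hS S hS' q hq).pos), hF.lvl S hS'⟩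
      · intro S hS1 S' hS2 h
        simp only at h
        rw [← Nat.primeFactors_prod (hS S hS1), ← Nat.primeFactors_prod (hS S' hS2), h]
    simpa using this
  calc ∑ n ∈ Finset.range N, ∏ q ∈ P, (1 - u q n)
      ≤ ∑ n ∈ Finset.range N, ∑ S ∈ F, ∏ q ∈ S, (- u q n) := by
        apply Finset.sum_le_sum
        intro n _
        exact hF.ub (fun q => u q n) (fun q _ => ⟨hu0 q n, hu1 q n⟩)
    _ = ∑ S ∈ F, ∑ n ∈ Finset.range N, ∏ q ∈ S, (- u q n) := Finset.sum_comm
    _ ≤ ∑ S ∈ F, (N * ∏ q ∈ S, (- (g q / q)) + D) := by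
        apply Finset.sum_le_sum
        intro S hSF
        have hpos : 0 < ∏ q ∈ S, q := Finset.prod_pos (fun q hq => (hS S hSF q hq).pos)
        have h := range_sum_approx (fun n => ∏ q ∈ S, u q n) (∏ q ∈ S, q) hpos (prod_per u hu S)
          (fun n => Finset.prod_nonneg (fun q _ => hu0 q n)) N
        rw [full_sum u hu S (hS S hSF)] at h
        have hle : ∏ q ∈ S, g q ≤ D := by
          calc ∏ q ∈ S, g q ≤ ∏ q ∈ S, (q:ℝ) := Finset.prod_le_prod (fun q _ => hg0 q) (fun q _ => hgq q)
            _ = ((∏ q ∈ S, q : ℕ):ℝ) := by push_cast; rfl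
            _ ≤ D := by exact_mod_cast hF.lvl S hSF
        have e1 : ∏ q ∈ S, (- (g q / q)) = (-1)^S.card * ((∏ q ∈ S, g q) / (∏ q ∈ S, q : ℕ)) := by
          rw [Finset.prod_neg, Finset.prod_div_distrib]; push_cast; rfl
        have e2 : ∑ n ∈ Finset.range N, ∏ q ∈ S, (- u q n) = (-1)^S.card * ∑ n ∈ Finset.range N, ∏ q ∈ S, u q n := by
          rw [Finset.mul_sum]; apply Finset.sum_congr rfl; intro n _; rw [Finset.prod_neg]
        rw [e1, e2]
        have habs := abs_le.1 (h.trans hle)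
        rcases neg_one_pow_eq_or ℝ S.card with h1 | h1 <;> rw [h1] <;> linarith [habs.1, habs.2]
    _ = N * (∑ S ∈ F, ∏ q ∈ S, (- (g q / q))) + F.card * D := by
        rw [Finset.sum_add_distrib, ← Finset.mul_sum]; simp
    _ ≤ N * (exp (exp (3*(4*κ))) * exp (- ∑ q ∈ P, g q / q)) + (2^(2^J*8) : ℕ) := by
        apply add_le_add
        · apply mul_le_mul_of_nonneg_left _ (by positivity)
          apply hF.mn (fun q => g q / q)
          intro q hq
          have hq0 : (0:ℝ) < q := by exact_mod_cast (hP q hq).1.pos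
          refine ⟨div_nonneg (hg0 q) hq0.le, (div_le_one hq0).2 (hgq q), ?_⟩
          exact div_le_div_of_nonneg_right (hg q hq) hq0.le
        · have : F.card * D ≤ 2^(2^J*8) := by
            calc F.card * D ≤ D * D := Nat.mul_le_mul_right _ hcard
              _ = _ := by rw [hD, ← pow_add]; congr 1; ring
          exact_mod_cast this

end ES

namespace ES

lemma exists_scale (N : ℕ) (hN : 512 ≤ N) : ∃ J, (2^(2^J))^9 ≤ N ∧ N < (2^(2^J))^18 := by
  have hex : ∃ J, N < (2^(2^J))^18 := by
    refine ⟨N, ?_⟩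
    have h1 : N < 2^N := Nat.lt_two_pow_self
    have h2 : 2^N < 2^(2^N) := Nat.lt_two_pow_self
    have h3 : 2^(2^N) ≤ (2^(2^N))^18 := Nat.le_self_pow (by norm_num) _
    omega
  classical
  refine ⟨Nat.find hex, ?_, Nat.find_spec hex⟩
  rcases Nat.eq_zero_or_pos (Nat.find hex) with h | h
  · rw [h]; norm_num; exact hN
  · obtain ⟨J, hJ⟩ : ∃ J, Nat.find hex = J + 1 := ⟨Nat.find hex - 1, by omega⟩
    have := Nat.find_min hex (m := J) (by omega)
    rw [hJ]
    have e : (2^(2^(J+1)))^9 = (2^(2^J))^18 := by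
      rw [← pow_mul, ← pow_mul]; congr 1; ring
    rw [e]; omega

lemma sum_split (f : ℕ → ℝ) (P : Finset ℕ) (z : ℕ) :
    ∑ q ∈ P, f q = ∑ q ∈ P.filter (· ≤ z), f q + ∑ q ∈ P.filter (fun q => ¬ q ≤ z), f q :=
  (Finset.sum_filter_add_sum_filter_not P (· ≤ z) f).symm

/-- The upper bound sieve. -/
theorem sieve (κ : ℕ) : ∃ C : ℝ, 0 < C ∧ ∀ (N : ℕ) (P : Finset ℕ) (u : ℕ → ℕ → ℝ),
    (∀ q ∈ P, q.Prime ∧ q ≤ N) → (∀ q n, u q (n + q) = u q n) → (∀ q n, 0 ≤ u q n) → (∀ q n, u q n ≤ 1) →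
    (∀ q ∈ P, ∑ a ∈ Finset.range q, u q a ≤ κ) →
    ∑ n ∈ Finset.range N, ∏ q ∈ P, (1 - u q n) ≤
      C * N * exp (- ∑ q ∈ P, (∑ a ∈ Finset.range q, u q a) / q) := by
  obtain ⟨C₁, hC₁⟩ := mertens_upper
  set L : ℝ := log 18 + C₁ + 1 with hL
  set A : ℝ := exp (exp (3*(4*κ))) * exp (κ * L) with hA
  set B : ℝ := (κ.factorial : ℝ) * exp (κ * C₁) * exp (κ * L) with hB
  have hA0 : 0 < A := by positivity
  have hB0 : 0 < B := by positivity
  refine ⟨exp (512 * κ) + A + B, by positivity, ?_⟩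
  intro N P u hP hu hu0 hu1 hg
  set g : ℕ → ℝ := fun q => ∑ a ∈ Finset.range q, u q a with hgdef
  have hg0 : ∀ q, 0 ≤ g q := fun q => Finset.sum_nonneg (fun a _ => hu0 q a)
  have hterm : ∀ q ∈ P, g q / q ≤ κ * (1 / q) := by
    intro q hq
    rw [mul_one_div]
    exact div_le_div_of_nonneg_right (hg q hq) (by positivity)
  rcases lt_or_ge N 512 with hN | hN
  · have h1 : ∑ n ∈ Finset.range N, ∏ q ∈ P, (1 - u q n) ≤ N := by
      calc ∑ n ∈ Finset.range N, ∏ q ∈ P, (1 - u q n) ≤ ∑ n ∈ Finset.range N, (1:ℝ) := by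
            apply Finset.sum_le_sum
            intro n _
            apply Finset.prod_le_one
            · intro q _; linarith [hu1 q n]
            · intro q _; linarith [hu0 q n]
        _ = N := by simp
    have h2 : ∑ q ∈ P, g q / q ≤ 512 * κ := by
      have hcard : P.card ≤ 512 := by
        have : P ⊆ Finset.Icc 1 N := by
          intro q hq
          rw [Finset.mem_Icc]
          exact ⟨(hP q hq).1.one_le, (hP q hq).2⟩
        have := Finset.card_le_card this
        simp at this; omega
      calc ∑ q ∈ P, g q / q ≤ ∑ q ∈ P, (κ:ℝ) := by
            apply Finset.sum_le_sum
            intro q hq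
            refine (hterm q hq).trans ?_
            have : (1:ℝ) ≤ q := by exact_mod_cast (hP q hq).1.one_le
            have : (1:ℝ)/q ≤ 1 := by rw [div_le_one (by linarith)]; exact this
            have : (0:ℝ) ≤ κ := by positivity
            nlinarith
        _ = P.card * κ := by simp
        _ ≤ 512 * κ := by gcongr; exact_mod_cast hcard
    have h3 : 1 ≤ exp (512 * κ) * exp (- ∑ q ∈ P, g q / q) := by
      rw [← Real.exp_add]; apply Real.one_le_exp; linarith
    have h4 : 0 < exp (- ∑ q ∈ P, g q / q) := Real.exp_pos _
    have h5 : (0:ℝ) ≤ N := by positivity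
    calc _ ≤ (N:ℝ) := h1
      _ ≤ N * (exp (512 * κ) * exp (- ∑ q ∈ P, g q / q)) := by nlinarith
      _ ≤ _ := by
        have : 0 ≤ (A + B) * N * exp (- ∑ q ∈ P, g q / q) := by positivity
        linarith
  · obtain ⟨J, hJ1, hJ2⟩ := exists_scale N hN
    set z := 2^(2^J) with hz
    have hz2 : 2 ≤ z := by
      have : 2^1 ≤ 2^(2^J) := Nat.pow_le_pow_right (by norm_num) Nat.one_le_two_pow
      simpa using this
    have hz0 : (0:ℝ) < z := by positivity
    have hzlog : 0 < log z := Real.log_pos (by exact_mod_cast (by omega : 1 < z))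
    set S := ∑ q ∈ P, g q / q with hS
    set S₁ := ∑ q ∈ P.filter (· ≤ z), g q / q with hS₁
    set S₂ := ∑ q ∈ P.filter (fun q => ¬ q ≤ z), g q / q with hS₂
    have hSS : S = S₁ + S₂ := sum_split _ P z
    have hzN : z ≤ N := (Nat.le_self_pow (by norm_num) z).trans hJ1
    have hS₂le : S₂ ≤ κ * L := by
      have h1 : S₂ ≤ ∑ q ∈ P.filter (fun q => ¬ q ≤ z), (κ:ℝ) * (1/q) :=
        Finset.sum_le_sum (fun q hq => hterm q (Finset.mem_filter.1 hq).1)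
      rw [← Finset.mul_sum] at h1
      refine h1.trans (mul_le_mul_of_nonneg_left ?_ (by positivity))
      have h2 := hC₁ N (by omega)
      have h3 := mertens_lower z hz2
      have h4 := sum_split (fun q => (1:ℝ)/q) (pr N) z
      have h5 : (pr N).filter (· ≤ z) = pr z := by
        ext q; rw [Finset.mem_filter, mem_pr, mem_pr]; constructor
        · rintro ⟨⟨a, b⟩, c⟩; exact ⟨a, c⟩
        · rintro ⟨a, b⟩; exact ⟨⟨a, b.trans hzN⟩, b⟩
      rw [h5] at h4
      have h6 : ∑ q ∈ P.filter (fun q => ¬ q ≤ z), (1:ℝ)/q ≤ ∑ q ∈ (pr N).filter (fun q => ¬ q ≤ z), (1:ℝ)/q := by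
        apply Finset.sum_le_sum_of_subset_of_nonneg
        · intro q hq
          rw [Finset.mem_filter] at hq ⊢
          exact ⟨mem_pr.2 (hP q hq.1), hq.2⟩
        · intros; positivity
      have h7 : log (log N) ≤ log 18 + log (log z) := by
        rw [← Real.log_mul (by norm_num) hzlog.ne']
        apply Real.log_le_log
        · apply Real.log_pos; exact_mod_cast (by omega : 1 < N)
        · have : log N ≤ log ((z:ℝ)^18) := by
            apply Real.log_le_log
            · exact_mod_cast (by omega : 0 < N)
            · exact_mod_cast hJ2.le
          rw [Real.log_pow] at this
          exact_mod_cast this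
      linarith
    have hS₁le : S₁ ≤ κ * (log (log z) + C₁) := by
      have h1 : S₁ ≤ ∑ q ∈ P.filter (· ≤ z), (κ:ℝ) * (1/q) :=
        Finset.sum_le_sum (fun q hq => hterm q (Finset.mem_filter.1 hq).1)
      rw [← Finset.mul_sum] at h1
      refine h1.trans (mul_le_mul_of_nonneg_left ?_ (by positivity))
      refine le_trans ?_ (hC₁ z hz2)
      apply Finset.sum_le_sum_of_subset_of_nonneg
      · intro q hq
        rw [Finset.mem_filter] at hq
        exact mem_pr.2 ⟨(hP q hq.1).1, hq.2⟩
      · intros; positivity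
    have hmain := sieve_aux κ J N (P.filter (· ≤ z)) (by
      intro q hq; rw [Finset.mem_filter] at hq; exact ⟨(hP q hq.1).1, hq.2⟩) u hu hu0 hu1
      (fun q hq => hg q (Finset.mem_filter.1 hq).1)
    have hle : ∑ n ∈ Finset.range N, ∏ q ∈ P, (1 - u q n) ≤
        ∑ n ∈ Finset.range N, ∏ q ∈ P.filter (· ≤ z), (1 - u q n) := by
      apply Finset.sum_le_sum
      intro n _
      apply Finset.prod_le_prod_of_subset_of_le_one (Finset.filter_subset _ _)
      · intro q _; linarith [hu1 q n]
      · intro q _ _; linarith [hu0 q n]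
    have hN0 : (0:ℝ) < N := by exact_mod_cast (by omega : 0 < N)
    have hterm1 : (N:ℝ) * (exp (exp (3*(4*κ))) * exp (- S₁)) ≤ A * N * exp (-S) := by
      have : exp (-S₁) ≤ exp (κ * L) * exp (-S) := by
        rw [← Real.exp_add]; apply Real.exp_le_exp.2; linarith
      calc _ ≤ (N:ℝ) * (exp (exp (3*(4*κ))) * (exp (κ * L) * exp (-S))) := by gcongr
        _ = _ := by rw [hA]; ring
    have hterm2 : ((2^(2^J*8) : ℕ):ℝ) ≤ B * N * exp (-S) := by
      have e8 : 2^(2^J*8) = z^8 := by rw [pow_mul]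
      rw [e8]
      have h1 : ((z^8:ℕ):ℝ) * z ≤ N := by
        have : z^8 * z ≤ N := by rw [← pow_succ]; exact hJ1
        exact_mod_cast this
      have h2 : exp S ≤ B * z := by
        have hp : (log z)^κ ≤ κ.factorial * z := by
          have := Real.pow_div_factorial_le_exp (log z) hzlog.le κ
          rw [Real.exp_log hz0, div_le_iff₀ (by positivity)] at this
          linarith
        calc exp S ≤ exp (κ * log (log z) + κ * C₁ + κ * L) := by
              apply Real.exp_le_exp.2; linarith
          _ = (log z)^κ * exp (κ * C₁) * exp (κ * L) := by
              rw [Real.exp_add, Real.exp_add, Real.exp_nat_mul, Real.exp_log hzlog]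
          _ ≤ (κ.factorial * z) * exp (κ * C₁) * exp (κ * L) := by gcongr
          _ = _ := by rw [hB]; ring
      have h3 : exp S * exp (-S) = 1 := by rw [← Real.exp_add]; simp
      have h4 : 0 < exp (-S) := Real.exp_pos _
      have h5 : 1 ≤ B * z * exp (-S) := by
        rw [← h3]; gcongr
      calc ((z^8:ℕ):ℝ) = (z^8:ℕ) * 1 := by ring
        _ ≤ (z^8:ℕ) * (B * z * exp (-S)) := by gcongr
        _ = B * ((z^8:ℕ) * z) * exp (-S) := by ring
        _ ≤ B * N * exp (-S) := by gcongr
    have : 0 ≤ exp (512 * κ) * N * exp (-S) := by positivity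
    have : (exp (512 * κ) + A + B) * N * exp (-S) = exp (512 * κ) * N * exp (-S) + A * N * exp (-S) + B * N * exp (-S) := by ring
    linarith

end ES

namespace ES

lemma root_card (q c d : ℕ) (hq : q.Prime) (hc : ¬ q ∣ c) :
    ((Finset.range q).filter (fun a => q ∣ c * a + d)).card = 1 := by
  have : Fact q.Prime := ⟨hq⟩
  have hc' : (c : ZMod q) ≠ 0 := by
    intro h; exact hc ((ZMod.natCast_eq_zero_iff c q).1 h)
  rw [Finset.card_eq_one]
  refine ⟨((-(d:ZMod q)) * (c:ZMod q)⁻¹).val, ?_⟩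
  ext a
  rw [Finset.mem_filter, Finset.mem_singleton, Finset.mem_range, ← ZMod.natCast_eq_zero_iff]
  push_cast
  constructor
  · rintro ⟨h1, h2⟩
    have : (a : ZMod q) = -(d:ZMod q) * (c:ZMod q)⁻¹ := by
      field_simp
      linear_combination h2
    rw [← this, ZMod.val_natCast, Nat.mod_eq_of_lt h1]
  · rintro rfl
    refine ⟨ZMod.val_lt _, ?_⟩
    rw [ZMod.natCast_val, ZMod.cast_id]
    field_simp
    ring

lemma root_sum (q c d : ℕ) (hq : q.Prime) (hc : ¬ q ∣ c) (r : ℝ) :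
    ∑ a ∈ Finset.range q, (if q ∣ c * a + d then r else 0) = r := by
  rw [← Finset.sum_filter, Finset.sum_const, root_card q c d hq hc]; simp

/-- doubly exponential scale -/
def Z (j : ℕ) : ℕ := 2^(2^j)

lemma Z_two_le (j : ℕ) : 2 ≤ Z j := by
  have : 2^1 ≤ 2^(2^j) := Nat.pow_le_pow_right (by norm_num) Nat.one_le_two_pow
  simpa [Z] using this

lemma Z_pos (j : ℕ) : 0 < Z j := by have := Z_two_le j; omega

lemma Z_succ (j : ℕ) : Z (j+1) = (Z j)^2 := by unfold Z; rw [pow_succ, pow_mul]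

lemma loglog_Z (j : ℕ) : log (log (Z j)) = j * log 2 + log (log 2) := by
  unfold Z
  push_cast
  rw [Real.log_pow]
  push_cast
  rw [Real.log_mul (by positivity) (Real.log_pos (by norm_num)).ne', Real.log_pow]

lemma mertens_Z : ∃ C : ℝ, ∀ j, (j * log 2 - C ≤ ∑ q ∈ pr (Z j), (1:ℝ)/q) ∧
    ∑ q ∈ pr (Z j), (1:ℝ)/q ≤ j * log 2 + C := by
  obtain ⟨C, hC⟩ := mertens_upper
  refine ⟨|C| + 1 + |log (log 2)|, fun j => ⟨?_, ?_⟩⟩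
  · have := mertens_lower (Z j) (Z_two_le j)
    rw [loglog_Z] at this
    linarith [neg_abs_le (log (log 2)), abs_nonneg C]
  · have := hC (Z j) (Z_two_le j)
    rw [loglog_Z] at this
    linarith [le_abs_self (log (log 2)), le_abs_self C]

/-- weight `2^{-ω_z(n)}` -/
noncomputable def wt (z n : ℕ) : ℝ := ∏ q ∈ pr z, (if q ∣ n then (1/2:ℝ) else 1)

lemma wt_nonneg (z n : ℕ) : 0 ≤ wt z n := Finset.prod_nonneg (fun q _ => by split_ifs <;> norm_num)

lemma wt_le_one (z n : ℕ) : wt z n ≤ 1 :=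
  Finset.prod_le_one (fun q _ => by split_ifs <;> norm_num) (fun q _ => by split_ifs <;> norm_num)

lemma wt_sum : ∃ C : ℝ, 0 < C ∧ ∀ j X, Z j ≤ X →
    ∑ m ∈ Finset.Icc 1 X, wt (Z j) m ≤ C * X * exp (-(j * log 2 / 2)) := by
  obtain ⟨C, hC0, hC⟩ := sieve 1
  obtain ⟨M, hM⟩ := mertens_Z
  refine ⟨2 * C * exp (M/2), by positivity, ?_⟩
  intro j X hX
  have hX1 : 1 ≤ X := (Z_pos j).trans_le hX
  set u : ℕ → ℕ → ℝ := fun q n => if q ∣ n then 1/2 else 0 with hu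
  have hg : ∀ q ∈ pr (Z j), ∑ a ∈ Finset.range q, u q a = 1/2 := by
    intro q hq
    have hqp := (mem_pr.1 hq).1
    have := root_sum q 1 0 hqp hqp.not_dvd_one (1/2)
    simpa [hu] using this
  have h := hC (X+1) (pr (Z j)) u
    (fun q hq => ⟨(mem_pr.1 hq).1, by have := (mem_pr.1 hq).2; omega⟩)
    (fun q n => by simp [hu])
    (fun q n => by simp only [hu]; split_ifs <;> norm_num)
    (fun q n => by simp only [hu]; split_ifs <;> norm_num)
    (fun q hq => by rw [hg q hq]; norm_num)
  have e1 : ∑ q ∈ pr (Z j), (∑ a ∈ Finset.range q, u q a) / (q:ℝ) = (1/2) * ∑ q ∈ pr (Z j), (1:ℝ)/q := by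
    rw [Finset.mul_sum]
    apply Finset.sum_congr rfl
    intro q hq; rw [hg q hq]; ring
  rw [e1] at h
  calc ∑ m ∈ Finset.Icc 1 X, wt (Z j) m ≤ ∑ m ∈ Finset.range (X+1), wt (Z j) m := by
        apply Finset.sum_le_sum_of_subset_of_nonneg
        · intro m hm; simp at hm ⊢; omega
        · intros; apply wt_nonneg
    _ = ∑ n ∈ Finset.range (X+1), ∏ q ∈ pr (Z j), (1 - u q n) := by
        apply Finset.sum_congr rfl; intro n _
        apply Finset.prod_congr rfl; intro q _
        simp only [hu]; split_ifs <;> norm_num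
    _ ≤ _ := h
    _ ≤ C * (2 * X) * exp (M/2 + -(j * log 2 / 2)) := by
        gcongr
        · push_cast
          have : (1:ℝ) ≤ X := by exact_mod_cast hX1
          linarith
        · linarith [(hM j).1]
    _ = _ := by rw [Real.exp_add]; ring

lemma wt_sum_prime : ∃ C : ℝ, 0 < C ∧ ∀ j X, Z j ≤ X →
    ∑ n ∈ (Finset.Icc 1 X).filter (fun n => (n+1).Prime ∧ Z j < n + 1), wt (Z j) n ≤
      C * X * exp (-(3 * (j * log 2) / 2)) := by
  obtain ⟨C, hC0, hC⟩ := sieve 2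
  obtain ⟨M, hM⟩ := mertens_Z
  refine ⟨2 * C * exp (3*M/2), by positivity, ?_⟩
  intro j X hX
  have hX1 : 1 ≤ X := (Z_pos j).trans_le hX
  set u : ℕ → ℕ → ℝ := fun q n => if q ∣ n + 1 then 1 else if q ∣ n then 1/2 else 0 with hu
  have hu' : ∀ q n, u q (n + q) = u q n := by
    intro q n
    simp only [hu]
    rw [show n + q + 1 = n + 1 + q by ring]
    simp
  have hg : ∀ q ∈ pr (Z j), ∑ a ∈ Finset.range q, u q a = 3/2 := by
    intro q hq
    have hqp := (mem_pr.1 hq).1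
    have h1 := root_sum q 1 0 hqp hqp.not_dvd_one (1/2)
    have h2 := root_sum q 1 1 hqp hqp.not_dvd_one 1
    have : ∑ a ∈ Finset.range q, u q a = ∑ a ∈ Finset.range q, ((if q ∣ 1 * a + 1 then (1:ℝ) else 0) +
        (if q ∣ 1 * a + 0 then (1/2:ℝ) else 0)) := by
      apply Finset.sum_congr rfl
      intro a _
      simp only [hu, one_mul, add_zero]
      by_cases h3 : q ∣ a + 1
      · have h4 : ¬ q ∣ a := by
          intro h4
          exact hqp.not_dvd_one ((Nat.dvd_add_right h4).1 h3)
        simp [h3, h4]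
      · simp [h3]
    rw [this, Finset.sum_add_distrib, h1, h2]; norm_num
  have h := hC (X+1) (pr (Z j)) u
    (fun q hq => ⟨(mem_pr.1 hq).1, by have := (mem_pr.1 hq).2; omega⟩)
    hu'
    (fun q n => by simp only [hu]; split_ifs <;> norm_num)
    (fun q n => by simp only [hu]; split_ifs <;> norm_num)
    (fun q hq => by rw [hg q hq]; norm_num)
  have e1 : ∑ q ∈ pr (Z j), (∑ a ∈ Finset.range q, u q a) / (q:ℝ) = (3/2) * ∑ q ∈ pr (Z j), (1:ℝ)/q := by
    rw [Finset.mul_sum]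
    apply Finset.sum_congr rfl
    intro q hq; rw [hg q hq]; ring
  rw [e1] at h
  calc ∑ n ∈ (Finset.Icc 1 X).filter (fun n => (n+1).Prime ∧ Z j < n + 1), wt (Z j) n
      = ∑ n ∈ (Finset.Icc 1 X).filter (fun n => (n+1).Prime ∧ Z j < n + 1), ∏ q ∈ pr (Z j), (1 - u q n) := by
        apply Finset.sum_congr rfl; intro n hn
        apply Finset.prod_congr rfl; intro q hq
        rw [Finset.mem_filter] at hn
        rw [mem_pr] at hq
        have : ¬ q ∣ n + 1 := by
          intro hd
          have := (Nat.prime_dvd_prime_iff_eq hq.1 hn.2.1).1 hd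
          omega
        simp only [hu, this, if_false]; split_ifs <;> norm_num
    _ ≤ ∑ n ∈ Finset.range (X+1), ∏ q ∈ pr (Z j), (1 - u q n) := by
        apply Finset.sum_le_sum_of_subset_of_nonneg
        · intro m hm; simp at hm ⊢; omega
        · intros; apply Finset.prod_nonneg; intros
          simp only [hu]; split_ifs <;> norm_num
    _ ≤ _ := h
    _ ≤ C * (2 * X) * exp (3*M/2 + -(3 * (j * log 2) / 2)) := by
        gcongr
        · push_cast
          have : (1:ℝ) ≤ X := by exact_mod_cast hX1
          linarith
        · linarith [(hM j).1]
    _ = _ := by rw [Real.exp_add]; ring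

lemma sum_mult (f : ℕ → ℝ) (q N : ℕ) (hq : 0 < q) :
    ∑ n ∈ (Finset.Icc 1 N).filter (fun n => q ∣ n), f n = ∑ m ∈ Finset.Icc 1 (N/q), f (q*m) := by
  symm
  apply Finset.sum_nbij (fun m => q*m)
  · intro m hm
    simp only [Finset.mem_Icc, Finset.mem_filter] at hm ⊢
    refine ⟨⟨Nat.mul_pos hq hm.1, ?_⟩, dvd_mul_right _ _⟩
    rw [mul_comm]; exact (Nat.le_div_iff_mul_le hq).1 hm.2
  · intro a _ b _ h
    exact Nat.eq_of_mul_eq_mul_left hq h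
  · intro n hn
    simp only [Finset.coe_filter, Finset.mem_Icc, Set.mem_ofPred_eq] at hn
    obtain ⟨⟨h1, h2⟩, m, rfl⟩ := hn
    refine ⟨m, ?_, rfl⟩
    simp only [Finset.coe_Icc, Set.mem_Icc]
    refine ⟨Nat.pos_of_mul_pos_left h1, ?_⟩
    rw [Nat.le_div_iff_mul_le hq, mul_comm]; exact h2
  · intros; rfl

lemma moment (P : Finset ℕ) (hP : ∀ q ∈ P, q.Prime) (N : ℕ) :
    ∑ n ∈ Finset.Icc 1 N, ∏ q ∈ P, (4/3:ℝ)^(n.factorization q) ≤ N * ∏ q ∈ P, (1 + (1/3)/((q:ℝ)-4/3)) := by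
  induction P using Finset.induction_on generalizing N with
  | empty => simp
  | insert q P hqP ih =>
    have hP' : ∀ q ∈ P, q.Prime := fun q hq => hP q (Finset.mem_insert_of_mem hq)
    have hq : q.Prime := hP q (Finset.mem_insert_self _ _)
    have hq2 : (2:ℝ) ≤ q := by exact_mod_cast hq.two_le
    set h : ℕ → ℝ := fun n => ∏ q ∈ P, (4/3:ℝ)^(n.factorization q) with hh
    set B := ∏ q ∈ P, (1 + (1/3)/((q:ℝ)-4/3)) with hB
    have hB0 : 0 ≤ B := Finset.prod_nonneg (fun r hr => by
      have : (2:ℝ) ≤ r := by exact_mod_cast (hP' r hr).two_le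
      have : 0 ≤ (1/3)/((r:ℝ)-4/3) := div_nonneg (by norm_num) (by linarith)
      linarith)
    have hF : ∀ N : ℕ, ∑ n ∈ Finset.Icc 1 N, h n ≤ N * B := fun N => ih hP' N
    have hhq : ∀ m, 1 ≤ m → h (q*m) = h m := by
      intro m hm
      apply Finset.prod_congr rfl
      intro r hr
      have : r ≠ q := fun e => hqP (e ▸ hr)
      rw [Nat.factorization_mul hq.ne_zero (by omega)]
      simp [hq.factorization, this]
    set G : ℕ → ℝ := fun N => ∑ n ∈ Finset.Icc 1 N, ((4/3:ℝ)^(n.factorization q) - 1) * h n with hG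
    have hGrec : ∀ N, G N = (1/3) * ∑ n ∈ Finset.Icc 1 (N/q), h n + (4/3) * G (N/q) := by
      intro N
      have e1 : G N = ∑ n ∈ (Finset.Icc 1 N).filter (fun n => q ∣ n), ((4/3:ℝ)^(n.factorization q) - 1) * h n := by
        rw [hG]; simp only
        symm
        apply Finset.sum_subset (Finset.filter_subset _ _)
        intro n hn hn'
        rw [Finset.mem_filter] at hn'
        have : ¬ q ∣ n := fun h => hn' ⟨hn, h⟩
        rw [Nat.factorization_eq_zero_of_not_dvd this]; simp
      rw [e1, sum_mult _ q N hq.pos, hG]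
      simp only
      rw [Finset.mul_sum, Finset.mul_sum, ← Finset.sum_add_distrib]
      apply Finset.sum_congr rfl
      intro m hm
      have hm1 : 1 ≤ m := (Finset.mem_Icc.1 hm).1
      rw [hhq m hm1, Nat.factorization_mul hq.ne_zero (by omega)]
      simp only [hq.factorization, Finsupp.coe_add, Pi.add_apply, Finsupp.single_eq_same, pow_add, pow_one]
      ring
    have hGle : ∀ N, G N ≤ ((1/3)/((q:ℝ)-4/3)) * B * N := by
      intro N
      induction N using Nat.strong_induction_on with
      | _ N ihN =>
        rcases Nat.eq_zero_or_pos N with h0 | h0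
        · subst h0; simp [hG]
        · have h1 := ihN (N/q) (Nat.div_lt_self h0 hq.one_lt)
          have h2 := hF (N/q)
          have h3 : ((N/q:ℕ):ℝ) ≤ N/q := Nat.cast_div_le
          have h4 : 0 ≤ (1/3)/((q:ℝ)-4/3) := div_nonneg (by norm_num) (by linarith)
          rw [hGrec N]
          calc _ ≤ (1/3) * (((N/q:ℕ):ℝ) * B) + (4/3) * (((1/3)/((q:ℝ)-4/3)) * B * ((N/q:ℕ):ℝ)) := by gcongr
            _ ≤ (1/3) * ((N/q) * B) + (4/3) * (((1/3)/((q:ℝ)-4/3)) * B * (N/q)) := by gcongr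
            _ = _ := by
              obtain ⟨t, ht⟩ : ∃ t, t = (q:ℝ) - 4/3 := ⟨_, rfl⟩
              have ht0 : 0 < t := by linarith
              have hqt : (q:ℝ) = t + 4/3 := by linarith
              rw [← ht, hqt]
              field_simp
    rw [Finset.prod_insert hqP]
    calc ∑ n ∈ Finset.Icc 1 N, ∏ r ∈ insert q P, (4/3:ℝ)^(n.factorization r)
        = G N + ∑ n ∈ Finset.Icc 1 N, h n := by
          rw [hG]; simp only
          rw [← Finset.sum_add_distrib]
          apply Finset.sum_congr rfl; intro n _
          rw [Finset.prod_insert hqP]; simp only [hh]; ring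
      _ ≤ ((1/3)/((q:ℝ)-4/3)) * B * N + N * B := add_le_add (hGle N) (hF N)
      _ = _ := by ring

end ES

namespace ES

def Om (z n : ℕ) : ℕ := ∑ q ∈ pr z, n.factorization q

lemma inv_sq_sum (z : ℕ) : ∑ q ∈ pr z, (1:ℝ)/(q:ℝ)^2 ≤ 1 := by
  rcases Nat.eq_zero_or_pos z with h | h
  · subst h
    have : pr 0 = ∅ := by
      ext q; rw [mem_pr]; simp only [Finset.notMem_empty, iff_false, not_and]
      intro hq; have := hq.pos; omega
    rw [this]; simp
  · calc ∑ q ∈ pr z, (1:ℝ)/(q:ℝ)^2 ≤ ∑ q ∈ Finset.Ioc 1 z, (1:ℝ)/(q:ℝ)^2 := by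
          apply Finset.sum_le_sum_of_subset_of_nonneg
          · intro q hq; rw [mem_pr] at hq; rw [Finset.mem_Ioc]; exact ⟨hq.1.one_lt, hq.2⟩
          · intros; positivity
      _ = ∑ q ∈ Finset.Ioc 1 z, ((q:ℝ)^2)⁻¹ := by simp
      _ ≤ ((1:ℕ):ℝ)⁻¹ - (z:ℝ)⁻¹ := sum_Ioc_inv_sq_le_sub one_ne_zero h
      _ ≤ 1 := by
        have : (0:ℝ) ≤ (z:ℝ)⁻¹ := by positivity
        simp

lemma momZ : ∃ C : ℝ, 0 < C ∧ ∀ j N, ∑ n ∈ Finset.Icc 1 N, (4/3:ℝ)^(Om (Z j) n) ≤ C * N * exp (j * log 2 / 3) := by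
  obtain ⟨M, hM⟩ := mertens_Z
  refine ⟨exp (M/3 + 4/3), by positivity, ?_⟩
  intro j N
  have h := moment (pr (Z j)) (fun q hq => (mem_pr.1 hq).1) N
  have e : ∀ n, ∏ q ∈ pr (Z j), (4/3:ℝ)^(n.factorization q) = (4/3:ℝ)^(Om (Z j) n) := by
    intro n; rw [Finset.prod_pow_eq_pow_sum]; rfl
  simp only [e] at h
  refine h.trans ?_
  have h1 : ∏ q ∈ pr (Z j), (1 + (1/3)/((q:ℝ)-4/3)) ≤ exp (M/3 + 4/3) * exp (j * log 2 / 3) := by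
    calc ∏ q ∈ pr (Z j), (1 + (1/3)/((q:ℝ)-4/3)) ≤ ∏ q ∈ pr (Z j), exp ((1/3) * (1/q) + (4/3) * (1/(q:ℝ)^2)) := by
          apply Finset.prod_le_prod
          · intro q hq
            have : (2:ℝ) ≤ q := by exact_mod_cast (mem_pr.1 hq).1.two_le
            have : 0 ≤ (1/3)/((q:ℝ)-4/3) := div_nonneg (by norm_num) (by linarith)
            linarith
          · intro q hq
            have h2 : (2:ℝ) ≤ q := by exact_mod_cast (mem_pr.1 hq).1.two_le
            have h3 : (1/3)/((q:ℝ)-4/3) ≤ (1/3) * (1/q) + (4/3) * (1/(q:ℝ)^2) := by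
              rw [div_le_iff₀ (by linarith)]
              have : (q:ℝ) ≠ 0 := by positivity
              have e2 : ((1/3) * (1/(q:ℝ)) + (4/3) * (1/(q:ℝ)^2)) * ((q:ℝ)-4/3) = 1/3 + (8/9) * ((q:ℝ) - 2) / (q:ℝ)^2 := by
                field_simp; ring
              rw [e2]
              have : 0 ≤ (8/9) * ((q:ℝ) - 2) / (q:ℝ)^2 := by
                apply div_nonneg _ (by positivity); linarith
              linarith
            have := Real.add_one_le_exp ((1/3) * (1/(q:ℝ)) + (4/3) * (1/(q:ℝ)^2))
            linarith
      _ = exp ((1/3) * ∑ q ∈ pr (Z j), (1:ℝ)/q + (4/3) * ∑ q ∈ pr (Z j), (1:ℝ)/(q:ℝ)^2) := by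
          rw [← Real.exp_sum, Finset.sum_add_distrib, Finset.mul_sum, Finset.mul_sum]
      _ ≤ exp ((M/3 + 4/3) + (j * log 2 / 3)) := by
          apply Real.exp_le_exp.2
          linarith [(hM j).2, inv_sq_sum (Z j)]
      _ = _ := by rw [Real.exp_add]
  calc _ ≤ (N:ℝ) * (exp (M/3 + 4/3) * exp (j * log 2 / 3)) := by gcongr
    _ = _ := by ring

/-- `2^{-ω(m)}/m` -/
noncomputable def fw (m : ℕ) : ℝ := (1/2)^(m.primeFactors.card) / m

lemma fw_pow (p n : ℕ) (hp : p.Prime) : fw (p^(n+1)) = (1/2) * ((p:ℝ)⁻¹)^(n+1) := by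
  unfold fw
  rw [Nat.primeFactors_prime_pow (by omega) hp]
  simp [div_eq_mul_inv]

lemma fw_nonneg (m : ℕ) : 0 ≤ fw m := by unfold fw; positivity

lemma fw_summable (p : ℕ) (hp : p.Prime) : Summable (fun n => fw (p^n)) := by
  rw [← summable_nat_add_iff 1]
  simp only [fw_pow p _ hp]
  apply Summable.mul_left
  apply (summable_nat_add_iff 1).2
  apply summable_geometric_of_lt_one (by positivity)
  apply inv_lt_one_of_one_lt₀
  exact_mod_cast hp.one_lt

lemma fw_tsum (p : ℕ) (hp : p.Prime) : ∑' n, fw (p^n) ≤ exp ((1/2) * (1/p) + 1/(p:ℝ)^2) := by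
  have hp2 : (2:ℝ) ≤ p := by exact_mod_cast hp.two_le
  have hlt : (p:ℝ)⁻¹ < 1 := inv_lt_one_of_one_lt₀ (by linarith)
  rw [(fw_summable p hp).tsum_eq_zero_add]
  simp only [fw_pow p _ hp, pow_zero]
  simp only [pow_succ (p:ℝ)⁻¹]
  rw [tsum_mul_left, tsum_mul_right, tsum_geometric_of_lt_one (by positivity) hlt]
  have e : fw 1 = 1 := by simp [fw]
  rw [e]
  have h1 : 1/2 * ((1 - (p:ℝ)⁻¹)⁻¹ * (p:ℝ)⁻¹) ≤ (1/2) * (1/p) + 1/(p:ℝ)^2 := by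
    obtain ⟨t, ht⟩ : ∃ t, t = (p:ℝ) - 1 := ⟨_, rfl⟩
    have ht0 : 0 < t := by linarith
    have hpt : (p:ℝ) = t + 1 := by linarith
    have e1 : 1/2 * ((1 - (p:ℝ)⁻¹)⁻¹ * (p:ℝ)⁻¹) = (1/2) / t := by
      rw [hpt]
      have : (1 - (t+1)⁻¹) = t / (t+1) := by field_simp; ring
      rw [this]; field_simp
    rw [e1, div_le_iff₀ ht0, hpt]
    have e2 : (1 / 2 * (1 / (t + 1)) + 1 / (t + 1) ^ 2) * t = 1/2 + (t-1)/(2*(t+1)^2) := by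
      field_simp; ring
    rw [e2]
    have : 0 ≤ (t-1)/(2*(t+1)^2) := div_nonneg (by linarith) (by positivity)
    linarith
  have := Real.add_one_le_exp ((1/2) * (1/(p:ℝ)) + 1/(p:ℝ)^2)
  linarith

lemma fw_mul {m n : ℕ} (h : m.Coprime n) : fw (m*n) = fw m * fw n := by
  unfold fw
  rw [h.primeFactors_mul, Finset.card_union_of_disjoint h.disjoint_primeFactors, pow_add]
  push_cast
  ring

lemma wt_fw (z m : ℕ) (h1 : 1 ≤ m) (h2 : m < z) : wt z m / m = fw m := by
  unfold fw wt
  congr 1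
  rw [← Finset.prod_filter]
  rw [Finset.prod_const]
  congr 2
  ext q
  rw [Finset.mem_filter, mem_pr, Nat.mem_primeFactors]
  constructor
  · rintro ⟨⟨a, b⟩, c⟩; exact ⟨a, c, by omega⟩
  · rintro ⟨a, b, c⟩; exact ⟨⟨a, (Nat.le_of_dvd h1 b).trans h2.le⟩, b⟩

lemma harmW : ∃ C : ℝ, 0 < C ∧ ∀ j, ∑ m ∈ Finset.Ico 1 (Z j), wt (Z j) m / m ≤ C * exp (j * log 2 / 2) := by
  obtain ⟨M, hM⟩ := mertens_Z
  refine ⟨exp (M/2 + 1), by positivity, ?_⟩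
  intro j
  have hE := EulerProduct.summable_and_hasSum_smoothNumbers_prod_primesBelow_tsum (f := fw) (by simp [fw])
    (fun h => fw_mul h) (fun {p} hp => by
      have := fw_summable p hp
      simpa [abs_of_nonneg (fw_nonneg _)] using this) (Z j)
  have h1 : ∑ m ∈ Finset.Ico 1 (Z j), wt (Z j) m / m ≤ ∏ p ∈ (Z j).primesBelow, ∑' n, fw (p^n) := by
    have hsum : Summable (fun m => Set.indicator (Nat.smoothNumbers (Z j)) fw m) := by
      rw [← summable_subtype_iff_indicator]
      exact hE.2.summable
    rw [← hE.2.tsum_eq, tsum_subtype]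
    calc ∑ m ∈ Finset.Ico 1 (Z j), wt (Z j) m / m = ∑ m ∈ Finset.Ico 1 (Z j), Set.indicator (Nat.smoothNumbers (Z j)) fw m := by
          apply Finset.sum_congr rfl
          intro m hm
          rw [Finset.mem_Ico] at hm
          rw [wt_fw _ m hm.1 hm.2, Set.indicator_of_mem]
          exact Nat.mem_smoothNumbers_of_lt hm.1 hm.2
      _ ≤ _ := by
          apply hsum.sum_le_tsum
          intro i _
          exact Set.indicator_nonneg (fun _ _ => fw_nonneg _) _
  refine h1.trans ?_
  calc ∏ p ∈ (Z j).primesBelow, ∑' n, fw (p^n) ≤ ∏ p ∈ (Z j).primesBelow, exp ((1/2) * (1/p) + 1/(p:ℝ)^2) := by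
        apply Finset.prod_le_prod
        · intro p _; exact tsum_nonneg (fun n => fw_nonneg _)
        · intro p hp; exact fw_tsum p (Nat.prime_of_mem_primesBelow hp)
    _ = exp (∑ p ∈ (Z j).primesBelow, ((1/2) * (1/(p:ℝ)) + 1/(p:ℝ)^2)) := by rw [Real.exp_sum]
    _ ≤ exp (∑ p ∈ pr (Z j), ((1/2) * (1/(p:ℝ)) + 1/(p:ℝ)^2)) := by
        apply Real.exp_le_exp.2
        apply Finset.sum_le_sum_of_subset_of_nonneg
        · intro p hp
          rw [mem_pr]
          exact ⟨Nat.prime_of_mem_primesBelow hp, (Nat.lt_of_mem_primesBelow hp).le⟩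
        · intros; positivity
    _ ≤ exp ((M/2+1) + j * log 2 / 2) := by
        apply Real.exp_le_exp.2
        rw [Finset.sum_add_distrib, ← Finset.mul_sum]
        linarith [(hM j).2, inv_sq_sum (Z j)]
    _ = _ := by rw [Real.exp_add]

end ES

namespace ES

/-- shifted primes in the `j`-th block -/
def SB (j : ℕ) : Finset ℕ := (Finset.range (Z (j+2))).filter (fun a => (a+1).Prime ∧ Z (j+1) < a + 1)

lemma mem_SB {j a : ℕ} : a ∈ SB j ↔ a < Z (j+2) ∧ (a+1).Prime ∧ Z (j+1) < a + 1 := by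
  unfold SB; rw [Finset.mem_filter, Finset.mem_range]

lemma Z_mono {i j : ℕ} (h : i ≤ j) : Z i ≤ Z j :=
  Nat.pow_le_pow_right (by norm_num) (Nat.pow_le_pow_right (by norm_num) h)

lemma exp_log2 (j : ℕ) : ((2^j : ℕ) : ℝ) = exp (j * log 2) := by
  rw [Real.exp_nat_mul, Real.exp_log (by norm_num)]; push_cast; rfl

lemma pSum : ∃ C : ℝ, 0 < C ∧ ∀ j, ∑ a ∈ SB j, wt (Z j) a / a ≤ C * exp (-(j * log 2 / 2)) := by
  obtain ⟨C, hC0, hC⟩ := wt_sum_prime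
  refine ⟨4 * C, by positivity, ?_⟩
  intro j
  have hmaps : ∀ a ∈ SB j, Nat.log 2 a ∈ Finset.Ico (2^(j+1)) (2^(j+2)) := by
    intro a ha
    rw [mem_SB] at ha
    have hZ := Z_pos (j+1)
    rw [Finset.mem_Ico]
    constructor
    · apply Nat.le_log_of_pow_le (by norm_num)
      have : Z (j+1) = 2^2^(j+1) := rfl
      omega
    · apply Nat.log_lt_of_lt_pow (by omega)
      exact ha.1
  rw [← Finset.sum_fiberwise_of_maps_to hmaps]
  have hin : ∀ i ∈ Finset.Ico (2^(j+1)) (2^(j+2)), ∑ a ∈ (SB j).filter (fun a => Nat.log 2 a = i), wt (Z j) a / a ≤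
      2 * C * exp (-(3 * (j * log 2) / 2)) := by
    intro i hi
    rw [Finset.mem_Ico] at hi
    have hX : Z j ≤ 2^(i+1) := by
      unfold Z; apply Nat.pow_le_pow_right (by norm_num)
      have : 2^j ≤ 2^(j+1) := Nat.pow_le_pow_right (by norm_num) (by omega)
      omega
    have h := hC j (2^(i+1)) hX
    calc ∑ a ∈ (SB j).filter (fun a => Nat.log 2 a = i), wt (Z j) a / a
        ≤ ∑ a ∈ (SB j).filter (fun a => Nat.log 2 a = i), wt (Z j) a / (2^i : ℕ) := by
          apply Finset.sum_le_sum
          intro a ha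
          rw [Finset.mem_filter, mem_SB] at ha
          have ha0 : a ≠ 0 := by have := Z_pos (j+1); omega
          have : 2^i ≤ a := by rw [← ha.2]; exact Nat.pow_log_le_self 2 ha0
          apply div_le_div_of_nonneg_left (wt_nonneg _ _) (by positivity)
          exact_mod_cast this
      _ = (∑ a ∈ (SB j).filter (fun a => Nat.log 2 a = i), wt (Z j) a) / (2^i : ℕ) := by
          rw [Finset.sum_div]
      _ ≤ (C * (2^(i+1) : ℕ) * exp (-(3 * (j * log 2) / 2))) / (2^i : ℕ) := by
          apply div_le_div_of_nonneg_right _ (by positivity)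
          refine le_trans ?_ h
          apply Finset.sum_le_sum_of_subset_of_nonneg
          · intro a ha
            rw [Finset.mem_filter, mem_SB] at ha
            have ha0 : a ≠ 0 := by have := Z_pos (j+1); omega
            rw [Finset.mem_filter, Finset.mem_Icc]
            have h1 : a < 2^(i+1) := by
              rw [← ha.2]; exact Nat.lt_pow_succ_log_self (by norm_num) a
            have h2 := Z_mono (show j ≤ j+1 by omega)
            exact ⟨⟨by omega, by omega⟩, ha.1.2.1, lt_of_le_of_lt h2 ha.1.2.2⟩
          · intros; apply wt_nonneg
      _ = _ := by push_cast; rw [pow_succ]; field_simp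
  refine (Finset.sum_le_sum hin).trans ?_
  rw [Finset.sum_const, Nat.card_Ico]
  have e : 2^(j+2) - 2^(j+1) = 2 * 2^j := by
    rw [pow_succ, pow_succ]; omega
  rw [e, nsmul_eq_mul]
  push_cast
  have e2 := exp_log2 j
  push_cast at e2
  rw [e2]
  have e3 : exp (-(j * log 2 / 2)) = exp (j * log 2) * exp (-(3 * (j * log 2) / 2)) := by
    rw [← Real.exp_add]; congr 1; ring
  rw [e3]
  apply le_of_eq; ring

lemma half_Om_le_wt (z a : ℕ) (ha : a ≠ 0) : (1/2:ℝ)^(Om z a) ≤ wt z a := by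
  unfold Om wt
  rw [← Finset.prod_pow_eq_pow_sum]
  apply Finset.prod_le_prod
  · intros; positivity
  · intro q hq
    have hq := (mem_pr.1 hq).1
    split_ifs with h
    · have : 1 ≤ a.factorization q := by
        rw [Nat.one_le_iff_ne_zero]
        exact (hq.factorization_pos_of_dvd ha h).ne'
      calc (1/2:ℝ)^(a.factorization q) ≤ (1/2)^1 := pow_le_pow_of_le_one (by norm_num) (by norm_num) this
        _ = _ := by norm_num
    · exact pow_le_one₀ (by norm_num) (by norm_num)

lemma Om_mul (z a b : ℕ) (ha : a ≠ 0) (hb : b ≠ 0) : Om z (a*b) = Om z a + Om z b := by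
  unfold Om
  rw [← Finset.sum_add_distrib]
  apply Finset.sum_congr rfl
  intro q _
  rw [Nat.factorization_mul ha hb]; rfl

lemma pairs : ∃ C : ℝ, 0 < C ∧ ∀ j (x : ℕ),
    ∑ n ∈ Finset.Icc 1 x, ∑ a ∈ (SB j).filter (fun a => a ∣ n), wt (Z j) a * wt (Z j) (n/a) ≤
      C * x * exp (-(j * log 2)) := by
  obtain ⟨C1, hC1, h1⟩ := wt_sum
  obtain ⟨C2, hC2, h2⟩ := wt_sum_prime
  obtain ⟨C3, hC3, h3⟩ := harmW
  obtain ⟨C4, hC4, h4⟩ := pSum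
  refine ⟨C1 * C4 + C2 * C3, by positivity, ?_⟩
  intro j x
  set E := exp (j * log 2 / 2) with hE
  have hE0 : 0 < E := Real.exp_pos _
  have eE1 : exp (-(j * log 2 / 2)) = E⁻¹ := by rw [Real.exp_neg]
  have eE2 : exp (-(3 * (j * log 2) / 2)) = E⁻¹ * E⁻¹ * E⁻¹ := by
    rw [← eE1, ← Real.exp_add, ← Real.exp_add]; congr 1; ring
  have eE3 : exp (-(j * log 2)) = E⁻¹ * E⁻¹ := by
    rw [← eE1, ← Real.exp_add]; congr 1; ring
  have hpos : ∀ a ∈ SB j, 0 < a := by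
    intro a ha; rw [mem_SB] at ha; have := Z_pos (j+1); omega
  have step1 : ∑ n ∈ Finset.Icc 1 x, ∑ a ∈ (SB j).filter (fun a => a ∣ n), wt (Z j) a * wt (Z j) (n/a) =
      ∑ a ∈ SB j, wt (Z j) a * ∑ m ∈ Finset.Icc 1 (x/a), wt (Z j) m := by
    have e : ∀ n ∈ Finset.Icc 1 x, ∑ a ∈ (SB j).filter (fun a => a ∣ n), wt (Z j) a * wt (Z j) (n/a)
        = ∑ a ∈ SB j, if a ∣ n then wt (Z j) a * wt (Z j) (n/a) else 0 := by
      intro n _; rw [Finset.sum_filter]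
    rw [Finset.sum_congr rfl e, Finset.sum_comm]
    apply Finset.sum_congr rfl
    intro a ha
    rw [← Finset.sum_filter, sum_mult _ a x (hpos a ha), Finset.mul_sum]
    apply Finset.sum_congr rfl
    intro m _
    rw [Nat.mul_div_cancel_left _ (hpos a ha)]
  have step2 : ∀ a ∈ SB j, ∑ m ∈ Finset.Icc 1 (x/a), wt (Z j) m ≤
      C1 * (x/a) * E⁻¹ + ∑ m ∈ (Finset.Ico 1 (Z j)).filter (fun m => a * m ≤ x), wt (Z j) m := by
    intro a ha
    rcases le_or_gt (Z j) (x/a) with h | h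
    · have := h1 j (x/a) h
      rw [eE1] at this
      have h5 : ((x/a:ℕ):ℝ) ≤ x/a := Nat.cast_div_le
      have h6 : 0 ≤ ∑ m ∈ (Finset.Ico 1 (Z j)).filter (fun m => a * m ≤ x), wt (Z j) m :=
        Finset.sum_nonneg (fun _ _ => wt_nonneg _ _)
      have : C1 * ((x/a:ℕ):ℝ) * E⁻¹ ≤ C1 * (x/a) * E⁻¹ := by gcongr
      linarith
    · have h6 : 0 ≤ C1 * (x/a) * E⁻¹ := by positivity
      have : ∑ m ∈ Finset.Icc 1 (x/a), wt (Z j) m ≤ ∑ m ∈ (Finset.Ico 1 (Z j)).filter (fun m => a * m ≤ x), wt (Z j) m := by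
        apply Finset.sum_le_sum_of_subset_of_nonneg
        · intro m hm
          rw [Finset.mem_Icc] at hm
          rw [Finset.mem_filter, Finset.mem_Ico]
          refine ⟨⟨hm.1, by omega⟩, ?_⟩
          rw [mul_comm]; exact (Nat.le_div_iff_mul_le (hpos a ha)).1 hm.2
        · intros; apply wt_nonneg
      linarith
  have step3 : ∑ a ∈ SB j, wt (Z j) a * ∑ m ∈ (Finset.Ico 1 (Z j)).filter (fun m => a * m ≤ x), wt (Z j) m ≤
      C2 * C3 * x * (E⁻¹ * E⁻¹) := by
    have e : ∑ a ∈ SB j, wt (Z j) a * ∑ m ∈ (Finset.Ico 1 (Z j)).filter (fun m => a * m ≤ x), wt (Z j) m =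
        ∑ m ∈ Finset.Ico 1 (Z j), wt (Z j) m * ∑ a ∈ (SB j).filter (fun a => a * m ≤ x), wt (Z j) a := by
      simp only [Finset.sum_filter, Finset.mul_sum]
      rw [Finset.sum_comm]
      apply Finset.sum_congr rfl; intro m _
      apply Finset.sum_congr rfl; intro a _
      split_ifs <;> ring
    rw [e]
    calc _ ≤ ∑ m ∈ Finset.Ico 1 (Z j), wt (Z j) m * (C2 * (x/m) * (E⁻¹ * E⁻¹ * E⁻¹)) := by
          apply Finset.sum_le_sum
          intro m hm
          rw [Finset.mem_Ico] at hm
          apply mul_le_mul_of_nonneg_left _ (wt_nonneg _ _)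
          rcases ((SB j).filter (fun a => a * m ≤ x)).eq_empty_or_nonempty with h | ⟨a, ha⟩
          · rw [h]; simp only [Finset.sum_empty]; positivity
          · rw [Finset.mem_filter] at ha
            have hax : a ≤ x/m := (Nat.le_div_iff_mul_le hm.1).2 ha.2
            have haZ := mem_SB.1 ha.1
            have hZ := Z_mono (show j ≤ j+1 by omega)
            have h5 := h2 j (x/m) (by omega)
            rw [eE2] at h5
            have h6 : ((x/m:ℕ):ℝ) ≤ x/m := Nat.cast_div_le
            have h7 : ∑ a ∈ (SB j).filter (fun a => a * m ≤ x), wt (Z j) a ≤ C2 * ((x/m:ℕ):ℝ) * (E⁻¹ * E⁻¹ * E⁻¹) := by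
              refine le_trans ?_ h5
              apply Finset.sum_le_sum_of_subset_of_nonneg
              · intro b hb
                rw [Finset.mem_filter, mem_SB] at hb
                rw [Finset.mem_filter, Finset.mem_Icc]
                have := (Nat.le_div_iff_mul_le hm.1).2 hb.2
                refine ⟨⟨by have := Z_pos (j+1); omega, this⟩, hb.1.2.1, lt_of_le_of_lt hZ hb.1.2.2⟩
              · intros; apply wt_nonneg
            refine h7.trans ?_
            gcongr
      _ = C2 * x * (E⁻¹ * E⁻¹ * E⁻¹) * ∑ m ∈ Finset.Ico 1 (Z j), wt (Z j) m / m := by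
          rw [Finset.mul_sum]; apply Finset.sum_congr rfl; intros; ring
      _ ≤ C2 * x * (E⁻¹ * E⁻¹ * E⁻¹) * (C3 * E) := by gcongr; exact h3 j
      _ = _ := by field_simp
  rw [step1, eE3]
  calc ∑ a ∈ SB j, wt (Z j) a * ∑ m ∈ Finset.Icc 1 (x/a), wt (Z j) m
      ≤ ∑ a ∈ SB j, wt (Z j) a * (C1 * (x/a) * E⁻¹ + ∑ m ∈ (Finset.Ico 1 (Z j)).filter (fun m => a * m ≤ x), wt (Z j) m) :=
        Finset.sum_le_sum (fun a ha => mul_le_mul_of_nonneg_left (step2 a ha) (wt_nonneg _ _))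
    _ = C1 * x * E⁻¹ * ∑ a ∈ SB j, wt (Z j) a / a + ∑ a ∈ SB j, wt (Z j) a * ∑ m ∈ (Finset.Ico 1 (Z j)).filter (fun m => a * m ≤ x), wt (Z j) m := by
        rw [Finset.mul_sum, ← Finset.sum_add_distrib]
        apply Finset.sum_congr rfl; intros; ring
    _ ≤ C1 * x * E⁻¹ * (C4 * E⁻¹) + C2 * C3 * x * (E⁻¹ * E⁻¹) := by
        apply add_le_add _ step3
        have := h4 j
        rw [eE1] at this
        gcongr
    _ = _ := by ring

lemma log43 : 0 < (9/10) * log (4/3) - log 2 / 3 := by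
  have h : log ((2:ℝ)^10) < log ((4/3:ℝ)^27) := Real.log_lt_log (by norm_num) (by norm_num)
  rw [Real.log_pow, Real.log_pow] at h
  push_cast at h
  linarith

lemma block_bad : ∃ C ρ : ℝ, 0 < C ∧ 0 < ρ ∧ ρ < 1 ∧ ∀ j (x : ℕ),
    (((Finset.Icc 1 x).filter (fun n => ∃ a ∈ SB j, a ∣ n)).card : ℝ) ≤ C * ρ^j * x := by
  obtain ⟨C1, hC1, h1⟩ := momZ
  obtain ⟨C2, hC2, h2⟩ := pairs
  set c : ℝ := min ((9/10) * log (4/3) - log 2 / 3) (log 2 / 10) with hc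
  have hc0 : 0 < c := lt_min log43 (by have := Real.log_pos (show (1:ℝ) < 2 by norm_num); linarith)
  refine ⟨C1 + C2, exp (-c), by positivity, Real.exp_pos _, by rw [Real.exp_lt_one_iff]; linarith, ?_⟩
  intro j x
  have key : ∀ n ∈ Finset.Icc 1 x, (if ∃ a ∈ SB j, a ∣ n then (1:ℝ) else 0) ≤
      exp (-((9/10) * log (4/3) * j)) * (4/3)^(Om (Z j) n) +
      exp ((9/10) * log 2 * j) * ∑ a ∈ (SB j).filter (fun a => a ∣ n), wt (Z j) a * wt (Z j) (n/a) := by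
    intro n hn
    have hn1 : 1 ≤ n := (Finset.mem_Icc.1 hn).1
    have hs : 0 ≤ ∑ a ∈ (SB j).filter (fun a => a ∣ n), wt (Z j) a * wt (Z j) (n/a) :=
      Finset.sum_nonneg (fun a _ => mul_nonneg (wt_nonneg _ _) (wt_nonneg _ _))
    have p1 : 0 ≤ exp (-((9/10) * log (4/3) * j)) * (4/3)^(Om (Z j) n) := by positivity
    have p2 : 0 ≤ exp ((9/10) * log 2 * j) * ∑ a ∈ (SB j).filter (fun a => a ∣ n), wt (Z j) a * wt (Z j) (n/a) := by positivity
    split_ifs with h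
    · obtain ⟨a, ha, han⟩ := h
      rcases le_or_gt ((9/10) * (j:ℝ)) (Om (Z j) n) with hO | hO
      · have : 1 ≤ exp (-((9/10) * log (4/3) * j)) * (4/3)^(Om (Z j) n) := by
          have e : (4/3:ℝ)^(Om (Z j) n) = exp (Om (Z j) n * log (4/3)) := by
            rw [Real.exp_nat_mul, Real.exp_log (by norm_num)]
          rw [e, ← Real.exp_add]
          apply Real.one_le_exp
          have : 0 < log (4/3:ℝ) := Real.log_pos (by norm_num)
          nlinarith
        linarith
      · have : 1 ≤ exp ((9/10) * log 2 * j) * ∑ a ∈ (SB j).filter (fun a => a ∣ n), wt (Z j) a * wt (Z j) (n/a) := by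
          obtain ⟨m, rfl⟩ := han
          have ha0 : 0 < a := Nat.pos_of_mul_pos_right (show 0 < a * m by omega)
          have hm0 : 0 < m := Nat.pos_of_mul_pos_left (show 0 < a * m by omega)
          have hle : (1/2:ℝ)^(Om (Z j) (a*m)) ≤ ∑ b ∈ (SB j).filter (fun b => b ∣ a*m), wt (Z j) b * wt (Z j) (a*m/b) := by
            refine le_trans ?_ (Finset.single_le_sum (f := fun b => wt (Z j) b * wt (Z j) (a*m/b))
              (fun b _ => mul_nonneg (wt_nonneg _ _) (wt_nonneg _ _)) (Finset.mem_filter.2 ⟨ha, dvd_mul_right a m⟩))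
            rw [Nat.mul_div_cancel_left _ ha0, Om_mul _ _ _ ha0.ne' hm0.ne', pow_add]
            exact mul_le_mul (half_Om_le_wt _ _ ha0.ne') (half_Om_le_wt _ _ hm0.ne') (by positivity) (wt_nonneg _ _)
          have e : (1/2:ℝ)^(Om (Z j) (a*m)) = exp (-(Om (Z j) (a*m) * log 2)) := by
            rw [Real.exp_neg, Real.exp_nat_mul, Real.exp_log (by norm_num)]
            rw [one_div, inv_pow]
          calc (1:ℝ) ≤ exp ((9/10) * log 2 * j) * (1/2:ℝ)^(Om (Z j) (a*m)) := by
                rw [e, ← Real.exp_add]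
                apply Real.one_le_exp
                have : 0 < log (2:ℝ) := Real.log_pos (by norm_num)
                nlinarith
            _ ≤ _ := by gcongr
        linarith
    · linarith
  have hcard : (((Finset.Icc 1 x).filter (fun n => ∃ a ∈ SB j, a ∣ n)).card : ℝ) =
      ∑ n ∈ Finset.Icc 1 x, (if ∃ a ∈ SB j, a ∣ n then (1:ℝ) else 0) := by
    rw [← Finset.sum_filter]; simp
  rw [hcard]
  refine (Finset.sum_le_sum key).trans ?_
  rw [Finset.sum_add_distrib, ← Finset.mul_sum, ← Finset.mul_sum]
  have e1 : exp (-c)^j = exp (-(c * j)) := by rw [← Real.exp_nat_mul]; congr 1; ring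
  rw [e1]
  have hj : (0:ℝ) ≤ j := by positivity
  have b1 : exp (-((9/10) * log (4/3) * j)) * exp (j * log 2 / 3) ≤ exp (-(c * j)) := by
    rw [← Real.exp_add]; apply Real.exp_le_exp.2
    have : c ≤ (9/10) * log (4/3) - log 2 / 3 := min_le_left _ _
    nlinarith
  have b2 : exp ((9/10) * log 2 * j) * exp (-(j * log 2)) ≤ exp (-(c * j)) := by
    rw [← Real.exp_add]; apply Real.exp_le_exp.2
    have : c ≤ log 2 / 10 := min_le_right _ _
    nlinarith
  calc _ ≤ exp (-((9/10) * log (4/3) * j)) * (C1 * x * exp (j * log 2 / 3)) +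
        exp ((9/10) * log 2 * j) * (C2 * x * exp (-(j * log 2))) := by
        gcongr
        · exact h1 j x
        · exact h2 j x
    _ = C1 * x * (exp (-((9/10) * log (4/3) * j)) * exp (j * log 2 / 3)) +
        C2 * x * (exp ((9/10) * log 2 * j) * exp (-(j * log 2))) := by ring
    _ ≤ C1 * x * exp (-(c * j)) + C2 * x * exp (-(c * j)) := by gcongr
    _ = _ := by ring

open Classical in
/-- Erdős–Wagstaff: few integers have a large shifted-prime divisor. -/
theorem erdos_wagstaff (ε : ℝ) (hε : 0 < ε) : ∃ y : ℕ, ∀ x : ℕ,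
    (((Finset.Icc 1 x).filter (fun n => ∃ a, y ≤ a ∧ (a+1).Prime ∧ a ∣ n)).card : ℝ) ≤ ε * x := by
  obtain ⟨C, ρ, hC, hρ, hρ1, h⟩ := block_bad
  obtain ⟨J, hJ⟩ : ∃ J : ℕ, C * (ρ^J / (1-ρ)) < ε := by
    have ht : Tendsto (fun J : ℕ => C * (ρ^J / (1-ρ))) atTop (nhds (C * (0/(1-ρ)))) :=
      ((tendsto_pow_atTop_nhds_zero_of_lt_one hρ.le hρ1).div_const _).const_mul _
    simp only [zero_div, mul_zero] at ht
    exact (ht.eventually (gt_mem_nhds hε)).exists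
  refine ⟨Z (J+1), fun x => ?_⟩
  have hsub : (Finset.Icc 1 x).filter (fun n => ∃ a, Z (J+1) ≤ a ∧ (a+1).Prime ∧ a ∣ n) ⊆
      (Finset.range (x+1)).biUnion (fun i => (Finset.Icc 1 x).filter (fun n => ∃ a ∈ SB (J+i), a ∣ n)) := by
    intro n hn
    rw [Finset.mem_filter] at hn
    obtain ⟨hn1, a, ha1, ha2, ha3⟩ := hn
    have hn2 := Finset.mem_Icc.1 hn1
    have hax : a ≤ x := (Nat.le_of_dvd hn2.1 ha3).trans hn2.2
    have hex : ∃ i, a < Z (J+i+2) := by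
      refine ⟨a, ?_⟩
      have h1 : a < 2^a := Nat.lt_two_pow_self
      have h2 : 2^a < 2^(2^a) := Nat.lt_two_pow_self
      have h3 : Z a ≤ Z (J+a+2) := Z_mono (by omega)
      have : Z a = 2^(2^a) := rfl
      omega
    rw [Finset.mem_biUnion]
    refine ⟨Nat.find hex, ?_, ?_⟩
    · rw [Finset.mem_range]
      have : Nat.find hex ≤ a := by
        apply Nat.find_min'
        have h1 : a < 2^a := Nat.lt_two_pow_self
        have h2 : 2^a < 2^(2^a) := Nat.lt_two_pow_self
        have h3 : Z a ≤ Z (J+a+2) := Z_mono (by omega)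
        have : Z a = 2^(2^a) := rfl
        omega
      omega
    · rw [Finset.mem_filter]
      refine ⟨hn1, a, ?_, ha3⟩
      rw [mem_SB]
      refine ⟨Nat.find_spec hex, ha2, ?_⟩
      rcases Nat.eq_zero_or_pos (Nat.find hex) with h0 | h0
      · rw [h0, add_zero]; omega
      · have := Nat.find_min hex (m := Nat.find hex - 1) (by omega)
        rw [show J + (Nat.find hex - 1) + 2 = J + Nat.find hex + 1 by omega] at this
        omega
  calc _ ≤ ((∑ i ∈ Finset.range (x+1), ((Finset.Icc 1 x).filter (fun n => ∃ a ∈ SB (J+i), a ∣ n)).card : ℕ) : ℝ) := by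
        exact_mod_cast (Finset.card_le_card hsub).trans Finset.card_biUnion_le
    _ ≤ ∑ i ∈ Finset.range (x+1), C * ρ^(J+i) * x := by
        push_cast
        exact Finset.sum_le_sum (fun i _ => h (J+i) x)
    _ = C * (ρ^J * ∑ i ∈ Finset.range (x+1), ρ^i) * x := by
        rw [Finset.mul_sum, Finset.mul_sum, Finset.sum_mul]
        apply Finset.sum_congr rfl; intros; rw [pow_add]
    _ ≤ C * (ρ^J / (1-ρ)) * x := by
        have : ∑ i ∈ Finset.range (x+1), ρ^i ≤ 1/(1-ρ) := by
          rw [one_div, ← tsum_geometric_of_lt_one hρ.le hρ1]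
          exact (summable_geometric_of_lt_one hρ.le hρ1).sum_le_tsum _ (fun i _ => by positivity)
        rw [div_eq_mul_one_div]
        gcongr
    _ ≤ _ := by gcongr

end ES

namespace ES

open Classical in
/-- counting function -/
noncomputable def cnt (A : Set ℕ) (x : ℕ) : ℕ := ((Finset.Icc 1 x).filter (fun n => n ∈ A)).card

def HasDens (A : Set ℕ) (δ : ℝ) : Prop := Tendsto (fun x : ℕ => (cnt A x : ℝ) / x) atTop (nhds δ)

lemma cnt_le (A : Set ℕ) (x : ℕ) : cnt A x ≤ x := by
  classical
  unfold cnt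
  refine (Finset.card_filter_le _ _).trans ?_
  simp

lemma cnt_mono_add (A B D : Set ℕ) (x : ℕ) (h : ∀ n, 1 ≤ n → n ∈ A → n ∈ B ∨ n ∈ D) :
    cnt A x ≤ cnt B x + cnt D x := by
  classical
  unfold cnt
  refine le_trans (Finset.card_le_card ?_) (Finset.card_union_le _ _)
  intro n hn
  rw [Finset.mem_filter] at hn
  rw [Finset.mem_union, Finset.mem_filter, Finset.mem_filter]
  rcases h n (Finset.mem_Icc.1 hn.1).1 hn.2 with h | h
  · exact Or.inl ⟨hn.1, h⟩
  · exact Or.inr ⟨hn.1, h⟩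

lemma dens_of_approx (A : Set ℕ) (h : ∀ ε : ℝ, 0 < ε → ∃ (B : Set ℕ) (β : ℝ), HasDens B β ∧
    ∀ x, |(cnt A x : ℝ) - cnt B x| ≤ ε * x) : ∃ δ, HasDens A δ := by
  apply cauchySeq_tendsto_of_complete
  rw [Metric.cauchySeq_iff']
  intro ε hε
  obtain ⟨B, β, hB, hAB⟩ := h (ε/4) (by linarith)
  have hBc := hB.cauchySeq
  rw [Metric.cauchySeq_iff'] at hBc
  obtain ⟨N, hN⟩ := hBc (ε/4) (by linarith)
  obtain ⟨N', hN'⟩ := (Metric.cauchySeq_iff.1 hB.cauchySeq) (ε/4) (by linarith)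
  have hdiv : ∀ x : ℕ, |(cnt A x : ℝ)/x - (cnt B x : ℝ)/x| ≤ ε/4 := by
    intro x
    rcases Nat.eq_zero_or_pos x with h0 | h0
    · subst h0; simp; linarith
    · have hx : (0:ℝ) < x := by exact_mod_cast h0
      rw [← sub_div, abs_div, abs_of_pos hx, div_le_iff₀ hx]
      exact hAB x
  refine ⟨N', fun n hn => ?_⟩
  have h1 := hN' n hn N' le_rfl
  rw [Real.dist_eq] at h1 ⊢
  have h2 := abs_le.1 (hdiv n)
  have h3 := abs_le.1 (hdiv N')
  have h4 := abs_lt.1 h1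
  rw [abs_lt]
  constructor <;> linarith [h2.1, h2.2, h3.1, h3.2, h4.1, h4.2]

lemma dens_periodic (A : Set ℕ) (d : ℕ) (hd : 0 < d) (h : ∀ n, n + d ∈ A ↔ n ∈ A) : ∃ δ, HasDens A δ := by
  classical
  set F : ℕ → ℝ := fun n => if n ∈ A then 1 else 0 with hF
  have hF0 : ∀ n, 0 ≤ F n := by intro n; simp only [hF]; split_ifs <;> norm_num
  have hF1 : ∀ n, F n ≤ 1 := by intro n; simp only [hF]; split_ifs <;> norm_num
  set M := ∑ n ∈ Finset.range d, F n
  refine ⟨M/d, ?_⟩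
  have key : ∀ x : ℕ, |(cnt A x : ℝ) - x * (M/d)| ≤ M + 1 + |M/d| := by
    intro x
    have h1 := range_sum_approx F d hd (fun n => by simp only [hF, h]) hF0 (x+1)
    have h2 : (cnt A x : ℝ) = ∑ n ∈ Finset.range (x+1), F n - F 0 := by
      rw [Finset.sum_range_succ', add_sub_cancel_right]
      unfold cnt
      rw [Finset.card_filter]
      push_cast
      rw [Finset.range_eq_Ico, Finset.sum_Ico_add' F 0 x 1]
      rfl
    rw [h2]
    push_cast at h1
    have h3 := abs_le.1 h1
    have h4 := abs_le.1 (le_refl |M/d|)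
    rw [abs_le]
    have := hF0 0
    have := hF1 0
    constructor <;> linarith [h3.1, h3.2, h4.1, h4.2]
  unfold HasDens
  rw [tendsto_iff_dist_tendsto_zero]
  apply squeeze_zero' (g := fun x : ℕ => (M + 1 + |M/d|) / x)
  · exact Eventually.of_forall (fun _ => dist_nonneg)
  · filter_upwards [eventually_gt_atTop 0] with x hx
    have hx : (0:ℝ) < x := by exact_mod_cast hx
    rw [Real.dist_eq]
    have : (cnt A x : ℝ)/x - M/d = (cnt A x - x * (M/d))/x := by field_simp
    rw [this, abs_div, abs_of_pos hx]
    gcongr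
    exact key x
  · exact tendsto_const_div_atTop_nhds_zero_nat _

lemma dens_real (A : Set ℕ) (δ : ℝ) (h : HasDens A δ) :
    Tendsto (fun x : ℝ => (cnt A ⌊x⌋₊ : ℝ) / x) atTop (nhds δ) := by
  have h1 : Tendsto (fun x : ℝ => (cnt A ⌊x⌋₊ : ℝ) / ⌊x⌋₊ * (⌊x⌋₊ / x)) atTop (nhds (δ * 1)) :=
    (h.comp tendsto_nat_floor_atTop).mul tendsto_nat_floor_div_atTop
  rw [mul_one] at h1
  apply h1.congr'
  filter_upwards [eventually_ge_atTop 1] with x hx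
  have : (0:ℝ) < ⌊x⌋₊ := by exact_mod_cast Nat.floor_pos.2 hx
  field_simp

/-- integers with a shifted-prime divisor at least `y` -/
def Bad (y : ℕ) : Set ℕ := {n | ∃ a, y ≤ a ∧ (a+1).Prime ∧ a ∣ n}

lemma ew (ε : ℝ) (hε : 0 < ε) : ∃ y : ℕ, ∀ x : ℕ, (cnt (Bad y) x : ℝ) ≤ ε * x := erdos_wagstaff ε hε

lemma ew' (n₀ : ℕ) (h₀ : 0 < n₀) (ε : ℝ) (hε : 0 < ε) : ∃ y : ℕ, ∀ x : ℕ, (cnt {m | n₀ * m ∈ Bad y} x : ℝ) ≤ ε * x := by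
  have hn : (0:ℝ) < n₀ := by exact_mod_cast h₀
  obtain ⟨y, hy⟩ := ew (ε/n₀) (by positivity)
  refine ⟨y, fun x => ?_⟩
  have h1 : cnt {m | n₀ * m ∈ Bad y} x ≤ cnt (Bad y) (n₀ * x) := by
    unfold cnt
    apply Finset.card_le_card_of_injOn (fun m => n₀ * m)
    · intro m hm
      simp only [Finset.coe_filter, Finset.mem_Icc, Set.mem_ofPred_eq] at hm ⊢
      exact ⟨⟨Nat.mul_pos h₀ hm.1.1, Nat.mul_le_mul_left _ hm.1.2⟩, hm.2⟩
    · intro a _ b _ hab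
      exact Nat.eq_of_mul_eq_mul_left h₀ hab
  calc (cnt {m | n₀ * m ∈ Bad y} x : ℝ) ≤ cnt (Bad y) (n₀ * x) := by exact_mod_cast h1
    _ ≤ ε/n₀ * ((n₀ * x : ℕ):ℝ) := hy _
    _ = ε * x := by push_cast; field_simp

def Lset (k : ℕ) : Set ℕ := {n | omegaStar n = k}

lemma dvd_add_fact (a y n : ℕ) (ha : 0 < a) (hay : a < y) : a ∣ n + y.factorial ↔ a ∣ n :=
  (Nat.dvd_add_left (Nat.dvd_factorial ha hay.le))

lemma Lset_dens (k : ℕ) : ∃ δ, HasDens (Lset k) δ := by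
  apply dens_of_approx
  intro ε hε
  obtain ⟨y, hy⟩ := ew ε hε
  set B : Set ℕ := {n | ((Finset.range y).filter (fun a => (a+1).Prime ∧ a ∣ n)).card = k} with hB
  obtain ⟨β, hβ⟩ := dens_periodic B y.factorial (Nat.factorial_pos _) (by
    intro n
    simp only [hB, Set.mem_ofPred_eq]
    have : (Finset.range y).filter (fun a => (a+1).Prime ∧ a ∣ n + y.factorial) =
        (Finset.range y).filter (fun a => (a+1).Prime ∧ a ∣ n) := by
      apply Finset.filter_congr
      intro a ha
      rw [Finset.mem_range] at ha
      apply and_congr_right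
      intro hp
      apply dvd_add_fact a y n _ ha
      rcases Nat.eq_zero_or_pos a with h | h
      · subst h; norm_num at hp
      · exact h
    rw [this])
  refine ⟨B, β, hβ, fun x => ?_⟩
  have heq : ∀ n, 1 ≤ n → n ∉ Bad y → (n ∈ Lset k ↔ n ∈ B) := by
    intro n hn hnb
    simp only [Lset, hB, Set.mem_ofPred_eq, omegaStar]
    have : n.divisors.filter (fun d => Nat.Prime (d + 1)) = (Finset.range y).filter (fun a => (a+1).Prime ∧ a ∣ n) := by
      ext a
      rw [Finset.mem_filter, Finset.mem_filter, Nat.mem_divisors, Finset.mem_range]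
      constructor
      · rintro ⟨⟨h1, h2⟩, h3⟩
        refine ⟨?_, h3, h1⟩
        by_contra h4
        exact hnb ⟨a, by omega, h3, h1⟩
      · rintro ⟨h1, h2, h3⟩
        exact ⟨⟨h3, by omega⟩, h2⟩
    rw [this]
  have h1 := cnt_mono_add (Lset k) B (Bad y) x (by
    intro n hn h
    by_cases hb : n ∈ Bad y
    · exact Or.inr hb
    · exact Or.inl ((heq n hn hb).1 h))
  have h2 := cnt_mono_add B (Lset k) (Bad y) x (by
    intro n hn h
    by_cases hb : n ∈ Bad y
    · exact Or.inr hb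
    · exact Or.inl ((heq n hn hb).2 h))
  have h1' : (cnt (Lset k) x : ℝ) ≤ cnt B x + cnt (Bad y) x := by exact_mod_cast h1
  have h2' : (cnt B x : ℝ) ≤ cnt (Lset k) x + cnt (Bad y) x := by exact_mod_cast h2
  have := hy x
  rw [abs_le]; constructor <;> linarith

/-- `m` such that `n₀ m` has no new shifted-prime divisor that is at least `y`. -/
def Es (n₀ y : ℕ) : Set ℕ := {m | ∀ a, y ≤ a → (a+1).Prime → a ∣ n₀ * m → a ∣ n₀}

lemma Es_dens (n₀ : ℕ) (h₀ : 0 < n₀) (y : ℕ) : ∃ δ, HasDens (Es n₀ y) δ := by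
  apply dens_of_approx
  intro ε hε
  obtain ⟨w, hw⟩ := ew' n₀ h₀ ε hε
  set B : Set ℕ := {m | ∀ a, a < w → y ≤ a → (a+1).Prime → a ∣ n₀ * m → a ∣ n₀} with hB
  obtain ⟨β, hβ⟩ := dens_periodic B w.factorial (Nat.factorial_pos _) (by
    intro n
    simp only [hB, Set.mem_ofPred_eq]
    apply forall_congr'; intro a
    apply imp_congr_right; intro ha
    apply imp_congr_right; intro _
    apply imp_congr_right; intro hp
    have ha0 : 0 < a := by
      rcases Nat.eq_zero_or_pos a with h | h
      · subst h; norm_num at hp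
      · exact h
    rw [mul_add, Nat.dvd_add_left (Dvd.dvd.mul_left (Nat.dvd_factorial ha0 ha.le) _)])
  refine ⟨B, β, hβ, fun x => ?_⟩
  have h1 := cnt_mono_add (Es n₀ y) B {m | n₀ * m ∈ Bad w} x (by
    intro n _ h
    exact Or.inl (fun a _ h2 h3 h4 => h a h2 h3 h4))
  have h2 := cnt_mono_add B (Es n₀ y) {m | n₀ * m ∈ Bad w} x (by
    intro n _ h
    by_cases hb : n₀ * n ∈ Bad w
    · exact Or.inr hb
    · refine Or.inl (fun a h2 h3 h4 => h a ?_ h2 h3 h4)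
      by_contra h5
      exact hb ⟨a, by omega, h3, h4⟩)
  have h1' : (cnt (Es n₀ y) x : ℝ) ≤ cnt B x + cnt {m | n₀ * m ∈ Bad w} x := by exact_mod_cast h1
  have h2' : (cnt B x : ℝ) ≤ cnt (Es n₀ y) x + cnt {m | n₀ * m ∈ Bad w} x := by exact_mod_cast h2
  have := hw x
  rw [abs_le]; constructor <;> linarith

lemma cnt_univ (x : ℕ) : cnt Set.univ x = x := by
  unfold cnt; simp

lemma Es_large (n₀ : ℕ) (h₀ : 0 < n₀) : ∃ y, ∃ δ, 0 < δ ∧ HasDens (Es n₀ y) δ := by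
  obtain ⟨y, hy⟩ := ew' n₀ h₀ (1/2) (by norm_num)
  obtain ⟨δ, hδ⟩ := Es_dens n₀ h₀ y
  refine ⟨y, δ, ?_, hδ⟩
  have : 1/2 ≤ δ := by
    apply ge_of_tendsto hδ
    filter_upwards [eventually_gt_atTop 0] with x hx
    have hx : (0:ℝ) < x := by exact_mod_cast hx
    rw [le_div_iff₀ hx]
    have h1 := cnt_mono_add Set.univ (Es n₀ y) {m | n₀ * m ∈ Bad y} x (by
      intro n _ _
      by_cases hb : n₀ * n ∈ Bad y
      · exact Or.inr hb
      · refine Or.inl (fun a h2 h3 h4 => ?_)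
        exact absurd ⟨a, h2, h3, h4⟩ hb)
    rw [cnt_univ] at h1
    have h1' : (x:ℝ) ≤ cnt (Es n₀ y) x + cnt {m | n₀ * m ∈ Bad y} x := by exact_mod_cast h1
    linarith [hy x]
  linarith

lemma Es_step (n₀ : ℕ) (h₀ : 0 < n₀) (y : ℕ) (h : ∃ δ, 0 < δ ∧ HasDens (Es n₀ (y+1)) δ) :
    ∃ δ, 0 < δ ∧ HasDens (Es n₀ y) δ := by
  obtain ⟨δ, hδ0, hδ⟩ := h
  by_cases hy : (y+1).Prime ∧ ¬ y ∣ n₀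
  · obtain ⟨δδ, hδδ⟩ := Es_dens n₀ h₀ y
    refine ⟨δδ, ?_, hδδ⟩
    have hy0 : 0 < y := by
      rcases Nat.eq_zero_or_pos y with h | h
      · subst h; exact absurd hy.1 (by norm_num)
      · exact h
    set b := y / Nat.gcd y n₀ with hb
    have hgpos : 0 < Nat.gcd y n₀ := Nat.gcd_pos_of_pos_left _ hy0
    have hb0 : 0 < b := Nat.div_pos (Nat.gcd_le_left _ hy0) hgpos
    have hb1 : 1 < b := by
      rcases Nat.lt_or_ge 1 b with h | h
      · exact h
      · exfalso
        have hb1 : b = 1 := by omega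
        have := Nat.div_mul_cancel (Nat.gcd_dvd_left y n₀)
        rw [← hb, hb1, one_mul] at this
        exact hy.2 (this ▸ Nat.gcd_dvd_right y n₀)
    have hbm : ∀ m, y ∣ n₀ * m → b ∣ m := by
      intro m hm
      have hcop : Nat.Coprime b (n₀ / Nat.gcd y n₀) := Nat.coprime_div_gcd_div_gcd hgpos
      apply hcop.dvd_of_dvd_mul_left
      apply Nat.dvd_of_mul_dvd_mul_right hgpos
      rw [hb, Nat.div_mul_cancel (Nat.gcd_dvd_left y n₀), mul_right_comm, Nat.div_mul_cancel (Nat.gcd_dvd_right y n₀)]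
      exact hm
    have hcount : ∀ t : ℕ, cnt (Es n₀ (y+1)) (b*t) ≤ cnt (Es n₀ y) (b*t) + cnt (Es n₀ (y+1)) t := by
      intro t
      have h1 := cnt_mono_add (Es n₀ (y+1)) (Es n₀ y) {m | b ∣ m ∧ m ∈ Es n₀ (y+1)} (b*t) (by
        intro n _ hn
        by_cases hbn : b ∣ n
        · exact Or.inr ⟨hbn, hn⟩
        · refine Or.inl (fun a h2 h3 h4 => ?_)
          rcases Nat.lt_or_ge y a with h5 | h5
          · exact hn a (by omega) h3 h4
          · have : a = y := by omega
            subst this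
            exact absurd (hbm n h4) hbn)
      refine h1.trans (Nat.add_le_add_left ?_ _)
      unfold cnt
      apply Finset.card_le_card_of_injOn (fun m => m / b)
      · intro m hm
        simp only [Finset.coe_filter, Finset.mem_Icc, Set.mem_ofPred_eq] at hm ⊢
        obtain ⟨⟨h2, h3⟩, ⟨c, rfl⟩, h5⟩ := hm
        rw [Nat.mul_div_cancel_left _ hb0]
        refine ⟨⟨Nat.pos_of_mul_pos_left h2, Nat.le_of_mul_le_mul_left h3 hb0⟩, ?_⟩
        intro a h6 h7 h8
        exact h5 a h6 h7 (h8.trans (Nat.mul_dvd_mul_left _ (dvd_mul_left _ _)))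
      · intro m hm m' hm' hmm
        simp only [Finset.coe_filter, Finset.mem_Icc, Set.mem_ofPred_eq] at hm hm' hmm
        rw [← Nat.div_mul_cancel hm.2.1, ← Nat.div_mul_cancel hm'.2.1, hmm]
    have hbt : Tendsto (fun t : ℕ => b * t) atTop atTop :=
      tendsto_id.const_mul_atTop' hb0
    have l1 := hδ.comp hbt
    have l2 := hδδ.comp hbt
    have hbR : (1:ℝ) < b := by exact_mod_cast hb1
    have l3 : Tendsto (fun t : ℕ => (cnt (Es n₀ (y+1)) t : ℝ) / t / b) atTop (nhds (δ / b)) := hδ.div_const _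
    have hle : δ ≤ δδ + δ / b := by
      apply le_of_tendsto_of_tendsto l1 (l2.add l3)
      filter_upwards [eventually_gt_atTop 0] with t ht
      have ht : (0:ℝ) < t := by exact_mod_cast ht
      simp only [Function.comp]
      have : (cnt (Es n₀ (y+1)) (b*t) : ℝ) ≤ cnt (Es n₀ y) (b*t) + cnt (Es n₀ (y+1)) t := by exact_mod_cast hcount t
      push_cast
      rw [div_div, mul_comm (t:ℝ) b, ← add_div]
      gcongr
    have : δ / b < δ := div_lt_self hδ0 hbR
    linarith
  · refine ⟨δ, hδ0, ?_⟩
    have : Es n₀ y = Es n₀ (y+1) := by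
      ext m
      simp only [Es, Set.mem_ofPred_eq]
      constructor
      · intro h a ha
        exact h a (by omega)
      · intro h a ha hp hd
        rcases Nat.lt_or_ge y a with h5 | h5
        · exact h a (by omega) hp hd
        · have : a = y := by omega
          subst this
          by_contra h6
          exact hy ⟨hp, h6⟩
    rw [this]; exact hδ

lemma Es_zero (n₀ : ℕ) (h₀ : 0 < n₀) : ∃ δ, 0 < δ ∧ HasDens (Es n₀ 0) δ := by
  obtain ⟨y, hy⟩ := Es_large n₀ h₀
  induction y with
  | zero => exact hy
  | succ y ih => exact ih (Es_step n₀ h₀ y hy)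

lemma omegaStar_congr (n n' : ℕ) (hn : 0 < n) (hn' : 0 < n') (h : ∀ a, (a+1).Prime → (a ∣ n ↔ a ∣ n')) :
    omegaStar n = omegaStar n' := by
  unfold omegaStar
  congr 1
  ext a
  rw [Finset.mem_filter, Finset.mem_filter, Nat.mem_divisors, Nat.mem_divisors]
  constructor
  · rintro ⟨⟨h1, h2⟩, h3⟩; exact ⟨⟨(h a h3).1 h1, hn'.ne'⟩, h3⟩
  · rintro ⟨⟨h1, h2⟩, h3⟩; exact ⟨⟨(h a h3).2 h1, hn.ne'⟩, h3⟩

theorem density_of_exists (k n₀ : ℕ) (h₀ : 0 < n₀) (hk : omegaStar n₀ = k) :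
    ∃ δ : ℝ, δ > 0 ∧ Tendsto (fun x : ℝ =>
    (((Finset.Icc 1 ⌊x⌋₊).filter (fun n => omegaStar n = k)).card : ℝ) / x) atTop (nhds δ) := by
  obtain ⟨δ, hδ⟩ := Lset_dens k
  obtain ⟨δδ, hδδ0, hδδ⟩ := Es_zero n₀ h₀
  have hn : (0:ℝ) < n₀ := by exact_mod_cast h₀
  refine ⟨δ, ?_, ?_⟩
  · have hcount : ∀ t, cnt (Es n₀ 0) t ≤ cnt (Lset k) (n₀ * t) := by
      intro t
      unfold cnt
      apply Finset.card_le_card_of_injOn (fun m => n₀ * m)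
      · intro m hm
        simp only [Finset.coe_filter, Finset.mem_Icc, Set.mem_ofPred_eq] at hm ⊢
        refine ⟨⟨Nat.mul_pos h₀ hm.1.1, Nat.mul_le_mul_left _ hm.1.2⟩, ?_⟩
        show omegaStar (n₀ * m) = k
        rw [← hk]
        apply omegaStar_congr _ _ (Nat.mul_pos h₀ hm.1.1) h₀
        intro a ha
        exact ⟨fun h => hm.2 a (Nat.zero_le _) ha h, fun h => h.mul_right _⟩
      · intro a _ b _ hab
        exact Nat.eq_of_mul_eq_mul_left h₀ hab
    have hbt : Tendsto (fun t : ℕ => n₀ * t) atTop atTop := tendsto_id.const_mul_atTop' h₀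
    have l1 := hδ.comp hbt
    have l3 : Tendsto (fun t : ℕ => (cnt (Es n₀ 0) t : ℝ) / t / n₀) atTop (nhds (δδ / n₀)) := hδδ.div_const _
    have hle : δδ / n₀ ≤ δ := by
      apply le_of_tendsto_of_tendsto l3 l1
      filter_upwards [eventually_gt_atTop 0] with t ht
      have ht : (0:ℝ) < t := by exact_mod_cast ht
      simp only [Function.comp]
      push_cast
      rw [div_div, mul_comm (t:ℝ) n₀]
      gcongr
      exact_mod_cast hcount t
    have : 0 < δδ / n₀ := by positivity
    linarith
  · have := dens_real (Lset k) δ hδ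
    refine this.congr ?_
    intro x
    have e : cnt (Lset k) ⌊x⌋₊ = ((Finset.Icc 1 ⌊x⌋₊).filter (fun n => omegaStar n = k)).card := by
      classical
      unfold cnt
      congr 1
      ext n
      rw [Finset.mem_filter, Finset.mem_filter]
      rfl
    rw [e]

end ES

namespace ES

noncomputable def eE (n : ℕ) : ℝ := exp (∑ q ∈ n.primeFactors, (1:ℝ)/q)

lemma eE_pos (n : ℕ) : 0 < eE n := Real.exp_pos _

lemma eE_mul_le (a b : ℕ) (ha : a ≠ 0) (hb : b ≠ 0) : eE (a*b) ≤ eE a * eE b := by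
  unfold eE
  rw [← Real.exp_add, Nat.primeFactors_mul ha hb]
  apply Real.exp_le_exp.2
  rw [← Finset.sum_union_inter]
  have : 0 ≤ ∑ q ∈ a.primeFactors ∩ b.primeFactors, (1:ℝ)/q := Finset.sum_nonneg (fun _ _ => by positivity)
  linarith

lemma eE_totient (n : ℕ) : eE n * n.totient ≤ n := by
  have h := Nat.totient_eq_mul_prod_factors n
  have h' : (n.totient : ℝ) = n * ∏ p ∈ n.primeFactors, (1 - (p:ℝ)⁻¹) := by
    have := congrArg (fun q : ℚ => (q:ℝ)) h
    push_cast at this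
    exact this
  rw [h']
  have h1 : ∏ p ∈ n.primeFactors, (1 - (p:ℝ)⁻¹) ≤ exp (- ∑ q ∈ n.primeFactors, (1:ℝ)/q) := by
    rw [← Finset.sum_neg_distrib, Real.exp_sum]
    apply Finset.prod_le_prod
    · intro p hp
      have : (1:ℝ) ≤ p := by exact_mod_cast (Nat.prime_of_mem_primeFactors hp).one_le
      have := inv_le_one_of_one_le₀ this
      linarith
    · intro p _
      have := Real.add_one_le_exp (-((1:ℝ)/p))
      rw [one_div] at this
      rw [one_div]; linarith
  have h2 : eE n * exp (- ∑ q ∈ n.primeFactors, (1:ℝ)/q) = 1 := by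
    unfold eE; rw [← Real.exp_add]; simp
  calc eE n * (n * ∏ p ∈ n.primeFactors, (1 - (p:ℝ)⁻¹)) ≤ eE n * (n * exp (- ∑ q ∈ n.primeFactors, (1:ℝ)/q)) := by
        have := eE_pos n
        gcongr
    _ = n * (eE n * exp (- ∑ q ∈ n.primeFactors, (1:ℝ)/q)) := by ring
    _ = n := by rw [h2, mul_one]

lemma card_primeFactors_le (n : ℕ) (hn : n ≠ 0) : n.primeFactors.card ≤ Nat.log 2 n := by
  apply Nat.le_log_of_pow_le (by norm_num)
  calc 2^n.primeFactors.card = ∏ p ∈ n.primeFactors, 2 := by simp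
    _ ≤ ∏ p ∈ n.primeFactors, p := Finset.prod_le_prod' (fun p hp => (Nat.prime_of_mem_primeFactors hp).two_le)
    _ ≤ n := Nat.le_of_dvd (Nat.pos_of_ne_zero hn) (Nat.prod_primeFactors_dvd n)

lemma eE_bound : ∃ C : ℝ, 0 < C ∧ ∀ n : ℕ, n ≠ 0 → eE n ≤ C * ((Nat.log 2 n + 1 : ℕ):ℝ)^(1/10:ℝ) := by
  obtain ⟨M, hM⟩ := mertens_upper
  refine ⟨20 * exp (M + 1), by positivity, ?_⟩
  intro n hn
  set L := Nat.log 2 n + 1 with hL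
  have hw2 : 2 ≤ L + 1 := by omega
  have hL0 : (1:ℝ) ≤ L := by exact_mod_cast (by omega : 1 ≤ L)
  have h1 : ∑ q ∈ n.primeFactors, (1:ℝ)/q ≤ ∑ q ∈ pr (L+1), (1:ℝ)/q + 1 := by
    rw [sum_split _ _ (L+1)]
    apply add_le_add
    · apply Finset.sum_le_sum_of_subset_of_nonneg
      · intro q hq
        rw [Finset.mem_filter] at hq
        exact mem_pr.2 ⟨Nat.prime_of_mem_primeFactors hq.1, hq.2⟩
      · intros; positivity
    · calc ∑ q ∈ n.primeFactors.filter (fun q => ¬ q ≤ L + 1), (1:ℝ)/q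
          ≤ ∑ q ∈ n.primeFactors.filter (fun q => ¬ q ≤ L + 1), (1:ℝ)/L := by
            apply Finset.sum_le_sum
            intro q hq
            rw [Finset.mem_filter] at hq
            apply one_div_le_one_div_of_le (by linarith)
            exact_mod_cast (by omega : L ≤ q)
        _ = (n.primeFactors.filter (fun q => ¬ q ≤ L + 1)).card * (1/L) := by simp
        _ ≤ L * (1/L) := by
            gcongr
            have := (Finset.card_filter_le n.primeFactors (fun q => ¬ q ≤ L + 1)).trans (card_primeFactors_le n hn)
            omega
        _ = 1 := by field_simp
  have h2 := hM (L+1) hw2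
  have hlog : 0 < log ((L+1:ℕ):ℝ) := Real.log_pos (by exact_mod_cast (by omega : 1 < L + 1))
  unfold eE
  calc exp (∑ q ∈ n.primeFactors, (1:ℝ)/q) ≤ exp (log (log ((L+1:ℕ):ℝ)) + (M+1)) := by
        apply Real.exp_le_exp.2; linarith
    _ = log ((L+1:ℕ):ℝ) * exp (M+1) := by rw [Real.exp_add, Real.exp_log hlog]
    _ ≤ (20 * (L:ℝ)^(1/10:ℝ)) * exp (M+1) := by
        gcongr
        calc log ((L+1:ℕ):ℝ) ≤ log (2 * L) := by
              apply Real.log_le_log (by positivity); push_cast; linarith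
          _ ≤ (2*L)^(1/10:ℝ) / (1/10) := Real.log_le_rpow_div (by positivity) (by norm_num)
          _ = 10 * (2^(1/10:ℝ) * (L:ℝ)^(1/10:ℝ)) := by
              rw [Real.mul_rpow (by norm_num) (by positivity)]; ring
          _ ≤ 10 * (2^(1:ℝ) * (L:ℝ)^(1/10:ℝ)) := by
              gcongr
              · norm_num
              · norm_num
          _ = _ := by rw [Real.rpow_one]; ring
    _ = _ := by ring

/-- Mertens lower bound avoiding prime divisors of `E`. -/
lemma mertens_avoid (i E : ℕ) (hi : 1 ≤ i) (hE : E ≠ 0) :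
    exp (- ∑ q ∈ (pr (2^i)).filter (fun q => ¬ q ∣ E), (1:ℝ)/q) ≤ 4 / i * eE E := by
  have h2 : 2 ≤ 2^i := by
    calc 2 = 2^1 := by norm_num
      _ ≤ 2^i := Nat.pow_le_pow_right (by norm_num) hi
  have h := mertens_lower (2^i) h2
  have hi0 : (0:ℝ) < i := by exact_mod_cast hi
  have hl2 : 0 < log 2 := Real.log_pos (by norm_num)
  have h1 : ∑ q ∈ pr (2^i), (1:ℝ)/q ≤ ∑ q ∈ (pr (2^i)).filter (fun q => ¬ q ∣ E), (1:ℝ)/q + ∑ q ∈ E.primeFactors, (1:ℝ)/q := by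
    rw [← Finset.sum_filter_add_sum_filter_not (pr (2^i)) (fun q => q ∣ E), add_comm]
    gcongr
    intro q hq
    rw [Finset.mem_filter, mem_pr] at hq
    exact Nat.mem_primeFactors.2 ⟨hq.1.1, hq.2, hE⟩
  have e : log (((2^i:ℕ):ℝ)) = i * log 2 := by push_cast; rw [Real.log_pow]
  rw [e] at h
  unfold eE
  calc exp (- ∑ q ∈ (pr (2^i)).filter (fun q => ¬ q ∣ E), (1:ℝ)/q) ≤
      exp (1 + (-log (i * log 2)) + ∑ q ∈ E.primeFactors, (1:ℝ)/q) := by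
        apply Real.exp_le_exp.2; linarith
    _ = exp 1 / (i * log 2) * exp (∑ q ∈ E.primeFactors, (1:ℝ)/q) := by
        rw [Real.exp_add, Real.exp_add, Real.exp_neg, Real.exp_log (by positivity)]; rfl
    _ ≤ _ := by
        apply mul_le_mul_of_nonneg_right _ (Real.exp_pos _).le
        rw [div_le_div_iff₀ (by positivity) hi0]
        have h3 := Real.exp_one_lt_d9
        have h4 := Real.log_two_gt_d9
        have h5 : exp 1 ≤ 4 * log 2 := by linarith
        nlinarith

/-- Sieve for several forms `c v + 1`. -/
lemma multi (κ : ℕ) : ∃ C : ℝ, 0 < C ∧ ∀ (c : Finset ℕ) (i N E : ℕ), c.card = κ → 1 ≤ i → 2^i ≤ N → E ≠ 0 →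
    (∀ q : ℕ, q.Prime → ¬ q ∣ E → (∀ a ∈ c, ¬ q ∣ a) ∧ (∀ a ∈ c, ∀ b ∈ c, a ≡ b [MOD q] → a = b)) →
    (((Finset.range N).filter (fun v => ∀ a ∈ c, (a * v + 1).Prime ∧ 2^i < a * v + 1)).card : ℝ) ≤
      C * N * (1/i * eE E)^κ := by
  obtain ⟨C, hC0, hC⟩ := sieve κ
  refine ⟨C * 4^κ, by positivity, ?_⟩
  intro c i N E hcard hi hN hE hq
  set P := (pr (2^i)).filter (fun q => ¬ q ∣ E) with hP
  set u : ℕ → ℕ → ℝ := fun q n => if ∃ a ∈ c, q ∣ a * n + 1 then 1 else 0 with hu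
  have hg : ∀ q ∈ P, ∑ v ∈ Finset.range q, u q v = κ := by
    intro q hqP
    rw [hP, Finset.mem_filter, mem_pr] at hqP
    obtain ⟨⟨hqp, _⟩, hqE⟩ := hqP
    obtain ⟨h1, h2⟩ := hq q hqp hqE
    have e : ∀ v, u q v = ∑ a ∈ c, if q ∣ a * v + 1 then (1:ℝ) else 0 := by
      intro v
      simp only [hu]
      split_ifs with h
      · obtain ⟨a, ha, hd⟩ := h
        rw [Finset.sum_eq_single a]
        · simp [hd]
        · intro b hb hba
          rw [if_neg]
          intro hd'
          apply hba
          apply h2 b hb a ha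
          have h3 : b * v + 1 ≡ a * v + 1 [MOD q] :=
            ((Nat.modEq_zero_iff_dvd.2 hd').trans (Nat.modEq_zero_iff_dvd.2 hd).symm)
          have h4 : b * v ≡ a * v [MOD q] := Nat.ModEq.add_right_cancel' 1 h3
          refine Nat.ModEq.cancel_right_of_coprime ?_ h4
          rw [Nat.coprime_iff_gcd_eq_one.symm, Nat.Prime.coprime_iff_not_dvd hqp]
          intro hv
          exact hqp.not_dvd_one ((Nat.dvd_add_right (hv.mul_left a)).1 hd)
        · intro h; exact absurd ha h
      · symm
        apply Finset.sum_eq_zero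
        intro a ha
        rw [if_neg]
        intro hd; exact h ⟨a, ha, hd⟩
    simp only [e]
    rw [Finset.sum_comm, ← hcard]
    rw [Finset.sum_congr rfl (fun a ha => root_sum q a 1 hqp (h1 a ha) 1)]
    simp
  have h := hC N P u
    (fun q hq => by
      rw [hP, Finset.mem_filter, mem_pr] at hq
      exact ⟨hq.1.1, hq.1.2.trans hN⟩)
    (fun q n => by
      simp only [hu]
      have : ∀ a, q ∣ a * (n + q) + 1 ↔ q ∣ a * n + 1 := by
        intro a
        rw [show a * (n+q) + 1 = a * n + 1 + a * q by ring]
        exact Nat.dvd_add_left (dvd_mul_left q a)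
      simp only [this])
    (fun q n => by simp only [hu]; split_ifs <;> norm_num)
    (fun q n => by simp only [hu]; split_ifs <;> norm_num)
    (fun q hq => (hg q hq).le)
  have e1 : ∑ q ∈ P, (∑ a ∈ Finset.range q, u q a) / (q:ℝ) = κ * ∑ q ∈ P, (1:ℝ)/q := by
    rw [Finset.mul_sum]
    apply Finset.sum_congr rfl
    intro q hq; rw [hg q hq]; ring
  rw [e1] at h
  have hme := mertens_avoid i E hi hE
  calc (((Finset.range N).filter (fun v => ∀ a ∈ c, (a * v + 1).Prime ∧ 2^i < a * v + 1)).card : ℝ)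
      = ∑ v ∈ (Finset.range N).filter (fun v => ∀ a ∈ c, (a * v + 1).Prime ∧ 2^i < a * v + 1), (1:ℝ) := by simp
    _ ≤ ∑ v ∈ (Finset.range N).filter (fun v => ∀ a ∈ c, (a * v + 1).Prime ∧ 2^i < a * v + 1), ∏ q ∈ P, (1 - u q v) := by
        apply Finset.sum_le_sum
        intro v hv
        rw [Finset.mem_filter] at hv
        rw [Finset.prod_eq_one]
        intro q hqP
        rw [hP, Finset.mem_filter, mem_pr] at hqP
        simp only [hu]
        rw [if_neg, sub_zero]
        rintro ⟨a, ha, hd⟩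
        have h3 := hv.2 a ha
        have := (Nat.prime_dvd_prime_iff_eq hqP.1.1 h3.1).1 hd
        omega
    _ ≤ ∑ v ∈ Finset.range N, ∏ q ∈ P, (1 - u q v) := by
        apply Finset.sum_le_sum_of_subset_of_nonneg (Finset.filter_subset _ _)
        intros; apply Finset.prod_nonneg; intros
        simp only [hu]; split_ifs <;> norm_num
    _ ≤ C * N * exp (-(κ * ∑ q ∈ P, (1:ℝ)/q)) := h
    _ = C * N * (exp (-∑ q ∈ P, (1:ℝ)/q))^κ := by
        rw [← Real.exp_nat_mul]; congr 2; ring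
    _ ≤ C * N * (4 / i * eE E)^κ := by gcongr
    _ = _ := by
        rw [show (4:ℝ) / i * eE E = 4 * (1/i * eE E) by ring, mul_pow]; ring

/-- Brun–Titchmarsh-type bound. -/
lemma brunT : ∃ C : ℝ, 0 < C ∧ ∀ (c d i N : ℕ), c ≠ 0 → 1 ≤ i → 2^i ≤ N →
    (((Finset.range N).filter (fun k => (c * k + d).Prime ∧ 2^i < c * k + d)).card : ℝ) ≤
      C * N * (1/i * eE c) := by
  obtain ⟨C, hC0, hC⟩ := sieve 1
  refine ⟨C * 4, by positivity, ?_⟩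
  intro c d i N hc hi hN
  set P := (pr (2^i)).filter (fun q => ¬ q ∣ c) with hP
  set u : ℕ → ℕ → ℝ := fun q n => if q ∣ c * n + d then 1 else 0 with hu
  have hg : ∀ q ∈ P, ∑ v ∈ Finset.range q, u q v = 1 := by
    intro q hqP
    rw [hP, Finset.mem_filter, mem_pr] at hqP
    exact root_sum q c d hqP.1.1 hqP.2 1
  have h := hC N P u
    (fun q hq => by
      rw [hP, Finset.mem_filter, mem_pr] at hq
      exact ⟨hq.1.1, hq.1.2.trans hN⟩)
    (fun q n => by
      simp only [hu]
      have : q ∣ c * (n + q) + d ↔ q ∣ c * n + d := by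
        rw [show c * (n+q) + d = c * n + d + c * q by ring]
        exact Nat.dvd_add_left (dvd_mul_left q c)
      simp only [this])
    (fun q n => by simp only [hu]; split_ifs <;> norm_num)
    (fun q n => by simp only [hu]; split_ifs <;> norm_num)
    (fun q hq => by rw [hg q hq]; norm_num)
  have e1 : ∑ q ∈ P, (∑ a ∈ Finset.range q, u q a) / (q:ℝ) = ∑ q ∈ P, (1:ℝ)/q := by
    apply Finset.sum_congr rfl
    intro q hq; rw [hg q hq]
  rw [e1] at h
  have hme := mertens_avoid i c hi hc
  calc (((Finset.range N).filter (fun k => (c * k + d).Prime ∧ 2^i < c * k + d)).card : ℝ)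
      = ∑ v ∈ (Finset.range N).filter (fun k => (c * k + d).Prime ∧ 2^i < c * k + d), (1:ℝ) := by simp
    _ ≤ ∑ v ∈ (Finset.range N).filter (fun k => (c * k + d).Prime ∧ 2^i < c * k + d), ∏ q ∈ P, (1 - u q v) := by
        apply Finset.sum_le_sum
        intro v hv
        rw [Finset.mem_filter] at hv
        rw [Finset.prod_eq_one]
        intro q hqP
        rw [hP, Finset.mem_filter, mem_pr] at hqP
        simp only [hu]
        rw [if_neg, sub_zero]
        intro hd
        have := (Nat.prime_dvd_prime_iff_eq hqP.1.1 hv.2.1).1 hd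
        omega
    _ ≤ ∑ v ∈ Finset.range N, ∏ q ∈ P, (1 - u q v) := by
        apply Finset.sum_le_sum_of_subset_of_nonneg (Finset.filter_subset _ _)
        intros; apply Finset.prod_nonneg; intros
        simp only [hu]; split_ifs <;> norm_num
    _ ≤ C * N * exp (-∑ q ∈ P, (1:ℝ)/q) := h
    _ ≤ C * N * (4 / i * eE c) := by gcongr
    _ = _ := by ring

end ES

namespace ES

/-- number of primes `≡ c` mod `M` in the block `[16^i, 16^(i+1))` -/
def blk (M c i : ℕ) : Finset ℕ :=
  (Finset.Ico (16^i) (16^(i+1))).filter (fun p => p.Prime ∧ p ≡ c [MOD M])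

lemma block_term (M c i : ℕ) (x : ℝ) (hx : 1 < x) :
    ∑ p ∈ blk M c i, log p / (p:ℝ)^x ≤ (blk M c i).card * ((i+1) * log 16) / 16^((i:ℝ)*x) := by
  have h : ∀ p ∈ blk M c i, log p / (p:ℝ)^x ≤ ((i+1) * log 16) / 16^((i:ℝ)*x) := by
    intro p hp
    rw [blk, Finset.mem_filter, Finset.mem_Ico] at hp
    obtain ⟨⟨h1, h2⟩, hp, -⟩ := hp
    have hp0 : (0:ℝ) < p := by exact_mod_cast hp.pos
    have e1 : log p ≤ (i+1) * log 16 := by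
      have : log (p:ℝ) ≤ log ((16:ℝ)^(i+1)) := Real.log_le_log hp0 (by exact_mod_cast h2.le)
      rw [Real.log_pow] at this
      push_cast at this; exact this
    have e2 : (16:ℝ)^((i:ℝ)*x) ≤ (p:ℝ)^x := by
      rw [Real.rpow_mul (by norm_num), Real.rpow_natCast]
      apply Real.rpow_le_rpow (by positivity) (by exact_mod_cast h1) (by linarith)
    have : 0 < log 16 := Real.log_pos (by norm_num)
    gcongr
  calc ∑ p ∈ blk M c i, log p / (p:ℝ)^x ≤ ∑ p ∈ blk M c i, ((i+1) * log 16) / 16^((i:ℝ)*x) := Finset.sum_le_sum h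
    _ = _ := by rw [Finset.sum_const, nsmul_eq_mul]; ring

/-- Dirichlet's theorem with a lower bound of the right order, for infinitely many scales. -/
lemma dirichlet_block (M c : ℕ) (hM : 0 < M) (hc : c.Coprime M) (I : ℕ) :
    ∃ i, I ≤ i ∧ (16:ℝ)^i / (4 * M.totient * (i+1)) ≤ (blk M c i).card := by
  by_contra hcon
  push Not at hcon
  have : NeZero M := ⟨hM.ne'⟩
  have hu : IsUnit (c : ZMod M) := (ZMod.isUnit_iff_coprime c M).2 hc
  obtain ⟨C, hC⟩ := ArithmeticFunction.vonMangoldt.LSeries_residueClass_lower_bound hu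
  have hsm := ArithmeticFunction.vonMangoldt.summable_residueClass_non_primes_div (a := (c : ZMod M))
  set R := ArithmeticFunction.vonMangoldt.residueClass (c : ZMod M) with hR
  have hR0 : ∀ n, 0 ≤ R n := ArithmeticFunction.vonMangoldt.residueClass_nonneg _
  set K1 := ∑' n : ℕ, (if n.Prime then 0 else R n) / (n:ℝ) with hK1
  have hl16 : 0 < log 16 := Real.log_pos (by norm_num)
  have hφ : (0:ℝ) < M.totient := by exact_mod_cast Nat.totient_pos.2 hM
  set K2 := ∑ i ∈ Finset.range I, (blk M c i).card * ((i+1) * log 16) with hK2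
  have main : ∀ x : ℝ, 1 < x → ∑' n, R n / (n:ℝ)^x ≤ K1 + (K2 + log 16 / (4 * M.totient) * (1 - 16^(-(x-1)))⁻¹) := by
    intro x hx
    have hr0 : (0:ℝ) < 16^(-(x-1)) := by positivity
    have hr1 : (16:ℝ)^(-(x-1)) < 1 := Real.rpow_lt_one_of_one_lt_of_neg (by norm_num) (by linarith)
    apply Real.tsum_le_of_sum_range_le
    · intro n; exact div_nonneg (hR0 n) (by positivity)
    intro N
    rw [← Finset.sum_filter_not_add_sum_filter _ (fun n : ℕ => n.Prime)]
    gcongr ?_ + ?_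
    · calc ∑ n ∈ (Finset.range N).filter (fun n => ¬ n.Prime), R n / (n:ℝ)^x 
          ≤ ∑ n ∈ (Finset.range N).filter (fun n => ¬ n.Prime), (if n.Prime then 0 else R n) / (n:ℝ) := by
            apply Finset.sum_le_sum
            intro n hn
            rw [Finset.mem_filter] at hn
            rw [if_neg hn.2]
            rcases Nat.eq_zero_or_pos n with h0 | h0
            · subst h0; simp [hR]
            · have h1 : (1:ℝ) ≤ n := by exact_mod_cast h0
              have : (n:ℝ) ≤ (n:ℝ)^x := by
                conv_lhs => rw [← Real.rpow_one (n:ℝ)]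
                exact Real.rpow_le_rpow_of_exponent_le h1 hx.le
              have := hR0 n
              gcongr
        _ ≤ K1 := by
            apply hsm.sum_le_tsum
            intro n _
            split_ifs
            · simp
            · exact div_nonneg (hR0 n) (by positivity)
    · have hmap : ∀ n ∈ (Finset.range N).filter (fun n => n.Prime), Nat.log 16 n ∈ Finset.range (N) := by
        intro n hn
        rw [Finset.mem_filter, Finset.mem_range] at hn
        rw [Finset.mem_range]
        exact lt_of_le_of_lt (Nat.log_le_self _ _) hn.1
      rw [← Finset.sum_fiberwise_of_maps_to hmap]
      have hfib : ∀ i ∈ Finset.range N, ∑ n ∈ ((Finset.range N).filter (fun n => n.Prime)).filter (fun n => Nat.log 16 n = i), R n / (n:ℝ)^x ≤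
          (blk M c i).card * ((i+1) * log 16) / 16^((i:ℝ)*x) := by
        intro i _
        refine le_trans ?_ (block_term M c i x hx)
        have : ∑ n ∈ ((Finset.range N).filter (fun n => n.Prime)).filter (fun n => Nat.log 16 n = i), R n / (n:ℝ)^x =
          ∑ n ∈ (((Finset.range N).filter (fun n => n.Prime)).filter (fun n => Nat.log 16 n = i)).filter (fun n => n ≡ c [MOD M]), log n / (n:ℝ)^x := by
          rw [Finset.sum_filter (fun n => n ≡ c [MOD M])]
          apply Finset.sum_congr rfl
          intro n hn
          rw [Finset.mem_filter, Finset.mem_filter] at hn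
          have hp := hn.1.2
          simp only [hR, ArithmeticFunction.vonMangoldt.residueClass, Set.indicator_apply, Set.mem_ofPred_eq]
          by_cases hm : n ≡ c [MOD M]
          · rw [if_pos hm, if_pos ((ZMod.natCast_eq_natCast_iff _ _ _).2 hm), ArithmeticFunction.vonMangoldt_apply_prime hp]
          · rw [if_neg hm, if_neg (fun h => hm ((ZMod.natCast_eq_natCast_iff _ _ _).1 h)), zero_div]
        rw [this]
        apply Finset.sum_le_sum_of_subset_of_nonneg
        · intro n hn
          simp only [Finset.mem_filter, Finset.mem_range] at hn
          obtain ⟨⟨⟨_, hp⟩, hl⟩, hm⟩ := hn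
          rw [blk, Finset.mem_filter, Finset.mem_Ico]
          refine ⟨?_, hp, hm⟩
          rw [← hl]
          exact ⟨Nat.pow_log_le_self _ hp.ne_zero, Nat.lt_pow_succ_log_self (by norm_num) _⟩
        · intro n hn _
          apply div_nonneg (Real.log_natCast_nonneg n) (by positivity)
      refine (Finset.sum_le_sum hfib).trans ?_
      have hB : ∀ i ∈ Finset.range N, (blk M c i).card * ((i+1) * log 16) / 16^((i:ℝ)*x) ≤
          (if i < I then (blk M c i).card * ((i+1) * log 16) else 0) + log 16 / (4 * M.totient) * (16^(-(x-1)))^i := by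
        intro i _
        split_ifs with hi
        · have h1 : (1:ℝ) ≤ 16^((i:ℝ)*x) := Real.one_le_rpow (by norm_num) (by positivity)
          have h2 : (0:ℝ) ≤ (blk M c i).card * ((i+1) * log 16) := by positivity
          have h3 : (blk M c i).card * ((i+1) * log 16) / 16^((i:ℝ)*x) ≤ (blk M c i).card * ((i+1) * log 16) := div_le_self h2 h1
          have h4 : 0 ≤ log 16 / (4 * M.totient) * ((16:ℝ)^(-(x-1)))^i := by positivity
          linarith
        · rw [zero_add]
          have h1 := (hcon i (by omega)).le
          calc (blk M c i).card * ((i+1) * log 16) / 16^((i:ℝ)*x) ≤ 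
              ((16:ℝ)^i / (4 * M.totient * (i+1))) * ((i+1) * log 16) / 16^((i:ℝ)*x) := by gcongr
            _ = log 16 / (4 * M.totient) * ((16:ℝ)^i / 16^((i:ℝ)*x)) := by
              have : (i:ℝ)+1 ≠ 0 := by positivity
              field_simp
            _ = _ := by
              congr 1
              rw [← Real.rpow_natCast, ← Real.rpow_natCast, ← Real.rpow_sub (by norm_num), ← Real.rpow_mul (by norm_num)]
              congr 1; ring
      refine (Finset.sum_le_sum hB).trans ?_
      rw [Finset.sum_add_distrib, ← Finset.mul_sum]
      gcongr ?_ + _ * ?_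
      · rw [← Finset.sum_filter, hK2]
        apply Finset.sum_le_sum_of_subset_of_nonneg
        · intro i hi
          rw [Finset.mem_filter] at hi
          exact Finset.mem_range.2 hi.2
        · intros; positivity
      · rw [← tsum_geometric_of_lt_one hr0.le hr1]
        exact (summable_geometric_of_lt_one hr0.le hr1).sum_le_tsum _ (fun i _ => by positivity)
  -- contradiction
  have geo : ∀ δ : ℝ, 0 < δ → δ ≤ 1/3 → log 16 * (1 - 16^(-δ))⁻¹ ≤ 2 / δ := by
    intro δ h0 h1
    have hl3 : log 16 ≤ 3 := by
      rw [show (16:ℝ) = 2^4 by norm_num, Real.log_pow]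
      have := Real.log_two_lt_d9
      push_cast; linarith
    set t := δ * log 16 with ht
    have ht0 : 0 < t := by positivity
    have ht1 : t ≤ 1 := by rw [ht]; nlinarith
    have e : (16:ℝ)^(-δ) = exp (-t) := by
      rw [Real.rpow_def_of_pos (by norm_num), ht]; congr 1; ring
    have : exp (-t) ≤ 1 - t/2 := by
      have h2 := Real.add_one_le_exp t
      rw [Real.exp_neg, inv_le_comm₀ (Real.exp_pos _) (by linarith)]
      refine le_trans ?_ h2
      rw [inv_le_iff_one_le_mul₀ (by linarith)]
      nlinarith
    rw [e]
    have h3 : (1 - exp (-t))⁻¹ ≤ (t/2)⁻¹ := by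
      apply inv_anti₀ (by positivity); linarith
    calc log 16 * (1 - exp (-t))⁻¹ ≤ log 16 * (t/2)⁻¹ := by gcongr
      _ = 2/δ := by rw [ht]; field_simp
  set K := max 1 (C + K1 + K2) with hK
  have hK0 : (1:ℝ) ≤ K := le_max_left _ _
  have hKb : C + K1 + K2 ≤ K := le_max_right _ _
  set δ := 1 / (3 * M.totient * K) with hδ
  have hφ1 : (1:ℝ) ≤ M.totient := by exact_mod_cast Nat.totient_pos.2 hM
  have hδ0 : 0 < δ := by positivity
  have hδ1 : δ ≤ 1/3 := by
    rw [hδ]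
    apply one_div_le_one_div_of_le (by norm_num)
    nlinarith
  have h1 := hC (x := 1 + δ) ⟨by linarith, by linarith⟩
  have h2 := main (1+δ) (by linarith)
  have h3 := geo δ hδ0 hδ1
  rw [add_sub_cancel_left] at h1 h2
  have h4 : log 16 / (4 * M.totient) * (1 - (16:ℝ)^(-δ))⁻¹ ≤ 1 / (2 * M.totient * δ) := by
    calc log 16 / (4 * M.totient) * (1 - (16:ℝ)^(-δ))⁻¹ = 1/(4 * M.totient) * (log 16 * (1 - 16^(-δ))⁻¹) := by ring
      _ ≤ 1/(4 * M.totient) * (2/δ) := by gcongr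
      _ = _ := by field_simp; norm_num
  have h5 : (M.totient:ℝ)⁻¹ / δ = 3 * K := by
    rw [hδ]; field_simp
  have h6 : 1 / (2 * M.totient * δ) = 3/2 * K := by
    rw [hδ]; field_simp
  rw [h5] at h1
  rw [h6] at h4
  linarith

end ES

namespace ES

def Wp (n v : ℕ) : Prop := ∃ g g', g ∣ n ∧ g' ∣ n ∧ g ≠ g' ∧ (g*v+1).Prime ∧ (g'*v+1).Prime

def dst (a b : ℕ) : ℕ := (a - b) + (b - a)

lemma dst_ne (a b : ℕ) (h : a ≠ b) : dst a b ≠ 0 := by unfold dst; omega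

lemma dst_comm (a b : ℕ) : dst a b = dst b a := by unfold dst; omega

lemma dst_le (a b c : ℕ) (h : a ≤ c) (h' : b ≤ c) : dst a b ≤ c := by unfold dst; omega

lemma dvd_dst (q a b : ℕ) (h : a ≡ b [MOD q]) : q ∣ dst a b := by
  unfold dst
  rcases le_total a b with h1 | h1
  · rw [Nat.sub_eq_zero_of_le h1, zero_add]; exact (Nat.modEq_iff_dvd' h1).1 h
  · rw [Nat.sub_eq_zero_of_le h1, add_zero]; exact (Nat.modEq_iff_dvd' h1).1 h.symm

/-- ordered pairs of distinct divisors -/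
def prs (n : ℕ) : Finset (ℕ × ℕ) := (n.divisors ×ˢ n.divisors).filter (fun p => p.1 ≠ p.2)

lemma mem_prs (n : ℕ) (hn : 0 < n) (p : ℕ × ℕ) : p ∈ prs n ↔ p.1 ∣ n ∧ p.2 ∣ n ∧ p.1 ≠ p.2 := by
  simp [prs, hn.ne', and_assoc]

open Classical in
lemma W_count (n : ℕ) (hn : 0 < n) : ∃ C : ℝ, 0 < C ∧ ∀ i N : ℕ, 1 ≤ i → 2^i ≤ N →
    (((Finset.range N).filter (fun v => Wp n v ∧ 2^i < v)).card : ℝ) ≤ C * N / i^2 := by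
  obtain ⟨C0, hC0, hC⟩ := multi 2
  set E : ℕ × ℕ → ℕ := fun p => p.1 * p.2 * dst p.1 p.2 with hE
  set C := 1 + ∑ p ∈ prs n, C0 * (eE (E p))^2 with hCd
  have hS : 0 ≤ ∑ p ∈ prs n, C0 * (eE (E p))^2 := Finset.sum_nonneg (fun p _ => by positivity)
  refine ⟨C, by linarith, ?_⟩
  intro i N hi hN
  have hi0 : (0:ℝ) < i := by exact_mod_cast hi
  have hsub : (Finset.range N).filter (fun v => Wp n v ∧ 2^i < v) ⊆
      (prs n).biUnion (fun p => (Finset.range N).filter (fun v => ∀ a ∈ ({p.1, p.2} : Finset ℕ), (a * v + 1).Prime ∧ 2^i < a * v + 1)) := by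
    intro v hv
    rw [Finset.mem_filter] at hv
    obtain ⟨hvN, ⟨g, g', h1, h2, h3, h4, h5⟩, h6⟩ := hv
    rw [Finset.mem_biUnion]
    refine ⟨(g,g'), (mem_prs n hn _).2 ⟨h1, h2, h3⟩, ?_⟩
    rw [Finset.mem_filter]
    refine ⟨hvN, ?_⟩
    have hg := Nat.pos_of_dvd_of_pos h1 hn
    have hg' := Nat.pos_of_dvd_of_pos h2 hn
    intro a ha
    simp only [Finset.mem_insert, Finset.mem_singleton] at ha
    rcases ha with rfl | rfl
    · exact ⟨h4, by nlinarith⟩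
    · exact ⟨h5, by nlinarith⟩
  calc (((Finset.range N).filter (fun v => Wp n v ∧ 2^i < v)).card : ℝ) ≤
      ∑ p ∈ prs n, (((Finset.range N).filter (fun v => ∀ a ∈ ({p.1, p.2} : Finset ℕ), (a * v + 1).Prime ∧ 2^i < a * v + 1)).card : ℝ) := by
        exact_mod_cast (Finset.card_le_card hsub).trans Finset.card_biUnion_le
    _ ≤ ∑ p ∈ prs n, C0 * N * (1/i * eE (E p))^2 := by
        apply Finset.sum_le_sum
        intro p hp
        obtain ⟨h1, h2, h3⟩ := (mem_prs n hn _).1 hp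
        have hg := Nat.pos_of_dvd_of_pos h1 hn
        have hg' := Nat.pos_of_dvd_of_pos h2 hn
        apply hC _ i N (E p) (Finset.card_pair h3) hi hN
        · simp only [hE]
          exact mul_ne_zero (mul_ne_zero hg.ne' hg'.ne') (dst_ne _ _ h3)
        · intro q hq hqE
          simp only [hE] at hqE
          have ha1 : ¬ q ∣ p.1 := fun h => hqE ((h.mul_right _).mul_right _)
          have ha2 : ¬ q ∣ p.2 := fun h => hqE ((h.mul_left _).mul_right _)
          have ha3 : ¬ q ∣ dst p.1 p.2 := fun h => hqE (h.mul_left _)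
          constructor
          · intro a ha
            simp only [Finset.mem_insert, Finset.mem_singleton] at ha
            rcases ha with rfl | rfl <;> assumption
          · intro a ha b hb hab
            simp only [Finset.mem_insert, Finset.mem_singleton] at ha hb
            rcases ha with rfl | rfl <;> rcases hb with rfl | rfl
            · rfl
            · exact absurd (dvd_dst _ _ _ hab) ha3
            · exact absurd (dvd_dst _ _ _ hab.symm) ha3
            · rfl
    _ = (∑ p ∈ prs n, C0 * (eE (E p))^2) * N / i^2 := by
        rw [Finset.sum_mul, Finset.sum_div]
        apply Finset.sum_congr rfl
        intro p _
        field_simp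
    _ ≤ _ := by
        gcongr
        linarith

open Classical in
lemma W_summable (n : ℕ) (hn : 0 < n) : Summable (fun v : ℕ => if Wp n v then eE v / v else 0) := by
  obtain ⟨C, hC0, hC⟩ := W_count n hn
  obtain ⟨C1, hC10, hC1⟩ := eE_bound
  set f := (fun v : ℕ => if Wp n v then eE v / v else 0) with hf
  have hf0 : ∀ v, 0 ≤ f v := by
    intro v; simp only [hf]; split_ifs
    · exact div_nonneg (eE_pos v).le (by positivity)
    · exact le_rfl
  -- block bound
  have hblk : ∀ j : ℕ, 2 ≤ j → ∀ S : Finset ℕ, (∀ v ∈ S, 2^j ≤ v ∧ v < 2^(j+1)) →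
      ∑ v ∈ S, f v ≤ 18 * C * C1 * (1 / ((j:ℝ)+1)^(3/2:ℝ)) := by
    intro j hj S hS
    have hj0 : (2:ℝ) ≤ j := by exact_mod_cast hj
    have h2j : (0:ℝ) < 2^j := by positivity
    have hcard := hC (j-1) (2^(j+1)) (by omega) (Nat.pow_le_pow_right (by norm_num) (by omega))
    have hcast : ((j-1:ℕ):ℝ) = (j:ℝ) - 1 := by push_cast [Nat.cast_sub (show 1 ≤ j by omega)]; ring
    rw [hcast] at hcard
    have hterm : ∀ v ∈ S.filter (fun v => Wp n v), eE v / v ≤ C1 * ((j:ℝ)+1)^(1/2:ℝ) / 2^j := by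
      intro v hv
      rw [Finset.mem_filter] at hv
      obtain ⟨h1, h2⟩ := hS v hv.1
      have hv0 : 0 < v := lt_of_lt_of_le (by positivity) h1
      have h3 : eE v ≤ C1 * ((j:ℝ)+1)^(1/2:ℝ) := by
        refine (hC1 v hv0.ne').trans ?_
        have h4 : Nat.log 2 v + 1 ≤ j + 1 := by
          have := Nat.log_lt_of_lt_pow hv0.ne' h2
          omega
        have h5 : ((Nat.log 2 v + 1 : ℕ):ℝ) ≤ (j:ℝ)+1 := by exact_mod_cast h4
        gcongr
        calc ((Nat.log 2 v + 1 : ℕ):ℝ)^(1/10:ℝ) ≤ ((j:ℝ)+1)^(1/10:ℝ) := by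
              apply Real.rpow_le_rpow (by positivity) h5 (by norm_num)
          _ ≤ _ := Real.rpow_le_rpow_of_exponent_le (by linarith) (by norm_num)
      have h6 : (2:ℝ)^j ≤ v := by exact_mod_cast h1
      have := (eE_pos v).le
      gcongr
    calc ∑ v ∈ S, f v = ∑ v ∈ S.filter (fun v => Wp n v), eE v / v := by
          simp only [hf]; rw [Finset.sum_filter]
      _ ≤ ∑ v ∈ S.filter (fun v => Wp n v), C1 * ((j:ℝ)+1)^(1/2:ℝ) / 2^j := Finset.sum_le_sum hterm
      _ = (S.filter (fun v => Wp n v)).card * (C1 * ((j:ℝ)+1)^(1/2:ℝ) / 2^j) := by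
          rw [Finset.sum_const, nsmul_eq_mul]
      _ ≤ (C * (2^(j+1):ℕ) / ((j:ℝ)-1)^2) * (C1 * ((j:ℝ)+1)^(1/2:ℝ) / 2^j) := by
          gcongr
          refine le_trans ?_ hcard
          exact_mod_cast Finset.card_le_card (by
            intro v hv
            rw [Finset.mem_filter] at hv ⊢
            obtain ⟨h1, h2⟩ := hS v hv.1
            have : 2^(j-1) < 2^j := Nat.pow_lt_pow_right (by norm_num) (by omega)
            exact ⟨Finset.mem_range.2 h2, hv.2, by omega⟩)
      _ = 2 * C * C1 * (((j:ℝ)+1)^(1/2:ℝ) / ((j:ℝ)-1)^2) := by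
          push_cast; rw [pow_succ]; field_simp
      _ ≤ 2 * C * C1 * (9 * (1 / ((j:ℝ)+1)^(3/2:ℝ))) := by
          gcongr
          have e : ((j:ℝ)+1)^(1/2:ℝ) * ((j:ℝ)+1)^(3/2:ℝ) = ((j:ℝ)+1)^2 := by
            rw [← Real.rpow_add (by linarith), ← Real.rpow_natCast]; norm_num
          have hp : (0:ℝ) < ((j:ℝ)+1)^(3/2:ℝ) := by positivity
          have hm : (0:ℝ) < (j:ℝ) - 1 := by linarith
          rw [mul_one_div, div_le_div_iff₀ (by positivity) hp, e]
          nlinarith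
      _ = _ := by ring
  have hsum : Summable (fun j : ℕ => 1 / ((j:ℝ)+1)^(3/2:ℝ)) := by
    have := (Real.summable_one_div_nat_rpow (p := 3/2)).2 (by norm_num)
    have := (summable_nat_add_iff 1).2 this
    simpa using this
  set T := ∑' j : ℕ, 1 / ((j:ℝ)+1)^(3/2:ℝ) with hT
  apply summable_of_sum_range_le (c := ∑ v ∈ Finset.range 4, f v + 18 * C * C1 * T) hf0
  intro N
  rw [← Finset.sum_filter_add_sum_filter_not _ (fun v => v < 4)]
  gcongr ?_ + ?_
  · apply Finset.sum_le_sum_of_subset_of_nonneg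
    · intro v hv; rw [Finset.mem_filter] at hv; exact Finset.mem_range.2 hv.2
    · intros; apply hf0
  · have hmap : ∀ v ∈ (Finset.range N).filter (fun v => ¬ v < 4), Nat.log 2 v ∈ Finset.range N := by
      intro v hv
      rw [Finset.mem_filter, Finset.mem_range] at hv
      rw [Finset.mem_range]
      exact lt_of_le_of_lt (Nat.log_le_self _ _) hv.1
    rw [← Finset.sum_fiberwise_of_maps_to hmap]
    calc _ ≤ ∑ j ∈ Finset.range N, 18 * C * C1 * (1 / ((j:ℝ)+1)^(3/2:ℝ)) := by
          apply Finset.sum_le_sum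
          intro j _
          rcases lt_or_ge j 2 with hj | hj
          · rw [Finset.sum_eq_zero]
            · positivity
            · intro v hv
              exfalso
              simp only [Finset.mem_filter, Finset.mem_range] at hv
              have h1 : 2 ≤ Nat.log 2 v := Nat.le_log_of_pow_le (by norm_num) (by omega)
              omega
          · apply hblk j hj
            intro v hv
            simp only [Finset.mem_filter, Finset.mem_range] at hv
            rw [← hv.2]
            exact ⟨Nat.pow_log_le_self _ (by omega), Nat.lt_pow_succ_log_self (by norm_num) _⟩
      _ = 18 * C * C1 * ∑ j ∈ Finset.range N, (1 / ((j:ℝ)+1)^(3/2:ℝ)) := by rw [Finset.mul_sum]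
      _ ≤ _ := by
          gcongr
          exact hsum.sum_le_tsum _ (fun i _ => by positivity)

open Classical in
lemma W_tail (n : ℕ) (hn : 0 < n) (ε : ℝ) (hε : 0 < ε) : ∃ Y : ℕ, ∀ S : Finset ℕ,
    (∀ v ∈ S, Wp n v ∧ Y < v) → ∑ v ∈ S, eE v / v ≤ ε := by
  obtain ⟨s, hs⟩ := summable_iff_vanishing_norm.1 (W_summable n hn) ε hε
  refine ⟨s.sup id, ?_⟩
  intro S hS
  have h := hs S (by
    rw [Finset.disjoint_left]
    intro v hv hvs
    have := Finset.le_sup (f := id) hvs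
    have := (hS v hv).2
    simp only [id] at *
    omega)
  have e : ∑ v ∈ S, eE v / v = ∑ v ∈ S, (if Wp n v then eE v / v else 0) := by
    apply Finset.sum_congr rfl
    intro v hv; rw [if_pos (hS v hv).1]
  rw [e]
  exact (le_abs_self _).trans h.le

end ES

namespace ES

open Classical in
lemma B_l (n : ℕ) (hn : 0 < n) : ∃ C : ℝ, 0 < C ∧ ∀ i l : ℕ, 1 ≤ i → n ≤ 2^i → 2 ≤ l → l ≤ 4^(i+2) →
    (((Finset.range (16^(i+1)/l+1)).filter (fun v => Wp n v ∧ 2^i < v ∧ (n*l*v+1).Prime)).card : ℝ) ≤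
      C * (16^i * (1 / l)) * (i:ℝ)^(-(27/10):ℝ) := by
  obtain ⟨C0, hC0, hC⟩ := multi 3
  obtain ⟨C1, hC10, hC1⟩ := eE_bound
  set k := (prs n).card with hk
  refine ⟨(k+1) * (C0 * 32 * (25*C1)^3), by positivity, ?_⟩
  intro i l hi hni hl hl4
  have hi0 : (0:ℝ) < i := by exact_mod_cast hi
  have hi1 : (1:ℝ) ≤ i := by exact_mod_cast hi
  have hl0 : (0:ℝ) < l := by exact_mod_cast (by omega : 0 < l)
  set N := 16^(i+1)/l+1 with hN
  have hN2 : 2^i ≤ N := by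
    have h1 : 4^i ≤ 16^(i+1)/l := by
      rw [Nat.le_div_iff_mul_le (by omega)]
      calc 4^i * l ≤ 4^i * 4^(i+2) := Nat.mul_le_mul_left _ hl4
        _ = 16^(i+1) := by rw [show 16 = 4^2 by norm_num, ← pow_mul, ← pow_add]; congr 1; ring
    have h2 : 2^i ≤ 4^i := Nat.pow_le_pow_left (by norm_num) i
    omega
  have hNle : (N:ℝ) ≤ 32 * (16^i * (1/l)) := by
    have h1 : l ≤ 16^(i+1) := hl4.trans (by
      rw [show 16 = 4^2 by norm_num, ← pow_mul]; exact Nat.pow_le_pow_right (by norm_num) (by omega))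
    have h2 : ((16^(i+1)/l : ℕ):ℝ) ≤ ((16^(i+1):ℕ):ℝ) / l := Nat.cast_div_le
    have h3 : (1:ℝ) ≤ ((16^(i+1):ℕ):ℝ) / l := by
      rw [le_div_iff₀ hl0, one_mul]; exact_mod_cast h1
    rw [hN]; push_cast at *
    calc ((16^(i+1)/l : ℕ):ℝ) + 1 ≤ 16^(i+1)/l + 16^(i+1)/l := by linarith
      _ = _ := by rw [pow_succ]; ring
  set E : ℕ × ℕ → ℕ := fun p => (p.1 * p.2 * (n*l)) * (dst p.1 p.2 * dst p.1 (n*l) * dst p.2 (n*l)) with hE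
  have hsub : (Finset.range N).filter (fun v => Wp n v ∧ 2^i < v ∧ (n*l*v+1).Prime) ⊆
      (prs n).biUnion (fun p => (Finset.range N).filter (fun v => ∀ a ∈ ({p.1, p.2, n*l} : Finset ℕ), (a * v + 1).Prime ∧ 2^i < a * v + 1)) := by
    intro v hv
    rw [Finset.mem_filter] at hv
    obtain ⟨hvN, ⟨g, g', h1, h2, h3, h4, h5⟩, h6, h7⟩ := hv
    rw [Finset.mem_biUnion]
    refine ⟨(g,g'), (mem_prs n hn _).2 ⟨h1, h2, h3⟩, ?_⟩
    rw [Finset.mem_filter]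
    refine ⟨hvN, ?_⟩
    have hg := Nat.pos_of_dvd_of_pos h1 hn
    have hg' := Nat.pos_of_dvd_of_pos h2 hn
    have hnl : 0 < n * l := Nat.mul_pos hn (by omega)
    intro a ha
    simp only [Finset.mem_insert, Finset.mem_singleton] at ha
    rcases ha with rfl | rfl | rfl
    · exact ⟨h4, by nlinarith⟩
    · exact ⟨h5, by nlinarith⟩
    · exact ⟨h7, by nlinarith⟩
  have hone : ∀ p ∈ prs n, (((Finset.range N).filter (fun v => ∀ a ∈ ({p.1, p.2, n*l} : Finset ℕ), (a * v + 1).Prime ∧ 2^i < a * v + 1)).card : ℝ) ≤ C0 * N * (1/i * (25*C1*(i:ℝ)^(1/10:ℝ)))^3 := by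
    intro p hp
    obtain ⟨h1, h2, h3⟩ := (mem_prs n hn _).1 hp
    have hg := Nat.pos_of_dvd_of_pos h1 hn
    have hg' := Nat.pos_of_dvd_of_pos h2 hn
    have hgn := Nat.le_of_dvd hn h1
    have hgn' := Nat.le_of_dvd hn h2
    have hnl : n < n * l := by nlinarith
    have hn1 : p.1 ≠ n*l := by omega
    have hn2 : p.2 ≠ n*l := by omega
    have hE0 : E p ≠ 0 := by
      simp only [hE]
      exact mul_ne_zero (mul_ne_zero (mul_ne_zero hg.ne' hg'.ne') (by omega)) (mul_ne_zero (mul_ne_zero (dst_ne _ _ h3) (dst_ne _ _ hn1)) (dst_ne _ _ hn2))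
    have hEle : E p ≤ 2^(12*i+12) := by
      have hl' : l ≤ 2^(2*i+4) := hl4.trans (by
        rw [show 4 = 2^2 by norm_num, ← pow_mul]; exact Nat.pow_le_pow_right (by norm_num) (by omega))
      have hnl' : n * l ≤ 2^i * 2^(2*i+4) := Nat.mul_le_mul hni hl'
      have e1 : dst p.1 p.2 ≤ 2^i := (dst_le _ _ n hgn hgn').trans hni
      have e2 : dst p.1 (n*l) ≤ 2^i * 2^(2*i+4) := (dst_le _ _ (n*l) (by omega) le_rfl).trans hnl'
      have e3 : dst p.2 (n*l) ≤ 2^i * 2^(2*i+4) := (dst_le _ _ (n*l) (by omega) le_rfl).trans hnl'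
      calc E p ≤ (2^i * 2^i * (2^i * 2^(2*i+4))) * (2^i * (2^i * 2^(2*i+4)) * (2^i * 2^(2*i+4))) := by
            simp only [hE]
            gcongr
            · omega
            · omega
        _ = 2^(12*i+12) := by
            simp only [← pow_add]; congr 1; ring
    have hlog : Nat.log 2 (E p) + 1 ≤ 25 * i := by
      have : Nat.log 2 (E p) ≤ 12*i+12 := by
        calc Nat.log 2 (E p) ≤ Nat.log 2 (2^(12*i+12)) := Nat.log_mono_right hEle
          _ = _ := Nat.log_pow (by norm_num) _
      omega
    have hEe : eE (E p) ≤ 25*C1*(i:ℝ)^(1/10:ℝ) := by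
      calc eE (E p) ≤ C1 * ((Nat.log 2 (E p) + 1:ℕ):ℝ)^(1/10:ℝ) := hC1 _ hE0
        _ ≤ C1 * (25 * (i:ℝ))^(1/10:ℝ) := by
            gcongr
            exact_mod_cast hlog
        _ = C1 * ((25:ℝ)^(1/10:ℝ) * (i:ℝ)^(1/10:ℝ)) := by
            rw [Real.mul_rpow (by norm_num) (by positivity)]
        _ ≤ C1 * ((25:ℝ)^(1:ℝ) * (i:ℝ)^(1/10:ℝ)) := by
            gcongr
            · norm_num
            · norm_num
        _ = _ := by rw [Real.rpow_one]; ring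
    have hcard : ({p.1, p.2, n*l} : Finset ℕ).card = 3 := by
      rw [Finset.card_eq_three]; exact ⟨_, _, _, h3, hn1, hn2, rfl⟩
    refine (hC _ i N (E p) hcard hi hN2 hE0 ?_).trans ?_
    · intro q hq hqE
      simp only [hE] at hqE
      have ha1 : ¬ q ∣ p.1 := fun h => hqE (((h.mul_right _).mul_right _).mul_right _)
      have ha2 : ¬ q ∣ p.2 := fun h => hqE (((h.mul_left _).mul_right _).mul_right _)
      have ha3 : ¬ q ∣ n*l := fun h => hqE ((h.mul_left _).mul_right _)
      have hb1 : ¬ q ∣ dst p.1 p.2 := fun h => hqE (((h.mul_right _).mul_right _).mul_left _)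
      have hb2 : ¬ q ∣ dst p.1 (n*l) := fun h => hqE (((h.mul_left _).mul_right _).mul_left _)
      have hb3 : ¬ q ∣ dst p.2 (n*l) := fun h => hqE ((h.mul_left _).mul_left _)
      constructor
      · intro a ha
        simp only [Finset.mem_insert, Finset.mem_singleton] at ha
        rcases ha with rfl | rfl | rfl <;> assumption
      · intro a ha b hb hab
        have hd := dvd_dst _ _ _ hab
        have hd' := dvd_dst _ _ _ hab.symm
        simp only [Finset.mem_insert, Finset.mem_singleton] at ha hb
        rcases ha with rfl | rfl | rfl <;> rcases hb with rfl | rfl | rfl <;> first | rfl | exact absurd hd (by assumption) | exact absurd hd' (by assumption)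
    · have := (eE_pos (E p)).le
      gcongr
  calc (((Finset.range N).filter (fun v => Wp n v ∧ 2^i < v ∧ (n*l*v+1).Prime)).card : ℝ) ≤
      ∑ p ∈ prs n, (((Finset.range N).filter (fun v => ∀ a ∈ ({p.1, p.2, n*l} : Finset ℕ), (a * v + 1).Prime ∧ 2^i < a * v + 1)).card : ℝ) := by
        exact_mod_cast (Finset.card_le_card hsub).trans Finset.card_biUnion_le
    _ ≤ ∑ p ∈ prs n, C0 * N * (1/i * (25*C1*(i:ℝ)^(1/10:ℝ)))^3 := Finset.sum_le_sum hone
    _ = k * (C0 * N * (1/i * (25*C1*(i:ℝ)^(1/10:ℝ)))^3) := by rw [Finset.sum_const, nsmul_eq_mul]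
    _ ≤ (k+1) * (C0 * (32 * (16^i * (1/l))) * (1/i * (25*C1*(i:ℝ)^(1/10:ℝ)))^3) := by
        gcongr
        linarith
    _ = (k+1) * (C0 * 32 * (25*C1)^3) * (16^i * (1/l)) * (1/i * (i:ℝ)^(1/10:ℝ))^3 := by ring
    _ = _ := by
        congr 1
        rw [one_div, ← Real.rpow_neg_one, ← Real.rpow_add hi0, ← Real.rpow_natCast, ← Real.rpow_mul hi0.le]
        norm_num

lemma harm_le (i : ℕ) (hi : 1 ≤ i) : ∑ l ∈ Finset.Icc (2:ℕ) (4^(i+2)), (1:ℝ)/l ≤ 7 * i := by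
  have hi1 : (1:ℝ) ≤ i := by exact_mod_cast hi
  have h := harmonic_le_one_add_log (4^(i+2))
  rw [harmonic_eq_sum_Icc] at h
  push_cast at h
  rw [Real.log_pow] at h
  have h4 : log 4 ≤ 1.4 := by
    rw [show (4:ℝ) = 2^2 by norm_num, Real.log_pow]
    have := Real.log_two_lt_d9
    push_cast; linarith
  have h5 : ∑ l ∈ Finset.Icc (2:ℕ) (4^(i+2)), (1:ℝ)/l ≤ ∑ l ∈ Finset.Icc (1:ℕ) (4^(i+2)), ((l:ℝ))⁻¹ := by
    simp only [one_div]
    apply Finset.sum_le_sum_of_subset_of_nonneg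
    · exact Finset.Icc_subset_Icc (by norm_num) le_rfl
    · intros; positivity
  push_cast at h
  nlinarith

open Classical in
lemma B_total (n : ℕ) (hn : 0 < n) : ∃ C : ℝ, 0 < C ∧ ∀ i : ℕ, 1 ≤ i → n ≤ 2^i →
    (((Finset.range (16^(i+1))).filter (fun m => 0 < m ∧ (n*m+1).Prime ∧ ∃ v, 4^i < v ∧ v ∣ m ∧ Wp n v)).card : ℝ) ≤
      C * 16^i * (i:ℝ)^(-(17/10):ℝ) := by
  obtain ⟨C, hC0, hC⟩ := B_l n hn
  obtain ⟨C1, hC10, hC1⟩ := W_count n hn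
  refine ⟨16 * C1 + 7 * C, by positivity, ?_⟩
  intro i hi hni
  have hi0 : (0:ℝ) < i := by exact_mod_cast hi
  have hi1 : (1:ℝ) ≤ i := by exact_mod_cast hi
  have h24 : 2^i ≤ 4^i := Nat.pow_le_pow_left (by norm_num) i
  set F : ℕ → Finset ℕ := fun l => (Finset.range (16^(i+1)/l+1)).filter (fun v => Wp n v ∧ 2^i < v ∧ (n*l*v+1).Prime) with hF
  have hsub : (Finset.range (16^(i+1))).filter (fun m => 0 < m ∧ (n*m+1).Prime ∧ ∃ v, 4^i < v ∧ v ∣ m ∧ Wp n v) ⊆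
      (Finset.range (16^(i+1))).filter (fun v => Wp n v ∧ 2^i < v) ∪ (Finset.Icc (2:ℕ) (4^(i+2))).biUnion (fun l => (F l).image (fun v => l * v)) := by
    intro m hm
    rw [Finset.mem_filter, Finset.mem_range] at hm
    obtain ⟨hmX, hm0, hp, v, hv, ⟨l, rfl⟩, hW⟩ := hm
    have hl0 : l ≠ 0 := by rintro rfl; simp at hm0
    rw [Finset.mem_union]
    rcases Nat.lt_or_ge l 2 with h | h
    · left
      have : l = 1 := by omega
      subst this
      rw [mul_one] at *
      rw [Finset.mem_filter, Finset.mem_range]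
      exact ⟨hmX, hW, by omega⟩
    · right
      rw [Finset.mem_biUnion]
      refine ⟨l, ?_, ?_⟩
      · rw [Finset.mem_Icc]
        refine ⟨h, ?_⟩
        by_contra hc
        push Not at hc
        have : 4^i * 4^(i+2) ≤ v * l := Nat.mul_le_mul hv.le hc.le
        have e : 4^i * 4^(i+2) = 16^(i+1) := by rw [show 16 = 4^2 by norm_num, ← pow_mul, ← pow_add]; congr 1; ring
        omega
      · rw [Finset.mem_image]
        refine ⟨v, ?_, by ring⟩
        rw [hF, Finset.mem_filter, Finset.mem_range]
        refine ⟨?_, hW, by omega, ?_⟩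
        · rw [Nat.lt_succ_iff, Nat.le_div_iff_mul_le (by omega)]; exact hmX.le
        · rw [show n * l * v + 1 = n * (v * l) + 1 by ring]; exact hp
  calc (((Finset.range (16^(i+1))).filter (fun m => 0 < m ∧ (n*m+1).Prime ∧ ∃ v, 4^i < v ∧ v ∣ m ∧ Wp n v)).card : ℝ)
      ≤ (((Finset.range (16^(i+1))).filter (fun v => Wp n v ∧ 2^i < v)).card : ℝ) + ∑ l ∈ Finset.Icc (2:ℕ) (4^(i+2)), ((F l).card : ℝ) := by
        have h1 := (Finset.card_le_card hsub).trans (Finset.card_union_le _ _)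
        have h2 : ((Finset.Icc (2:ℕ) (4^(i+2))).biUnion (fun l => (F l).image (fun v => l * v))).card ≤ ∑ l ∈ Finset.Icc (2:ℕ) (4^(i+2)), (F l).card :=
          Finset.card_biUnion_le.trans (Finset.sum_le_sum (fun l _ => Finset.card_image_le))
        exact_mod_cast h1.trans (Nat.add_le_add_left h2 _)
    _ ≤ C1 * (16^(i+1):ℕ) / i^2 + ∑ l ∈ Finset.Icc (2:ℕ) (4^(i+2)), C * (16^i * (1 / l)) * (i:ℝ)^(-(27/10):ℝ) := by
        gcongr with l hl
        · exact hC1 i _ hi (by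
            calc 2^i ≤ 16^i := Nat.pow_le_pow_left (by norm_num) i
              _ ≤ 16^(i+1) := Nat.pow_le_pow_right (by norm_num) (by omega))
        · rw [Finset.mem_Icc] at hl
          exact hC i l hi hni hl.1 hl.2
    _ = 16 * C1 * 16^i * (1 / i^2) + C * 16^i * (i:ℝ)^(-(27/10):ℝ) * ∑ l ∈ Finset.Icc (2:ℕ) (4^(i+2)), (1:ℝ) / l := by
        rw [Finset.mul_sum]
        congr 1
        · push_cast; rw [pow_succ]; ring
        · apply Finset.sum_congr rfl; intros; ring
    _ ≤ 16 * C1 * 16^i * (i:ℝ)^(-(17/10):ℝ) + C * 16^i * (i:ℝ)^(-(27/10):ℝ) * (7 * i) := by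
        gcongr
        · rw [one_div, ← Real.rpow_natCast, ← Real.rpow_neg hi0.le]
          apply Real.rpow_le_rpow_of_exponent_le hi1
          norm_num
        · exact harm_le i hi
    _ = _ := by
        have : (i:ℝ)^(-(17/10):ℝ) = (i:ℝ)^(-(27/10):ℝ) * i := by
          conv_rhs => rw [← Real.rpow_one (i:ℝ), ← Real.rpow_mul hi0.le, ← Real.rpow_add hi0]
          norm_num
        rw [this]; ring

end ES

namespace ES

lemma cls (n Y : ℕ) (hn : 0 < n) (h2 : 2 ∣ n) : ∃ Q c : ℕ, 0 < Q ∧ n ∣ Q ∧ c.Coprime (n*Q) ∧ c ≡ 1 [MOD n] ∧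
    (∀ m, n*m+1 ≡ c [MOD n*Q] → m.Coprime Q) ∧ (∀ v, 1 < v → v.Coprime Q → Y < v) := by
  set P := ∏ q ∈ (pr Y).filter (fun q => ¬ q ∣ n), q with hP
  have hnP : n.Coprime P := by
    rw [hP]
    apply Nat.Coprime.prod_right
    intro q hq
    rw [Finset.mem_filter, mem_pr] at hq
    exact ((Nat.Prime.coprime_iff_not_dvd hq.1.1).2 hq.2).symm
  have hP0 : 0 < P := by
    rw [hP]; apply Finset.prod_pos
    intro q hq
    rw [Finset.mem_filter, mem_pr] at hq
    exact hq.1.1.pos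
  have h2P : Nat.Coprime 2 P := Nat.Coprime.coprime_dvd_left h2 hnP
  obtain ⟨s, hs⟩ : ∃ s, n * s ≡ 1 [MOD P] := by
    rcases Nat.lt_or_ge 1 P with h | h
    · obtain ⟨s, hs⟩ := Nat.exists_mul_mod_eq_one_of_coprime hnP h
      exact ⟨s, by rw [Nat.ModEq, hs.2, Nat.mod_eq_of_lt h]⟩
    · have : P = 1 := by omega
      rw [this]; exact ⟨0, Nat.modEq_one⟩
  obtain ⟨r, hr1, hr2⟩ := Nat.chineseRemainder hnP 1 s
  have hrn : r.Coprime n := by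
    rw [Nat.coprime_iff_gcd_eq_one, hr1.gcd_eq]; simp
  have hnr : n * r ≡ 1 [MOD P] := (hr2.mul_left n).trans hs
  have hrP : r.Coprime P := by
    have : (n*r).Coprime P := by rw [Nat.coprime_iff_gcd_eq_one, hnr.gcd_eq]; simp
    exact this.coprime_mul_left
  have hcn : (n*r+1).Coprime n := by simp
  have hcP : (n*r+1).Coprime P := by
    have : n*r+1 ≡ 2 [MOD P] := hnr.add_right 1
    rw [Nat.coprime_iff_gcd_eq_one, this.gcd_eq]; exact h2P
  refine ⟨n*P, n*r+1, by positivity, dvd_mul_right _ _, ?_, ?_, ?_, ?_⟩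
  · exact Nat.Coprime.mul_right hcn (Nat.Coprime.mul_right hcn hcP)
  · have : n * r ≡ 0 [MOD n] := (Nat.modEq_zero_iff_dvd).2 (dvd_mul_right _ _)
    exact this.add_right 1
  · intro m hm
    have h1 : n * m ≡ n * r [MOD n*(n*P)] := Nat.ModEq.add_right_cancel' 1 hm
    have h3 : m ≡ r [MOD n*P] := Nat.ModEq.mul_left_cancel' hn.ne' h1
    rw [Nat.coprime_iff_gcd_eq_one, h3.gcd_eq]
    exact Nat.Coprime.mul_right hrn hrP
  · intro v hv hc
    by_contra hY
    push Not at hY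
    obtain ⟨q, hq, hqv⟩ := Nat.exists_prime_and_dvd (show v ≠ 1 by omega)
    have hqY : q ≤ Y := (Nat.le_of_dvd (by omega) hqv).trans hY
    have hqQ : q ∣ n*P := by
      by_cases h : q ∣ n
      · exact h.mul_right _
      · apply Dvd.dvd.mul_left
        rw [hP]
        apply Finset.dvd_prod_of_mem
        rw [Finset.mem_filter, mem_pr]
        exact ⟨⟨hq, hqY⟩, h⟩
    have := Nat.dvd_gcd hqv hqQ
    rw [hc] at this
    exact hq.one_lt.ne' (Nat.dvd_one.1 this)

lemma A_v : ∃ C : ℝ, 0 < C ∧ ∀ n Q c v i : ℕ, 0 < n → 0 < Q → 0 < v → 1 ≤ i → n * Q ≤ 2^i → v ≤ 4^i → v.Coprime Q →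
    (((blk (n*Q) c i).filter (fun p => n * v ∣ p - 1)).card : ℝ) ≤ C * (16^i * eE n / (i * n * Q.totient)) * (eE v / v) := by
  obtain ⟨C, hC0, hC⟩ := brunT
  refine ⟨32 * C, by positivity, ?_⟩
  intro n Q c v i hn hQ hv hi hnQ hv4 hcop
  have hi0 : (0:ℝ) < i := by exact_mod_cast hi
  have hn0 : (0:ℝ) < n := by exact_mod_cast hn
  have hQ0 : (0:ℝ) < Q := by exact_mod_cast hQ
  have hv0 : (0:ℝ) < v := by exact_mod_cast hv
  have hφ : (0:ℝ) < Q.totient := by exact_mod_cast Nat.totient_pos.2 hQ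
  have en := eE_pos n
  have ev := eE_pos v
  have eQ := eE_pos Q
  set S := (blk (n*Q) c i).filter (fun p => n * v ∣ p - 1) with hS
  rcases S.eq_empty_or_nonempty with h | ⟨p0, hp0⟩
  · rw [h]; simp only [Finset.card_empty, Nat.cast_zero]; positivity
  set D := n * (Q * v) with hD
  have hD0 : 0 < D := by positivity
  set d := p0 % D with hd
  set N := 16^(i+1)/D + 1 with hN
  have hmem : ∀ p ∈ S, 16^i ≤ p ∧ p < 16^(i+1) ∧ p.Prime ∧ p ≡ c [MOD n*Q] ∧ p ≡ 1 [MOD n*v] := by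
    intro p hp
    rw [hS, Finset.mem_filter, blk, Finset.mem_filter, Finset.mem_Ico] at hp
    obtain ⟨⟨⟨h1, h2⟩, h3, h4⟩, h5⟩ := hp
    exact ⟨h1, h2, h3, h4, ((Nat.modEq_iff_dvd' h3.one_le).2 h5).symm⟩
  obtain ⟨_, _, _, hp4, hp5⟩ := hmem p0 hp0
  have hlcm : Nat.lcm (n*Q) (n*v) = D := by
    rw [Nat.lcm_mul_left, hcop.symm.lcm_eq_mul]
  have h2i : 2^i < 16^i := Nat.pow_lt_pow_left (by norm_num) (by omega)
  have hsub : S ⊆ ((Finset.range N).filter (fun k => (D * k + d).Prime ∧ 2^i < D * k + d)).image (fun k => D * k + d) := by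
    intro p hp
    obtain ⟨h1, h2, h3, h4, h5⟩ := hmem p hp
    have h6 : p ≡ p0 [MOD D] := by
      rw [← hlcm]
      have a1 : p ≡ p0 [MOD n*Q] := h4.trans hp4.symm
      have a2 : p ≡ p0 [MOD n*v] := h5.trans hp5.symm
      rw [Nat.modEq_iff_dvd] at a1 a2 ⊢
      rw [Int.natCast_dvd] at a1 a2 ⊢
      exact Nat.lcm_dvd a1 a2
    have h7 : D * (p / D) + d = p := by
      rw [hd, ← (show p % D = p0 % D from h6)]; exact Nat.div_add_mod p D
    rw [Finset.mem_image]
    refine ⟨p / D, ?_, h7⟩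
    rw [Finset.mem_filter, h7, Finset.mem_range]
    refine ⟨?_, h3, by omega⟩
    rw [hN, Nat.lt_succ_iff]
    exact Nat.div_le_div_right h2.le
  have hDle : D ≤ 2^i * 4^i := by
    rw [hD, ← mul_assoc]; exact Nat.mul_le_mul hnQ hv4
  have h24 : 2^i * (2^i * 4^i) = 16^i := by
    rw [← mul_pow, ← mul_pow]; norm_num
  have h16 : 16^i ≤ 16^(i+1) := Nat.pow_le_pow_right (by norm_num) (by omega)
  have hN2 : 2^i ≤ N := by
    have h1 : 2^i ≤ 16^(i+1)/D := by
      rw [Nat.le_div_iff_mul_le hD0]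
      calc 2^i * D ≤ 2^i * (2^i * 4^i) := Nat.mul_le_mul_left _ hDle
        _ = 16^i := h24
        _ ≤ _ := h16
    omega
  have hDr : (0:ℝ) < D := by exact_mod_cast hD0
  have hNle : (N:ℝ) ≤ 32 * (16^i / (n * (Q * v))) := by
    have h1 : D ≤ 16^(i+1) := by
      have : 1 ≤ 2^i := Nat.one_le_two_pow
      nlinarith
    have h2 : ((16^(i+1)/D : ℕ):ℝ) ≤ ((16^(i+1):ℕ):ℝ) / D := Nat.cast_div_le
    have h3 : (1:ℝ) ≤ ((16^(i+1):ℕ):ℝ) / D := by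
      rw [le_div_iff₀ hDr, one_mul]; exact_mod_cast h1
    have e : (D:ℝ) = n * (Q * v) := by rw [hD]; push_cast; ring
    rw [hN, ← e]; push_cast at *
    calc ((16^(i+1)/D : ℕ):ℝ) + 1 ≤ 16^(i+1)/D + 16^(i+1)/D := by linarith
      _ = _ := by rw [pow_succ]; ring
  have heD : eE D ≤ eE n * (eE Q * eE v) := by
    calc eE D ≤ eE n * eE (Q*v) := eE_mul_le _ _ hn.ne' (by positivity)
      _ ≤ _ := by
        gcongr
        exact eE_mul_le _ _ hQ.ne' hv.ne'
  have hQt : eE Q / Q ≤ 1 / Q.totient := by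
    rw [div_le_div_iff₀ hQ0 hφ, one_mul]; exact eE_totient Q
  calc (S.card:ℝ) ≤ (((Finset.range N).filter (fun k => (D * k + d).Prime ∧ 2^i < D * k + d)).card : ℝ) := by
        exact_mod_cast (Finset.card_le_card hsub).trans Finset.card_image_le
    _ ≤ C * N * (1/i * eE D) := hC D d i N hD0.ne' hi hN2
    _ ≤ C * (32 * (16^i / (n * (Q * v)))) * (1/i * (eE n * (eE Q * eE v))) := by
        have := (eE_pos D).le
        gcongr
    _ = 32 * C * (16^i * eE n / (i * n)) * (eE v / v) * (eE Q / Q) := by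
        field_simp
    _ ≤ 32 * C * (16^i * eE n / (i * n)) * (eE v / v) * (1 / Q.totient) := by gcongr
    _ = _ := by field_simp

lemma L2 (n : ℕ) (hn : 0 < n) (h2 : 2 ∣ n) : ∃ m, 2 ≤ m ∧ (n*m+1).Prime ∧ ∀ v, 1 < v → v ∣ m → ¬ Wp n v := by
  classical
  by_contra hcon
  push Not at hcon
  obtain ⟨CA, hCA0, hCA⟩ := A_v
  obtain ⟨CB, hCB0, hCB⟩ := B_total n hn
  have en := eE_pos n
  obtain ⟨Y, hY⟩ := W_tail n hn (1 / (32 * CA * eE n)) (by positivity)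
  obtain ⟨Q, c, hQ, hnQ, hc, hc1, hcm, hv⟩ := cls n Y hn h2
  have hn0 : (0:ℝ) < n := by exact_mod_cast hn
  have hφ : (0:ℝ) < Q.totient := by exact_mod_cast Nat.totient_pos.2 hQ
  have htot : ((n*Q).totient : ℝ) = n * Q.totient := by
    have h := Nat.totient_gcd_mul_totient_mul n Q
    rw [Nat.gcd_eq_left hnQ] at h
    have h0 := Nat.totient_pos.2 hn
    have : (n*Q).totient = Q.totient * n := by
      apply Nat.eq_of_mul_eq_mul_left h0
      rw [h]; ring
    rw [this]; push_cast; ring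
  have hev : ∀ᶠ i : ℕ in atTop, (i:ℝ)^(-(7/10):ℝ) < 1 / (16 * n * Q.totient * CB) := by
    have := (tendsto_rpow_neg_atTop (show (0:ℝ) < 7/10 by norm_num)).comp tendsto_natCast_atTop_atTop
    exact this.eventually (gt_mem_nhds (by positivity))
  obtain ⟨I0, hI0⟩ := eventually_atTop.1 hev
  obtain ⟨i, hiI, hi⟩ := dirichlet_block (n*Q) c (by positivity) hc (max I0 (n*Q+2))
  have hi1 : n*Q + 2 ≤ i := (le_max_right _ _).trans hiI
  have hi2 := hI0 i ((le_max_left _ _).trans hiI)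
  have hii : i < 2^i := Nat.lt_two_pow_self
  have hnQi : n * Q ≤ 2^i := by omega
  have hni : n ≤ 2^i := (Nat.le_mul_of_pos_right n hQ).trans hnQi
  have hi0 : (0:ℝ) < i := by exact_mod_cast (by omega : 0 < i)
  have hi11 : (1:ℝ) ≤ i := by exact_mod_cast (by omega : 1 ≤ i)
  rw [htot] at hi
  set Sv := (Finset.Icc 1 (4^i)).filter (fun v => Wp n v ∧ Y < v ∧ v.Coprime Q) with hSv
  set B := (Finset.range (16^(i+1))).filter (fun m => 0 < m ∧ (n*m+1).Prime ∧ ∃ v, 4^i < v ∧ v ∣ m ∧ Wp n v) with hB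
  have hsub : blk (n*Q) c i ⊆ Sv.biUnion (fun v => (blk (n*Q) c i).filter (fun p => n * v ∣ p - 1)) ∪ B.image (fun m => n*m+1) := by
    intro p hp
    have hp' := hp
    rw [blk, Finset.mem_filter, Finset.mem_Ico] at hp'
    obtain ⟨⟨h1, h3⟩, h4, h5⟩ := hp'
    have h6 : p ≡ 1 [MOD n] := (h5.of_mul_right Q).trans hc1
    obtain ⟨m, hm⟩ := (Nat.modEq_iff_dvd' h4.one_le).1 h6.symm
    have hpm : p = n*m+1 := by have := h4.one_le; omega
    have h7 : 2 ≤ m := by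
      by_contra hlt
      have : n * m ≤ n * 1 := Nat.mul_le_mul_left n (by omega)
      have h8 : 2^i < 16^i := Nat.pow_lt_pow_left (by norm_num) (by omega)
      have h9 : n ≤ n * Q := Nat.le_mul_of_pos_right n hQ
      omega
    rw [hpm] at h4 h5 h3
    obtain ⟨v, hv1, hvm, hW⟩ := hcon m h7 h4
    have hmQ := hcm m h5
    have hvQ : v.Coprime Q := Nat.Coprime.coprime_dvd_left hvm hmQ
    have hYv := hv v hv1 hvQ
    rw [Finset.mem_union]
    rcases Nat.lt_or_ge (4^i) v with h | h
    · right
      rw [Finset.mem_image]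
      refine ⟨m, ?_, hpm.symm⟩
      rw [hB, Finset.mem_filter, Finset.mem_range]
      refine ⟨?_, by omega, h4, v, h, hvm, hW⟩
      have : m ≤ n * m := Nat.le_mul_of_pos_left m hn
      omega
    · left
      rw [Finset.mem_biUnion]
      refine ⟨v, ?_, ?_⟩
      · rw [hSv, Finset.mem_filter, Finset.mem_Icc]
        exact ⟨⟨by omega, h⟩, hW, hYv, hvQ⟩
      · rw [Finset.mem_filter]
        refine ⟨hp, ?_⟩
        rw [hm]; exact Nat.mul_dvd_mul_left n hvm
  have hA : ∑ v ∈ Sv, (((blk (n*Q) c i).filter (fun p => n * v ∣ p - 1)).card : ℝ) ≤ 16^i / (32 * (i * n * Q.totient)) := by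
    calc ∑ v ∈ Sv, (((blk (n*Q) c i).filter (fun p => n * v ∣ p - 1)).card : ℝ) 
        ≤ ∑ v ∈ Sv, CA * (16^i * eE n / (i * n * Q.totient)) * (eE v / v) := by
          apply Finset.sum_le_sum
          intro v hvS
          rw [hSv, Finset.mem_filter, Finset.mem_Icc] at hvS
          exact hCA n Q c v i hn hQ (by omega) (by omega) hnQi hvS.1.2 hvS.2.2.2
      _ = CA * (16^i * eE n / (i * n * Q.totient)) * ∑ v ∈ Sv, (eE v / v) := by rw [Finset.mul_sum]
      _ ≤ CA * (16^i * eE n / (i * n * Q.totient)) * (1 / (32 * CA * eE n)) := by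
          gcongr
          apply hY
          intro v hvS
          rw [hSv, Finset.mem_filter] at hvS
          exact ⟨hvS.2.1, hvS.2.2.1⟩
      _ = _ := by field_simp
  have hBb : (B.card : ℝ) < 16^i / (16 * (i * n * Q.totient)) := by
    refine (hCB i (by omega) hni).trans_lt ?_
    have e : (i:ℝ)^(-(17/10):ℝ) = (i:ℝ)^(-(7/10):ℝ) * (1/i) := by
      rw [one_div, ← Real.rpow_neg_one, ← Real.rpow_add hi0]; norm_num
    rw [e]
    calc CB * 16^i * ((i:ℝ)^(-(7/10):ℝ) * (1/i)) < CB * 16^i * (1 / (16 * n * Q.totient * CB) * (1/i)) := by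
          gcongr
      _ = _ := by field_simp
  have htotal : ((blk (n*Q) c i).card : ℝ) ≤ ∑ v ∈ Sv, (((blk (n*Q) c i).filter (fun p => n * v ∣ p - 1)).card : ℝ) + B.card := by
    have h1 := (Finset.card_le_card hsub).trans (Finset.card_union_le _ _)
    have h3 := h1.trans (Nat.add_le_add Finset.card_biUnion_le Finset.card_image_le)
    exact_mod_cast h3
  have hlow : (16:ℝ)^i / (8 * (i * n * Q.totient)) ≤ 16^i / (4 * (n * Q.totient) * (i+1)) := by
    apply div_le_div_of_nonneg_left (by positivity) (by positivity)
    have : 0 < (n:ℝ) * Q.totient := by positivity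
    nlinarith
  have hfin : (16:ℝ)^i / (8 * (i * n * Q.totient)) = 16^i / (32 * (i * n * Q.totient)) + 16^i / (16 * (i * n * Q.totient)) + 16^i / (32 * (i * n * Q.totient)) := by
    field_simp; norm_num
  have hpos : 0 < (16:ℝ)^i / (32 * (i * n * Q.totient)) := by positivity
  linarith

lemma L1 (n : ℕ) (hn : 0 < n) (h2 : 2 ∣ n) (H : ∀ n', 0 < n' → 2 ∣ n' → omegaStar n' ≠ omegaStar n + 1)
    (m : ℕ) (hm : 2 ≤ m) (hp : (n*m+1).Prime) : ∃ v, 1 < v ∧ v ∣ m ∧ Wp n v := by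
  classical
  have hex : ∃ v, v ∣ m ∧ ∃ a, (a+1).Prime ∧ a ∣ n * v ∧ ¬ a ∣ n := by
    refine ⟨m, dvd_rfl, n*m, hp, dvd_rfl, ?_⟩
    intro h
    have := Nat.le_of_dvd hn h
    nlinarith
  set v := Nat.find hex with hv
  obtain ⟨hvm, a0, ha0, ha0v, ha0n⟩ := Nat.find_spec hex
  rw [← hv] at hvm ha0v
  have hv0 : 0 < v := Nat.pos_of_dvd_of_pos hvm (by omega)
  have hv1 : v ≠ 1 := by
    intro h; rw [h, mul_one] at ha0v; exact ha0n ha0v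
  have key : ∀ a, (a+1).Prime → a ∣ n * v → ¬ a ∣ n → ∃ g, g ∣ n ∧ a = g * v := by
    intro a ha hav han
    have ha00 : 0 < a := Nat.pos_of_dvd_of_pos hav (by positivity)
    have hg0 : 0 < Nat.gcd a n := Nat.gcd_pos_of_pos_right _ hn
    have hb : a = Nat.gcd a n * (a / Nat.gcd a n) := (Nat.mul_div_cancel' (Nat.gcd_dvd_left a n)).symm
    have hcop : Nat.Coprime (a / Nat.gcd a n) (n / Nat.gcd a n) := Nat.coprime_div_gcd_div_gcd hg0
    have hbv : a / Nat.gcd a n ∣ v := by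
      apply hcop.dvd_of_dvd_mul_left
      apply Nat.dvd_of_mul_dvd_mul_left hg0
      rw [← hb, ← mul_assoc, Nat.mul_div_cancel' (Nat.gcd_dvd_right a n)]
      exact hav
    have hle : v ≤ a / Nat.gcd a n := by
      apply Nat.find_min' hex
      refine ⟨hbv.trans hvm, a, ha, ?_, han⟩
      conv_lhs => rw [hb]
      exact Nat.mul_dvd_mul_right (Nat.gcd_dvd_right a n) _
    have heq : a / Nat.gcd a n = v := le_antisymm (Nat.le_of_dvd hv0 hbv) hle
    exact ⟨Nat.gcd a n, Nat.gcd_dvd_right a n, by rw [← heq]; exact hb⟩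
  set F1 := n.divisors.filter (fun d => (d+1).Prime) with hF1
  set F2 := (n*v).divisors.filter (fun d => (d+1).Prime) with hF2
  have hnv : 0 < n * v := by positivity
  have hss : F1 ⊆ F2 := by
    intro d hd
    rw [hF1, Finset.mem_filter, Nat.mem_divisors] at hd
    rw [hF2, Finset.mem_filter, Nat.mem_divisors]
    exact ⟨⟨hd.1.1.mul_right _, hnv.ne'⟩, hd.2⟩
  have hmemd : ∀ a ∈ F2 \ F1, (a+1).Prime ∧ a ∣ n * v ∧ ¬ a ∣ n := by
    intro a ha
    rw [Finset.mem_sdiff, hF1, hF2, Finset.mem_filter, Finset.mem_filter, Nat.mem_divisors, Nat.mem_divisors] at ha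
    obtain ⟨⟨⟨h1, _⟩, h3⟩, h4⟩ := ha
    exact ⟨h3, h1, fun h => h4 ⟨⟨h, hn.ne'⟩, h3⟩⟩
  have ha0m : a0 ∈ F2 \ F1 := by
    rw [Finset.mem_sdiff, hF1, hF2, Finset.mem_filter, Finset.mem_filter, Nat.mem_divisors, Nat.mem_divisors]
    exact ⟨⟨⟨ha0v, hnv.ne'⟩, ha0⟩, fun h => ha0n h.1.1⟩
  have hpos : 0 < (F2 \ F1).card := Finset.card_pos.2 ⟨a0, ha0m⟩
  have hcard : (F2 \ F1).card + F1.card = F2.card := Finset.card_sdiff_add_card_eq_card hss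
  have hne : F2.card ≠ F1.card + 1 := H (n*v) hnv (h2.mul_right _)
  obtain ⟨a, ha, b, hb, hab⟩ := Finset.one_lt_card.1 (show 1 < (F2 \ F1).card by omega)
  obtain ⟨ha1, ha2, ha3⟩ := hmemd a ha
  obtain ⟨hb1, hb2, hb3⟩ := hmemd b hb
  obtain ⟨g, hg, rfl⟩ := key a ha1 ha2 ha3
  obtain ⟨g', hg', rfl⟩ := key b hb1 hb2 hb3
  exact ⟨v, by omega, hvm, g, g', hg, hg', fun h => hab (by rw [h]), ha1, hb1⟩

lemma exists_even (k : ℕ) : ∃ n, 0 < n ∧ 2 ∣ n ∧ omegaStar n = k + 2 := by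
  induction k with
  | zero => exact ⟨2, by norm_num, dvd_rfl, by decide⟩
  | succ k ih =>
    obtain ⟨n, hn, h2, hk⟩ := ih
    by_contra hcon
    push Not at hcon
    obtain ⟨m, hm, hp, hmv⟩ := L2 n hn h2
    obtain ⟨v, h1, h3, h4⟩ := L1 n hn h2 (fun n' h h' => by rw [hk]; exact hcon n' h h') m hm hp
    exact hmv v h1 h3 h4

lemma exists_all (k : ℕ) (hk : 0 < k) : ∃ n, 0 < n ∧ omegaStar n = k := by
  rcases Nat.lt_or_ge k 2 with h | h
  · have : k = 1 := by omega
    subst this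
    exact ⟨1, by norm_num, by decide⟩
  · obtain ⟨n, hn, _, h3⟩ := exists_even (k-2)
    exact ⟨n, hn, by omega⟩

end ES

theorem level_set_density (k : ℕ) (hk : 0 < k) :
    ∃ δ : ℝ, δ > 0 ∧
      Tendsto (fun x : ℝ =>
          (((Finset.Icc 1 ⌊x⌋₊).filter (fun n => omegaStar n = k)).card : ℝ) / x)
        atTop (nhds δ) := by
  obtain ⟨n, hn, h⟩ := ES.exists_all k hk
  obtain ⟨δ, h1, h2⟩ := ES.density_of_exists k n hn h
  exact ⟨δ, h1, h2⟩
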